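/- arXiv:0904.2414 — 2 statements merged into one kernel-verified Lean document; each statement's English description precedes it below -/
import Mathlib

section
/- Let (α, β) be an admissible pair and λ > 0. If there exists a weak super-solution U of (P)_{λ,α,β}, then there exists a weak solution u of (P)_{λ,α,β} with α ≤ u ≤ U almost everywhere in B. -/
open MeasureTheory Metric Set Filter

/-- The Laplacian of `u : ℝ^N → ℝ`, as the sum of pure second partial derivatives. -/
noncomputable def lap {N : ℕ} (u : EuclideanSpace ℝ (Fin N) → ℝ) (x : EuclideanSpace ℝ (Fin N)) : ℝ :=
  ∑ i : Fin N, fderiv ℝ (fun y => fderiv ℝ u y (EuclideanSpace.single i 1)) x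
    (EuclideanSpace.single i 1)

/-- The biharmonic operator `Δ²`. -/
noncomputable def biharm {N : ℕ} (u : EuclideanSpace ℝ (Fin N) → ℝ)
    (x : EuclideanSpace ℝ (Fin N)) : ℝ :=
  lap (lap u) x

/-- `Φ(x) = (α - β/2) + (β/2)|x|²`, the biharmonic extension of the boundary data `(α, β)`. -/
noncomputable def Phi {N : ℕ} (α β : ℝ) (x : EuclideanSpace ℝ (Fin N)) : ℝ :=
  (α - β / 2) + (β / 2) * ‖x‖ ^ 2

/-- A pair `(α, β)` is admissible if `β ≤ 0` and `α - β/2 < 1`. -/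
def Admissible (α β : ℝ) : Prop := β ≤ 0 ∧ α - β / 2 < 1

/-- Test functions: `φ ∈ C⁴(B̄)` with `φ = 0` and `∇φ = 0` on `∂B`. -/
def IsTest (N : ℕ) (φ : EuclideanSpace ℝ (Fin N) → ℝ) : Prop :=
  ContDiffOn ℝ 4 φ (closedBall (0 : EuclideanSpace ℝ (Fin N)) 1) ∧
    (∀ x : EuclideanSpace ℝ (Fin N), ‖x‖ = 1 → φ x = 0) ∧
    (∀ x : EuclideanSpace ℝ (Fin N), ‖x‖ = 1 →
      fderivWithin ℝ φ (closedBall (0 : EuclideanSpace ℝ (Fin N)) 1) x = 0)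

/-- A weak solution of `(P)_{λ,α,β}` on the unit ball. -/
def IsWeakSolutionAB (N : ℕ) (lam α β : ℝ) (u : EuclideanSpace ℝ (Fin N) → ℝ) : Prop :=
  (∀ᵐ x ∂(volume.restrict (ball (0 : EuclideanSpace ℝ (Fin N)) 1)), α ≤ u x ∧ u x ≤ 1) ∧
    IntegrableOn (fun x => ((1 - u x) ^ 2)⁻¹) (ball (0 : EuclideanSpace ℝ (Fin N)) 1) ∧
    ∀ φ : EuclideanSpace ℝ (Fin N) → ℝ, IsTest N φ →
      ∫ x in ball (0 : EuclideanSpace ℝ (Fin N)) 1, (u x - Phi α β x) * biharm φ x =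
        lam * ∫ x in ball (0 : EuclideanSpace ℝ (Fin N)) 1, φ x / (1 - u x) ^ 2

/-- A weak super-solution of `(P)_{λ,α,β}` on the unit ball. -/
def IsWeakSuperSolutionAB (N : ℕ) (lam α β : ℝ) (u : EuclideanSpace ℝ (Fin N) → ℝ) : Prop :=
  (∀ᵐ x ∂(volume.restrict (ball (0 : EuclideanSpace ℝ (Fin N)) 1)), α ≤ u x ∧ u x ≤ 1) ∧
    IntegrableOn (fun x => ((1 - u x) ^ 2)⁻¹) (ball (0 : EuclideanSpace ℝ (Fin N)) 1) ∧
    ∀ φ : EuclideanSpace ℝ (Fin N) → ℝ, IsTest N φ →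
      (∀ x ∈ closedBall (0 : EuclideanSpace ℝ (Fin N)) 1, 0 ≤ φ x) →
      ∫ x in ball (0 : EuclideanSpace ℝ (Fin N)) 1, (u x - Phi α β x) * biharm φ x ≥
        lam * ∫ x in ball (0 : EuclideanSpace ℝ (Fin N)) 1, φ x / (1 - u x) ^ 2

/-- A classical solution of `(P)_{λ,α,β}` on the unit ball: `u ∈ C⁴(B̄)`, `α < u < 1` in `B`,
`Δ²u = λ(1-u)⁻²` in `B`, and `u = α`, `∂_ν u = β` on `∂B`. -/
structure IsClassicalSolutionAB (N : ℕ) (lam α β : ℝ)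
    (u : EuclideanSpace ℝ (Fin N) → ℝ) : Prop where
  contDiffOn : ContDiffOn ℝ 4 u (closedBall (0 : EuclideanSpace ℝ (Fin N)) 1)
  gt_alpha : ∀ x ∈ ball (0 : EuclideanSpace ℝ (Fin N)) 1, α < u x
  lt_one : ∀ x ∈ ball (0 : EuclideanSpace ℝ (Fin N)) 1, u x < 1
  eqn : ∀ x ∈ ball (0 : EuclideanSpace ℝ (Fin N)) 1, biharm u x = lam / (1 - u x) ^ 2
  bdry : ∀ x : EuclideanSpace ℝ (Fin N), ‖x‖ = 1 → u x = α
  bdry_deriv : ∀ x : EuclideanSpace ℝ (Fin N), ‖x‖ = 1 →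
    fderivWithin ℝ u (closedBall (0 : EuclideanSpace ℝ (Fin N)) 1) x x = β

/-- The set of voltages `λ > 0` for which `(P)_{λ,α,β}` admits a classical solution;
the pull-in voltage `λ*(α,β)` is its supremum. -/
def solSetAB (N : ℕ) (α β : ℝ) : Set ℝ :=
  {lam | 0 < lam ∧ ∃ u, IsClassicalSolutionAB N lam α β u}

/-! ### Calculus of partial derivatives -/

/-- Partial derivative. -/
noncomputable def pd {N : ℕ} (i : Fin N) (f : EuclideanSpace ℝ (Fin N) → ℝ)
    (x : EuclideanSpace ℝ (Fin N)) : ℝ := fderiv ℝ f x (EuclideanSpace.single i 1)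

lemma lap_eq {N : ℕ} (f : EuclideanSpace ℝ (Fin N) → ℝ) (x : EuclideanSpace ℝ (Fin N)) :
    lap f x = ∑ i, pd i (pd i f) x := rfl

section Calculus
variable {N : ℕ} {O : Set (EuclideanSpace ℝ (Fin N))} {f g : EuclideanSpace ℝ (Fin N) → ℝ}

lemma pd_congr (hO : IsOpen O) (h : EqOn f g O) (i : Fin N) : EqOn (pd i f) (pd i g) O := by
  intro x hx
  unfold pd
  have : f =ᶠ[nhds x] g := by filter_upwards [hO.mem_nhds hx] with y hy using h hy
  rw [this.fderiv_eq]

lemma lap_congr (hO : IsOpen O) (h : EqOn f g O) : EqOn (lap f) (lap g) O := by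
  intro x hx
  simp only [lap_eq]
  exact Finset.sum_congr rfl fun i _ => pd_congr hO (pd_congr hO h i) i hx

lemma biharm_congr (hO : IsOpen O) (h : EqOn f g O) : EqOn (biharm f) (biharm g) O :=
  lap_congr hO (lap_congr hO h)

lemma pd_contDiffOn (hO : IsOpen O) {n m : WithTop ℕ∞} (hf : ContDiffOn ℝ m f O) (hn : n + 1 ≤ m)
    (i : Fin N) : ContDiffOn ℝ n (pd i f) O :=
  (hf.fderiv_of_isOpen hO hn).clm_apply contDiffOn_const

lemma lap_contDiffOn (hO : IsOpen O) {n m : WithTop ℕ∞} (hf : ContDiffOn ℝ m f O)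
    (hn : n + 1 + 1 ≤ m) : ContDiffOn ℝ n (lap f) O := by
  have : lap f = fun x => ∑ i, pd i (pd i f) x := by ext x; rfl
  rw [this]
  exact ContDiffOn.sum fun i _ => pd_contDiffOn hO (pd_contDiffOn hO hf hn i) le_rfl i

lemma diffAt_of (hO : IsOpen O) {m : WithTop ℕ∞} (hf : ContDiffOn ℝ m f O) (hm : 1 ≤ m)
    {x : EuclideanSpace ℝ (Fin N)} (hx : x ∈ O) : DifferentiableAt ℝ f x :=
  ((hf.differentiableOn (by intro h; simp [h] at hm)) x hx).differentiableAt (hO.mem_nhds hx)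

lemma pd_add {x : EuclideanSpace ℝ (Fin N)} (hf : DifferentiableAt ℝ f x)
    (hg : DifferentiableAt ℝ g x) (i : Fin N) :
    pd i (fun y => f y + g y) x = pd i f x + pd i g x := by
  unfold pd; rw [fderiv_fun_add hf hg]; rfl

lemma pd_const_mul {x : EuclideanSpace ℝ (Fin N)} (c : ℝ) (hf : DifferentiableAt ℝ f x) (i : Fin N) :
    pd i (fun y => c * f y) x = c * pd i f x := by
  unfold pd; rw [fderiv_const_mul hf]; rfl

lemma pd_mul {x : EuclideanSpace ℝ (Fin N)} (hf : DifferentiableAt ℝ f x)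
    (hg : DifferentiableAt ℝ g x) (i : Fin N) :
    pd i (fun y => f y * g y) x = f x * pd i g x + g x * pd i f x := by
  unfold pd; rw [fderiv_fun_mul hf hg]; rfl

lemma pd_const (c : ℝ) (i : Fin N) (x : EuclideanSpace ℝ (Fin N)) : pd i (fun _ => c) x = 0 := by
  unfold pd; simp

lemma pd_sum {ι : Type*} {s : Finset ι} {F : ι → EuclideanSpace ℝ (Fin N) → ℝ}
    {x : EuclideanSpace ℝ (Fin N)} (h : ∀ j ∈ s, DifferentiableAt ℝ (F j) x) (i : Fin N) :
    pd i (fun y => ∑ j ∈ s, F j y) x = ∑ j ∈ s, pd i (F j) x := by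
  unfold pd; rw [fderiv_fun_sum h]; simp

lemma pd_coord (i j : Fin N) (x : EuclideanSpace ℝ (Fin N)) :
    pd i (fun y => y j) x = if j = i then 1 else 0 := by
  unfold pd
  have : (fun y : EuclideanSpace ℝ (Fin N) => y j) = (EuclideanSpace.proj (𝕜 := ℝ) j) := rfl
  rw [this, ContinuousLinearMap.fderiv]
  simp

lemma pd_comm (hO : IsOpen O) (hf : ContDiffOn ℝ 2 f O) (i j : Fin N) :
    EqOn (pd i (pd j f)) (pd j (pd i f)) O := by
  intro x hx
  have hfx : ContDiffAt ℝ 2 f x := hf.contDiffAt (hO.mem_nhds hx)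
  have hd : DifferentiableAt ℝ (fderiv ℝ f) x :=
    (hfx.fderiv_right (m := 1) (by norm_num)).differentiableAt (by norm_num)
  have hs := hfx.isSymmSndFDerivAt (by simp)
  have key : ∀ k l : Fin N, pd k (pd l f) x =
      fderiv ℝ (fderiv ℝ f) x (EuclideanSpace.single k 1) (EuclideanSpace.single l 1) := by
    intro k l
    have : pd l f = fun y => fderiv ℝ f y (EuclideanSpace.single l 1) := rfl
    rw [this]; unfold pd
    rw [fderiv_clm_apply hd (by fun_prop)]
    simp
  rw [key, key]
  exact hs _ _

lemma lap_add (hO : IsOpen O) (hf : ContDiffOn ℝ 2 f O) (hg : ContDiffOn ℝ 2 g O) :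
    EqOn (lap (fun y => f y + g y)) (fun x => lap f x + lap g x) O := by
  intro x hx
  simp only [lap_eq, ← Finset.sum_add_distrib]
  refine Finset.sum_congr rfl fun i _ => ?_
  have h1 : EqOn (pd i (fun y => f y + g y)) (fun y => pd i f y + pd i g y) O := fun y hy =>
    pd_add (diffAt_of hO hf (by norm_num) hy) (diffAt_of hO hg (by norm_num) hy) i
  rw [pd_congr hO h1 i hx]
  exact pd_add (diffAt_of hO (pd_contDiffOn hO hf (n := 1) (by norm_num) i) le_rfl hx)
    (diffAt_of hO (pd_contDiffOn hO hg (n := 1) (by norm_num) i) le_rfl hx) i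

lemma lap_const_mul (hO : IsOpen O) (c : ℝ) (hf : ContDiffOn ℝ 2 f O) :
    EqOn (lap (fun y => c * f y)) (fun x => c * lap f x) O := by
  intro x hx
  simp only [lap_eq, Finset.mul_sum]
  refine Finset.sum_congr rfl fun i _ => ?_
  have h1 : EqOn (pd i (fun y => c * f y)) (fun y => c * pd i f y) O := fun y hy =>
    pd_const_mul c (diffAt_of hO hf (by norm_num) hy) i
  rw [pd_congr hO h1 i hx]
  exact pd_const_mul c (diffAt_of hO (pd_contDiffOn hO hf (n := 1) (by norm_num) i) le_rfl hx) i

lemma lap_mul (hO : IsOpen O) (hf : ContDiffOn ℝ 2 f O) (hg : ContDiffOn ℝ 2 g O) :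
    EqOn (lap (fun y => f y * g y))
      (fun x => f x * lap g x + 2 * (∑ i, pd i f x * pd i g x) + g x * lap f x) O := by
  intro x hx
  simp only [lap_eq, Finset.mul_sum, ← Finset.sum_add_distrib]
  refine Finset.sum_congr rfl fun i _ => ?_
  have h1 : EqOn (pd i (fun y => f y * g y)) (fun y => f y * pd i g y + g y * pd i f y) O :=
    fun y hy => pd_mul (diffAt_of hO hf (by norm_num) hy) (diffAt_of hO hg (by norm_num) hy) i
  have df := diffAt_of hO hf (by norm_num) hx
  have dg := diffAt_of hO hg (by norm_num) hx
  have df' := diffAt_of hO (pd_contDiffOn hO hf (n := 1) (by norm_num) i) le_rfl hx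
  have dg' := diffAt_of hO (pd_contDiffOn hO hg (n := 1) (by norm_num) i) le_rfl hx
  rw [pd_congr hO h1 i hx, pd_add (df.fun_mul dg') (dg.fun_mul df') i, pd_mul df dg' i, pd_mul dg df' i]
  ring

lemma lap_sum {ι : Type*} (s : Finset ι) (hO : IsOpen O) {F : ι → EuclideanSpace ℝ (Fin N) → ℝ}
    (h : ∀ j ∈ s, ContDiffOn ℝ 2 (F j) O) :
    EqOn (lap (fun y => ∑ j ∈ s, F j y)) (fun x => ∑ j ∈ s, lap (F j) x) O := by
  intro x hx
  simp only [lap_eq]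
  rw [Finset.sum_comm]
  refine Finset.sum_congr rfl fun i _ => ?_
  have h1 : EqOn (pd i (fun y => ∑ j ∈ s, F j y)) (fun y => ∑ j ∈ s, pd i (F j) y) O :=
    fun y hy => pd_sum (fun j hj => diffAt_of hO (h j hj) (by norm_num) hy) i
  rw [pd_congr hO h1 i hx]
  exact pd_sum (fun j hj => diffAt_of hO (pd_contDiffOn hO (h j hj) (n := 1) (by norm_num) i)
    le_rfl hx) i

/-- `ρ(x) = 1 - |x|²`. -/
noncomputable def rho {N : ℕ} (x : EuclideanSpace ℝ (Fin N)) : ℝ := 1 - ‖x‖ ^ 2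

lemma rho_contDiff {n : WithTop ℕ∞} : ContDiff ℝ n (rho (N := N)) := by
  unfold rho; exact contDiff_const.sub (contDiff_norm_sq ℝ)

lemma rho_pos {x : EuclideanSpace ℝ (Fin N)} (hx : x ∈ ball (0 : EuclideanSpace ℝ (Fin N)) 1) :
    0 < rho x := by
  have : ‖x‖ < 1 := by simpa using hx
  unfold rho; nlinarith [norm_nonneg x]

lemma rho_eq (x : EuclideanSpace ℝ (Fin N)) : rho x = 1 - ∑ i, x i ^ 2 := by
  unfold rho; rw [EuclideanSpace.real_norm_sq_eq]

lemma pd_rho (i : Fin N) (x : EuclideanSpace ℝ (Fin N)) : pd i rho x = -2 * x i := by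
  unfold pd rho
  rw [fderiv_const_sub, fderiv_norm_sq_apply]
  simp [EuclideanSpace.inner_single_right]

lemma lap_rho (x : EuclideanSpace ℝ (Fin N)) : lap rho x = -2 * N := by
  rw [lap_eq]
  have h : ∀ i : Fin N, pd i (pd i rho) x = -2 := by
    intro i
    have : pd i (rho (N := N)) = fun y => -2 * y i := by ext y; exact pd_rho i y
    rw [this, pd_const_mul _ (by fun_prop), pd_coord]; simp
  simp [h, mul_comm]

/-- The Euler operator `x·∇`. -/
noncomputable def eul {N : ℕ} (f : EuclideanSpace ℝ (Fin N) → ℝ) (x : EuclideanSpace ℝ (Fin N)) : ℝ :=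
  ∑ i, x i * pd i f x

lemma coord_contDiff {n : WithTop ℕ∞} (i : Fin N) :
    ContDiff ℝ n (fun y : EuclideanSpace ℝ (Fin N) => y i) :=
  (EuclideanSpace.proj (𝕜 := ℝ) i).contDiff

lemma eul_contDiffOn (hO : IsOpen O) {n m : WithTop ℕ∞} (hf : ContDiffOn ℝ m f O) (hn : n + 1 ≤ m) :
    ContDiffOn ℝ n (eul f) O := by
  unfold eul
  exact ContDiffOn.sum fun i _ => (coord_contDiff i).contDiffOn.mul (pd_contDiffOn hO hf hn i)

lemma lap_coord (j : Fin N) (x : EuclideanSpace ℝ (Fin N)) : lap (fun y => y j) x = 0 := by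
  rw [lap_eq]
  refine Finset.sum_eq_zero fun i _ => ?_
  have : pd i (fun y : EuclideanSpace ℝ (Fin N) => y j) = fun _ => if j = i then 1 else 0 := by
    ext y; exact pd_coord i j y
  rw [this, pd_const]

lemma lap_pd (hO : IsOpen O) (hf : ContDiffOn ℝ 3 f O) (j : Fin N) :
    EqOn (lap (pd j f)) (pd j (lap f)) O := by
  intro x hx
  have h2 : ContDiffOn ℝ 2 f O := hf.of_le (by norm_num)
  have hp : ∀ i, ContDiffOn ℝ 2 (pd i f) O := fun i => pd_contDiffOn hO hf (by norm_num) i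
  have hpp : ∀ i, ContDiffOn ℝ 1 (pd i (pd i f)) O := fun i =>
    pd_contDiffOn hO (hp i) (by norm_num) i
  have : pd j (lap f) x = ∑ i, pd j (pd i (pd i f)) x := by
    have e : lap f = fun x => ∑ i, pd i (pd i f) x := by ext; rfl
    rw [e]; exact pd_sum (fun i _ => diffAt_of hO (hpp i) le_rfl hx) j
  rw [this, lap_eq]
  refine Finset.sum_congr rfl fun i _ => ?_
  rw [pd_congr hO (pd_comm hO h2 i j) i hx]
  exact pd_comm hO (hp i) i j hx

lemma lap_eul (hO : IsOpen O) (hf : ContDiffOn ℝ 3 f O) :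
    EqOn (lap (eul f)) (fun x => eul (lap f) x + 2 * lap f x) O := by
  intro x hx
  have hp : ∀ i, ContDiffOn ℝ 2 (pd i f) O := fun i => pd_contDiffOn hO hf (by norm_num) i
  have e : eul f = fun y => ∑ j, y j * pd j f y := by ext; rfl
  rw [e, lap_sum Finset.univ hO (fun j _ => (coord_contDiff j).contDiffOn.mul (hp j)) hx]
  simp only [eul]
  rw [lap_eq f, Finset.mul_sum, ← Finset.sum_add_distrib]
  refine Finset.sum_congr rfl fun j _ => ?_
  rw [lap_mul hO (coord_contDiff j).contDiffOn (hp j) hx]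
  simp only [lap_coord, pd_coord, lap_pd hO hf j hx]
  simp

/-- `V = ρΔφ + 4 x·∇φ + (2 * N - 8)φ`. -/
noncomputable def VV {N : ℕ} (f : EuclideanSpace ℝ (Fin N) → ℝ) (x : EuclideanSpace ℝ (Fin N)) : ℝ :=
  rho x * lap f x + 4 * eul f x + (2 * N - 8) * f x

lemma VV_contDiffOn (hO : IsOpen O) (hf : ContDiffOn ℝ 4 f O) : ContDiffOn ℝ 2 (VV f) O := by
  unfold VV
  exact ((rho_contDiff.contDiffOn.mul (lap_contDiffOn hO hf (by norm_num))).add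
    (contDiffOn_const.mul (eul_contDiffOn hO hf (by norm_num)))).add
    (contDiffOn_const.mul (hf.of_le (by norm_num)))

lemma lap_VV (hO : IsOpen O) (hf : ContDiffOn ℝ 4 f O) :
    EqOn (lap (VV f)) (fun x => rho x * biharm f x) O := by
  intro x hx
  have hf2 : ContDiffOn ℝ 2 f O := hf.of_le (by norm_num)
  have hl : ContDiffOn ℝ 2 (lap f) O := lap_contDiffOn hO hf (by norm_num)
  have he : ContDiffOn ℝ 2 (eul f) O := eul_contDiffOn hO hf (by norm_num)
  have hr : ContDiffOn ℝ 2 (rho (N := N)) O := rho_contDiff.contDiffOn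
  have e : VV f = fun y => (rho y * lap f y + 4 * eul f y) + (2 * N - 8) * f y := by ext; rfl
  rw [e, lap_add hO ((hr.mul hl).add (contDiffOn_const.mul he)) (contDiffOn_const.mul hf2) hx]
  simp only
  rw [lap_add hO (hr.mul hl) (contDiffOn_const.mul he) hx]
  simp only
  rw [lap_const_mul hO _ hf2 hx, lap_const_mul hO _ he hx, lap_mul hO hr hl hx]
  simp only []
  rw [lap_eul hO (hf.of_le (by norm_num)) hx]
  simp only [lap_rho, pd_rho, eul, biharm]
  have : ∑ i, -2 * x i * pd i (lap f) x = -2 * ∑ i, x i * pd i (lap f) x := by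
    rw [Finset.mul_sum]; exact Finset.sum_congr rfl fun i _ => by ring
  rw [this]; ring

/-- With `f = ρψ`, `V = ρ²Δψ - 8ψ`. -/
lemma VV_rho_mul (hO : IsOpen O) (hg : ContDiffOn ℝ 2 g O) :
    EqOn (VV (fun y => rho y * g y)) (fun x => rho x ^ 2 * lap g x - 8 * g x) O := by
  intro x hx
  have hr : ContDiffOn ℝ 2 (rho (N := N)) O := rho_contDiff.contDiffOn
  simp only [VV]
  rw [lap_mul hO hr hg hx]
  have : eul (fun y => rho y * g y) x = rho x * eul g x - 2 * ‖x‖ ^ 2 * g x := by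
    simp only [eul]
    rw [EuclideanSpace.real_norm_sq_eq, Finset.mul_sum, Finset.mul_sum, Finset.sum_mul,
      ← Finset.sum_sub_distrib]
    refine Finset.sum_congr rfl fun i _ => ?_
    rw [pd_mul (diffAt_of hO hr (by norm_num) hx) (diffAt_of hO hg (by norm_num) hx), pd_rho]
    ring
  rw [this]
  simp only [lap_rho, pd_rho]
  have h2 : ∑ i, -2 * x i * pd i g x = -2 * eul g x := by
    rw [eul, Finset.mul_sum]; exact Finset.sum_congr rfl fun i _ => by ring
  rw [h2]
  have h3 : ‖x‖ ^ 2 = 1 - rho x := by unfold rho; ring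
  rw [h3]; ring

end Calculus

section MaxPrinciple
variable {N : ℕ}

lemma second_deriv_line {O : Set (EuclideanSpace ℝ (Fin N))} (hO : IsOpen O)
    {f : EuclideanSpace ℝ (Fin N) → ℝ} (hf : ContDiffOn ℝ 2 f O) {x : EuclideanSpace ℝ (Fin N)}
    (hx : x ∈ O) (hmin : IsLocalMin f x) (i : Fin N) : 0 ≤ pd i (pd i f) x := by
  set e : EuclideanSpace ℝ (Fin N) := EuclideanSpace.single i 1 with he
  set l : ℝ → EuclideanSpace ℝ (Fin N) := fun t => x + t • e with hl
  have hl0 : l 0 = x := by simp [hl]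
  have hld : ∀ t, HasDerivAt l e t := by
    intro t
    have := ((hasDerivAt_id t).smul_const e).const_add x
    simpa [hl] using this
  have hlc : Continuous l := by fun_prop
  have hev : ∀ᶠ t in nhds (0 : ℝ), l t ∈ O :=
    hlc.continuousAt.eventually_mem (by rw [hl0]; exact hO.mem_nhds hx)
  have hd : ∀ (g : EuclideanSpace ℝ (Fin N) → ℝ) t, DifferentiableAt ℝ g (l t) →
      deriv (fun s => g (l s)) t = pd i g (l t) := by
    intro g t hg
    exact (hg.hasFDerivAt.comp_hasDerivAt t (hld t)).deriv
  have h1 : deriv (fun s => f (l s)) =ᶠ[nhds 0] fun s => pd i f (l s) := by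
    filter_upwards [hev] with t ht using hd f t (diffAt_of hO hf (by norm_num) ht)
  have h2 : deriv (deriv (fun s => f (l s))) 0 = pd i (pd i f) x := by
    rw [h1.deriv_eq, hd _ _ (by
      rw [hl0]; exact diffAt_of hO (pd_contDiffOn hO hf (n := 1) (by norm_num) i) le_rfl hx), hl0]
  have hcmin : IsLocalMin (fun s => f (l s)) 0 := by
    have := (hl0 ▸ hmin : IsLocalMin f (l 0)).comp_continuous (g := l) hlc.continuousAt
    exact this
  by_contra hneg
  push Not at hneg
  have hc : ContinuousAt (fun s => f (l s)) 0 :=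
    ContinuousAt.comp (f := l) (g := f)
      (by rw [hl0]; exact (diffAt_of hO hf (by norm_num) hx).continuousAt) hlc.continuousAt
  have hmax := isLocalMax_of_deriv_deriv_neg (by rw [h2]; exact hneg) hcmin.deriv_eq_zero hc
  have hconst : (fun s => f (l s)) =ᶠ[nhds 0] fun _ => f (l 0) := by
    filter_upwards [hcmin, hmax] with t h1 h2 using le_antisymm h2 h1
  have h3 : deriv (fun s => f (l s)) =ᶠ[nhds 0] fun _ => 0 := by
    refine hconst.deriv.trans ?_
    simp
  have h4 := h3.deriv_eq
  rw [h2] at h4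
  simp at h4
  linarith

lemma lap_nonneg_of_min {O : Set (EuclideanSpace ℝ (Fin N))} (hO : IsOpen O)
    {f : EuclideanSpace ℝ (Fin N) → ℝ} (hf : ContDiffOn ℝ 2 f O) {x : EuclideanSpace ℝ (Fin N)}
    (hx : x ∈ O) (hmin : IsLocalMin f x) : 0 ≤ lap f x := by
  rw [lap_eq]; exact Finset.sum_nonneg fun i _ => second_deriv_line hO hf hx hmin i

/-- `liminf f ≥ 0` at the boundary of the unit ball. -/
def BLow (f : EuclideanSpace ℝ (Fin N) → ℝ) : Prop :=
  ∀ ε > 0, ∃ r < (1 : ℝ), ∀ x ∈ ball (0 : EuclideanSpace ℝ (Fin N)) 1, r ≤ ‖x‖ → -ε ≤ f x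

lemma exists_min {f : EuclideanSpace ℝ (Fin N) → ℝ} (hc : ContinuousOn f (ball 0 1)) (hb : BLow f)
    {x0 : EuclideanSpace ℝ (Fin N)} (hx0 : x0 ∈ ball (0 : EuclideanSpace ℝ (Fin N)) 1)
    (hneg : f x0 < 0) :
    ∃ x1 ∈ ball (0 : EuclideanSpace ℝ (Fin N)) 1, IsLocalMin f x1 ∧ f x1 < 0 := by
  obtain ⟨r, hr, hrb⟩ := hb (-f x0 / 2) (by linarith)
  have hx0' : ‖x0‖ < 1 := by simpa using hx0
  set R := max r ‖x0‖
  have hR : R < 1 := max_lt hr hx0'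
  have hsub : closedBall (0 : EuclideanSpace ℝ (Fin N)) R ⊆ ball 0 1 := closedBall_subset_ball hR
  obtain ⟨x1, hx1, hm⟩ := (isCompact_closedBall (0 : EuclideanSpace ℝ (Fin N)) R).exists_isMinOn
    ⟨x0, by simp [R]⟩ (hc.mono hsub)
  have h10 : f x1 ≤ f x0 := hm (by simp [R])
  refine ⟨x1, hsub hx1, ?_, by linarith⟩
  filter_upwards [isOpen_ball.mem_nhds (hsub hx1)] with y hy
  by_cases hyR : y ∈ closedBall (0 : EuclideanSpace ℝ (Fin N)) R
  · exact hm hyR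
  · have : R < ‖y‖ := by simpa using hyR
    have := hrb y hy ((le_max_left _ _).trans this.le)
    linarith

lemma mp1 (hN : 0 < N) {f : EuclideanSpace ℝ (Fin N) → ℝ} (hf : ContDiffOn ℝ 2 f (ball 0 1))
    (hl : ∀ x ∈ ball (0 : EuclideanSpace ℝ (Fin N)) 1, lap f x ≤ 0) (hb : BLow f) :
    ∀ x ∈ ball (0 : EuclideanSpace ℝ (Fin N)) 1, 0 ≤ f x := by
  intro x0 hx0
  by_contra hneg
  push Not at hneg
  set δ := -f x0 / 2 with hδ
  have hδ0 : 0 < δ := by linarith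
  have hr2 : ContDiffOn ℝ 2 (fun y => δ * rho (N := N) y) (ball 0 1) :=
    contDiffOn_const.mul rho_contDiff.contDiffOn
  have hg : ContDiffOn ℝ 2 (fun y => f y + δ * rho y) (ball 0 1) := hf.add hr2
  obtain ⟨x1, hx1, hm, -⟩ := exists_min (f := fun y => f y + δ * rho y) hg.continuousOn
    (by
      intro ε hε
      obtain ⟨r, hr, h⟩ := hb ε hε
      refine ⟨r, hr, fun x hx hrx => ?_⟩
      have := h x hx hrx
      have := mul_nonneg hδ0.le (rho_pos hx).le
      simp only; linarith) hx0 (by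
      have : rho x0 ≤ 1 := by unfold rho; nlinarith [norm_nonneg x0]
      have := mul_le_mul_of_nonneg_left this hδ0.le
      linarith)
  have h0 := lap_nonneg_of_min isOpen_ball hg hx1 hm
  rw [lap_add isOpen_ball hf hr2 hx1] at h0
  simp only at h0
  rw [lap_const_mul isOpen_ball δ rho_contDiff.contDiffOn hx1] at h0
  simp only [lap_rho] at h0
  have := hl x1 hx1
  have hN' : (0 : ℝ) < N := by exact_mod_cast hN
  nlinarith [mul_pos hδ0 hN']

lemma mp2 {f : EuclideanSpace ℝ (Fin N) → ℝ} (hf : ContDiffOn ℝ 2 f (ball 0 1))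
    (hl : ∀ x ∈ ball (0 : EuclideanSpace ℝ (Fin N)) 1, rho x ^ 2 * lap f x - 8 * f x ≤ 0)
    (hb : BLow f) :
    ∀ x ∈ ball (0 : EuclideanSpace ℝ (Fin N)) 1, 0 ≤ f x := by
  intro x0 hx0
  by_contra hneg
  push Not at hneg
  obtain ⟨x1, hx1, hm, h1⟩ := exists_min hf.continuousOn hb hx0 hneg
  have h0 := lap_nonneg_of_min isOpen_ball hf hx1 hm
  have := hl x1 hx1
  nlinarith [mul_nonneg (sq_nonneg (rho x1)) h0]

end MaxPrinciple

section Within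
variable {N : ℕ}

/-- Partial derivative within the closed ball. -/
noncomputable def pdW (i : Fin N) (f : EuclideanSpace ℝ (Fin N) → ℝ)
    (x : EuclideanSpace ℝ (Fin N)) : ℝ :=
  fderivWithin ℝ f (closedBall 0 1) x (EuclideanSpace.single i 1)

/-- Laplacian within the closed ball. -/
noncomputable def lapW (f : EuclideanSpace ℝ (Fin N) → ℝ) (x : EuclideanSpace ℝ (Fin N)) : ℝ :=
  ∑ i, pdW i (pdW i f) x

lemma udK : UniqueDiffOn ℝ (closedBall (0 : EuclideanSpace ℝ (Fin N)) 1) :=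
  uniqueDiffOn_convex (convex_closedBall _ _) (by
    rw [interior_closedBall _ one_ne_zero]; exact ⟨0, by simp⟩)

lemma pdW_contDiffOn {f : EuclideanSpace ℝ (Fin N) → ℝ} {n m : WithTop ℕ∞}
    (hf : ContDiffOn ℝ m f (closedBall 0 1)) (hn : n + 1 ≤ m) (i : Fin N) :
    ContDiffOn ℝ n (pdW i f) (closedBall 0 1) :=
  (hf.fderivWithin udK hn).clm_apply contDiffOn_const

lemma lapW_contDiffOn {f : EuclideanSpace ℝ (Fin N) → ℝ} {n m : WithTop ℕ∞}
    (hf : ContDiffOn ℝ m f (closedBall 0 1)) (hn : n + 1 + 1 ≤ m) :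
    ContDiffOn ℝ n (lapW f) (closedBall 0 1) := by
  unfold lapW
  exact ContDiffOn.sum fun i _ => pdW_contDiffOn (pdW_contDiffOn hf hn i) le_rfl i

lemma pdW_eq (i : Fin N) (f : EuclideanSpace ℝ (Fin N) → ℝ) :
    EqOn (pdW i f) (pd i f) (ball 0 1) := by
  intro x hx
  unfold pdW pd
  rw [fderivWithin_of_mem_nhds (mem_of_superset (isOpen_ball.mem_nhds hx) ball_subset_closedBall)]

lemma lapW_eq (f : EuclideanSpace ℝ (Fin N) → ℝ) : EqOn (lapW f) (lap f) (ball 0 1) := by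
  intro x hx
  unfold lapW
  rw [lap_eq]
  refine Finset.sum_congr rfl fun i _ => ?_
  rw [pdW_eq i _ hx]
  exact pd_congr isOpen_ball (pdW_eq i f) i hx

lemma biharmW_eq (f : EuclideanSpace ℝ (Fin N) → ℝ) :
    EqOn (lapW (lapW f)) (biharm f) (ball 0 1) := by
  intro x hx
  rw [lapW_eq _ hx]
  exact lap_congr isOpen_ball (lapW_eq f) hx

lemma unif_small {g : EuclideanSpace ℝ (Fin N) → ℝ} (hg : ContinuousOn g (closedBall 0 1))
    (h0 : ∀ x, ‖x‖ = 1 → g x = 0) {ε : ℝ} (hε : 0 < ε) :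
    ∃ r < (1 : ℝ), 0 < r ∧ ∀ x ∈ closedBall (0 : EuclideanSpace ℝ (Fin N)) 1, r ≤ ‖x‖ → |g x| ≤ ε := by
  set S := closedBall (0 : EuclideanSpace ℝ (Fin N)) 1 ∩ (fun x => |g x|) ⁻¹' (Ici ε) with hS
  have hSc : IsCompact S := by
    have : IsClosed S := hg.abs.preimage_isClosed_of_isClosed isClosed_closedBall isClosed_Ici
    exact (isCompact_closedBall _ _).of_isClosed_subset this inter_subset_left
  rcases S.eq_empty_or_nonempty with he | hne
  · refine ⟨1/2, by norm_num, by norm_num, fun x hx _ => ?_⟩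
    by_contra hlt
    push Not at hlt
    have : x ∈ S := ⟨hx, hlt.le⟩
    rw [he] at this; exact this
  · obtain ⟨x0, hx0, hm⟩ := hSc.exists_isMaxOn hne continuous_norm.continuousOn
    have h1 : ‖x0‖ ≤ 1 := by simpa using hx0.1
    have h2 : ‖x0‖ ≠ 1 := by
      intro h
      have := hx0.2
      simp [h0 x0 h] at this
      linarith
    have h3 : ‖x0‖ < 1 := lt_of_le_of_ne h1 h2
    refine ⟨(‖x0‖ + 1) / 2, by linarith, by positivity, fun x hx hrx => ?_⟩
    by_contra hlt
    push Not at hlt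
    have : ‖x‖ ≤ ‖x0‖ := hm (show x ∈ S from ⟨hx, hlt.le⟩)
    linarith

lemma test_VV_small {φ : EuclideanSpace ℝ (Fin N) → ℝ} (hφ : IsTest N φ) {ε : ℝ} (hε : 0 < ε) :
    ∃ r < (1 : ℝ), ∀ x ∈ ball (0 : EuclideanSpace ℝ (Fin N)) 1, r ≤ ‖x‖ → |VV φ x| ≤ ε := by
  obtain ⟨hc, h0, h1⟩ := hφ
  have hcont : ContinuousOn (fun x => rho x * lapW φ x + 4 * (∑ i, x i * pdW i φ x)
      + (2 * N - 8) * φ x) (closedBall (0 : EuclideanSpace ℝ (Fin N)) 1) := by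
    have hl : ContinuousOn (lapW φ) (closedBall 0 1) :=
      (lapW_contDiffOn hc (n := 2) (by norm_num)).continuousOn
    have hp : ∀ i, ContinuousOn (pdW i φ) (closedBall 0 1) := fun i =>
      (pdW_contDiffOn hc (n := 3) (by norm_num) i).continuousOn
    have hr : Continuous (rho (N := N)) := (rho_contDiff (n := 0)).continuous
    refine ((hr.continuousOn.mul hl).add (continuousOn_const.mul
      (continuousOn_finsetSum _ fun i _ => ContinuousOn.mul (by fun_prop) (hp i)))).add
      (continuousOn_const.mul hc.continuousOn)
  obtain ⟨r, hr, -, h⟩ := unif_small hcont (fun x hx => by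
    have : ∀ i, pdW i φ x = 0 := fun i => by unfold pdW; rw [h1 x hx]; rfl
    simp [this, h0 x hx, rho, hx]) hε
  refine ⟨r, hr, fun x hx hrx => ?_⟩
  have := h x (ball_subset_closedBall hx) hrx
  simp only [lapW_eq φ hx, pdW_eq _ φ hx] at this
  exact this

lemma test_div_rho_small {φ : EuclideanSpace ℝ (Fin N) → ℝ} (hφ : IsTest N φ) {ε : ℝ} (hε : 0 < ε) :
    ∃ r < (1 : ℝ), ∀ x ∈ ball (0 : EuclideanSpace ℝ (Fin N)) 1, r ≤ ‖x‖ → |φ x / rho x| ≤ ε := by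
  obtain ⟨hc, h0, h1⟩ := hφ
  have hD : ContinuousOn (fun x => ‖fderivWithin ℝ φ (closedBall 0 1) x‖) (closedBall 0 1) :=
    (hc.continuousOn_fderivWithin udK (by norm_num)).norm
  obtain ⟨r, hr, hr0, h⟩ := unif_small hD (fun x hx => by rw [h1 x hx]; simp) hε
  refine ⟨r, hr, fun x hx hrx => ?_⟩
  have hx1 : ‖x‖ < 1 := by simpa using hx
  have hx0 : 0 < ‖x‖ := hr0.trans_le hrx
  set y := (‖x‖)⁻¹ • x with hy
  have hyn : ‖y‖ = 1 := by rw [hy, norm_smul, norm_inv, norm_norm, inv_mul_cancel₀ hx0.ne']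
  have hseg : ∀ w ∈ segment ℝ x y, w ∈ closedBall (0 : EuclideanSpace ℝ (Fin N)) 1 ∧ r ≤ ‖w‖ := by
    rintro w ⟨a, b, ha, hb, hab, rfl⟩
    have e : a • x + b • y = (a + b * ‖x‖⁻¹) • x := by rw [hy, add_smul, mul_smul]
    have hp : 0 ≤ a + b * ‖x‖⁻¹ := by positivity
    have e2 : ‖a • x + b • y‖ = a * ‖x‖ + b := by
      rw [e, norm_smul, Real.norm_of_nonneg hp]; field_simp
    rw [mem_closedBall_zero_iff, e2]
    constructor
    · nlinarith
    · nlinarith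
  have hmv := (convex_segment x y).norm_image_sub_le_of_norm_hasFDerivWithin_le (f := φ)
    (f' := fderivWithin ℝ φ (closedBall 0 1)) (C := ε) (s := segment ℝ x y)
    (fun w hw => ((hc.differentiableOn (by norm_num)) w (hseg w hw).1).hasFDerivWithinAt.mono
      (fun z hz => (hseg z hz).1))
    (fun w hw => by simpa using h w (hseg w hw).1 (hseg w hw).2)
    (right_mem_segment ℝ x y) (left_mem_segment ℝ x y)
  rw [h0 y hyn, sub_zero, Real.norm_eq_abs] at hmv
  have hxy : ‖x - y‖ = 1 - ‖x‖ := by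
    have : x - y = (1 - ‖x‖⁻¹) • x := by rw [sub_smul, one_smul]
    have h1 : 1 - ‖x‖⁻¹ ≤ 0 := by
      have := (one_le_inv₀ hx0).2 hx1.le; linarith
    rw [this, norm_smul, Real.norm_of_nonpos h1]; field_simp; ring
  rw [hxy] at hmv
  rw [abs_div, abs_of_pos (rho_pos hx), div_le_iff₀ (rho_pos hx)]
  refine hmv.trans (mul_le_mul_of_nonneg_left ?_ hε.le)
  unfold rho; nlinarith

/-- Positivity preservation (Boggio) for the clamped biharmonic problem on the ball. -/
theorem boggio (hN : 0 < N) {φ : EuclideanSpace ℝ (Fin N) → ℝ} (hφ : IsTest N φ)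
    (h : ∀ x ∈ ball (0 : EuclideanSpace ℝ (Fin N)) 1, 0 ≤ biharm φ x) :
    ∀ x ∈ closedBall (0 : EuclideanSpace ℝ (Fin N)) 1, 0 ≤ φ x := by
  have hc : ContDiffOn ℝ 4 φ (ball 0 1) := hφ.1.mono ball_subset_closedBall
  have hV := VV_contDiffOn isOpen_ball hc
  have hVneg : ∀ x ∈ ball (0 : EuclideanSpace ℝ (Fin N)) 1, 0 ≤ (-1) * VV φ x := by
    refine mp1 hN (f := fun x => (-1) * VV φ x) (contDiffOn_const.mul hV) (fun x hx => ?_) ?_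
    · rw [lap_const_mul isOpen_ball _ hV hx]
      simp only
      rw [lap_VV isOpen_ball hc hx]
      have := mul_nonneg (rho_pos hx).le (h x hx)
      simp only; linarith
    · intro ε hε
      obtain ⟨r, hr, hh⟩ := test_VV_small hφ hε
      refine ⟨r, hr, fun x hx hrx => ?_⟩
      have := abs_le.1 (hh x hx hrx)
      simp only; linarith
  have hψ : ContDiffOn ℝ 2 (fun x => φ x / rho x) (ball (0 : EuclideanSpace ℝ (Fin N)) 1) :=
    (hc.of_le (by norm_num)).div rho_contDiff.contDiffOn fun x hx => (rho_pos hx).ne'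
  have he : EqOn φ (fun y => rho y * (φ y / rho y)) (ball 0 1) := by
    intro y hy
    have := (rho_pos hy).ne'
    simp only; field_simp
  have hVe : ∀ x ∈ ball (0 : EuclideanSpace ℝ (Fin N)) 1,
      VV φ x = VV (fun y => rho y * (φ y / rho y)) x := by
    intro x hx
    simp only [VV, eul]
    rw [lap_congr isOpen_ball he hx]
    have hp : ∀ i, pd i φ x = pd i (fun y => rho y * (φ y / rho y)) x := fun i =>
      pd_congr isOpen_ball he i hx
    simp only [hp]
    congr 2
    exact he hx
  have hpos := mp2 hψ (fun x hx => by
    have h1 := VV_rho_mul isOpen_ball hψ hx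
    rw [← hVe x hx] at h1
    simp only at h1
    rw [← h1]
    have := hVneg x hx
    linarith) (by
      intro ε hε
      obtain ⟨r, hr, hh⟩ := test_div_rho_small hφ hε
      exact ⟨r, hr, fun x hx hrx => (abs_le.1 (hh x hx hrx)).1⟩)
  intro x hx
  rcases (mem_closedBall_zero_iff.1 hx).lt_or_eq with h1 | h1
  · have hxb : x ∈ ball (0 : EuclideanSpace ℝ (Fin N)) 1 := by simpa using h1
    rw [he hxb]
    exact mul_nonneg (rho_pos hxb).le (hpos x hxb)
  · rw [hφ.2.1 x h1]

end Within

section Poly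
variable {N : ℕ}

/-- Evaluation of a polynomial as a function on Euclidean space. -/
noncomputable def ev (p : MvPolynomial (Fin N) ℝ) (x : EuclideanSpace ℝ (Fin N)) : ℝ :=
  MvPolynomial.eval (fun i => x i) p

lemma ev_add (p q : MvPolynomial (Fin N) ℝ) (x) : ev (p + q) x = ev p x + ev q x := by simp [ev]
lemma ev_sub (p q : MvPolynomial (Fin N) ℝ) (x) : ev (p - q) x = ev p x - ev q x := by simp [ev]
lemma ev_mul (p q : MvPolynomial (Fin N) ℝ) (x) : ev (p * q) x = ev p x * ev q x := by simp [ev]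
lemma ev_C (c : ℝ) (x) : ev (MvPolynomial.C c : MvPolynomial (Fin N) ℝ) x = c := by simp [ev]
lemma ev_smul (c : ℝ) (p : MvPolynomial (Fin N) ℝ) (x) : ev (c • p) x = c * ev p x := by
  simp [ev, MvPolynomial.smul_eval]
lemma ev_neg (p : MvPolynomial (Fin N) ℝ) (x) : ev (-p) x = - ev p x := by simp [ev]
lemma ev_X (i : Fin N) (x) : ev (MvPolynomial.X i : MvPolynomial (Fin N) ℝ) x = x i := by simp [ev]
lemma ev_sum {ι : Type*} (s : Finset ι) (p : ι → MvPolynomial (Fin N) ℝ) (x) :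
    ev (∑ i ∈ s, p i) x = ∑ i ∈ s, ev (p i) x := by simp [ev]

lemma ev_contDiff {n : WithTop ℕ∞} (p : MvPolynomial (Fin N) ℝ) : ContDiff ℝ n (ev p) := by
  induction p using MvPolynomial.induction_on with
  | C a => 
    have : ev (MvPolynomial.C a : MvPolynomial (Fin N) ℝ) = fun _ => a := by ext; simp [ev]
    rw [this]; exact contDiff_const
  | add p q hp hq =>
    have : ev (p + q) = fun x => ev p x + ev q x := by ext; simp [ev]
    rw [this]; exact hp.add hq
  | mul_X p i hp =>
    have : ev (p * MvPolynomial.X i) = fun x => ev p x * x i := by ext; simp [ev]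
    rw [this]; exact hp.mul (coord_contDiff i)

lemma ev_diff (p : MvPolynomial (Fin N) ℝ) (x) : DifferentiableAt ℝ (ev p) x :=
  (ev_contDiff (n := 1) p).differentiable (by norm_num) x

lemma pd_ev (i : Fin N) (p : MvPolynomial (Fin N) ℝ) : pd i (ev p) = ev (MvPolynomial.pderiv i p) := by
  ext x
  induction p using MvPolynomial.induction_on with
  | C a => 
    have : ev (MvPolynomial.C a : MvPolynomial (Fin N) ℝ) = fun _ => a := by ext; simp [ev]
    rw [this, pd_const]; simp [ev]
  | add p q hp hq =>
    have : ev (p + q) = fun x => ev p x + ev q x := by ext; simp [ev]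
    rw [this, pd_add (ev_diff p x) (ev_diff q x), hp, hq]; simp [ev]
  | mul_X p j hp =>
    have : ev (p * MvPolynomial.X j) = fun x => ev p x * x j := by ext; simp [ev]
    rw [this, pd_mul (ev_diff p x) (by fun_prop), hp, pd_coord]
    simp [ev, MvPolynomial.pderiv_X, Pi.single_apply]
    split_ifs <;> simp <;> ring

/-- Laplacian on polynomials. -/
noncomputable def lapP : MvPolynomial (Fin N) ℝ →ₗ[ℝ] MvPolynomial (Fin N) ℝ :=
  ∑ i, (MvPolynomial.pderiv i).toLinearMap ∘ₗ (MvPolynomial.pderiv i).toLinearMap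

lemma lapP_apply (p : MvPolynomial (Fin N) ℝ) :
    lapP p = ∑ i, MvPolynomial.pderiv i (MvPolynomial.pderiv i p) := by
  simp [lapP, LinearMap.sum_apply]

lemma lap_ev (p : MvPolynomial (Fin N) ℝ) : lap (ev p) = ev (lapP p) := by
  ext x
  rw [lap_eq, lapP_apply, ev_sum]
  simp only [pd_ev]

lemma biharm_ev (p : MvPolynomial (Fin N) ℝ) : biharm (ev p) = ev (lapP (lapP p)) := by
  ext x
  unfold biharm
  rw [lap_ev, lap_ev]

/-- `1 - ∑ Xᵢ²`. -/
noncomputable def rhoP : MvPolynomial (Fin N) ℝ := 1 - ∑ i, MvPolynomial.X i ^ 2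

lemma ev_rhoP : ev (rhoP (N := N)) = rho := by
  ext x; rw [rho_eq]; simp [ev, rhoP]

lemma deg_pderiv {m : ℕ} {p : MvPolynomial (Fin N) ℝ} (hp : p.totalDegree ≤ m + 1) (i : Fin N) :
    (MvPolynomial.pderiv i p).totalDegree ≤ m := by
  rw [← MvPolynomial.mem_restrictTotalDegree]
  rw [p.as_sum, map_sum]
  refine Submodule.sum_mem _ fun s hs => ?_
  rw [MvPolynomial.pderiv_monomial, MvPolynomial.mem_restrictTotalDegree]
  by_cases h0 : s i = 0
  · simp [h0]
  · refine (MvPolynomial.totalDegree_monomial_le _ _).trans ?_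
    have h1 : (s.sum fun _ e => e) ≤ m + 1 := (MvPolynomial.le_totalDegree hs).trans hp
    have h2 : s = (s - Finsupp.single i 1) + Finsupp.single i 1 := by
      ext j
      by_cases hj : j = i
      · subst hj; simp; omega
      · simp [Finsupp.single_apply, Ne.symm hj]
    rw [h2, Finsupp.sum_add_index' (by simp) (by simp)] at h1
    simp only [Finsupp.sum_single_index] at h1
    exact Nat.le_of_add_le_add_right h1

lemma deg_lapP {m : ℕ} {p : MvPolynomial (Fin N) ℝ} (hp : p.totalDegree ≤ m + 2) :
    (lapP p).totalDegree ≤ m := by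
  rw [lapP_apply, ← MvPolynomial.mem_restrictTotalDegree]
  refine Submodule.sum_mem _ fun i _ => ?_
  rw [MvPolynomial.mem_restrictTotalDegree]
  exact deg_pderiv (deg_pderiv hp i) i

lemma deg_rhoP : (rhoP (N := N)).totalDegree ≤ 2 := by
  rw [← MvPolynomial.mem_restrictTotalDegree]
  refine Submodule.sub_mem _ ?_ (Submodule.sum_mem _ fun i _ => ?_)
  · rw [MvPolynomial.mem_restrictTotalDegree]; simp
  · rw [MvPolynomial.mem_restrictTotalDegree]
    refine (MvPolynomial.totalDegree_pow _ _).trans ?_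
    simp

/-- `q ↦ Δ²(ρ² q)` on polynomials. -/
noncomputable def TP : MvPolynomial (Fin N) ℝ →ₗ[ℝ] MvPolynomial (Fin N) ℝ :=
  lapP ∘ₗ lapP ∘ₗ LinearMap.mulLeft ℝ (rhoP * rhoP)

lemma TP_apply (q : MvPolynomial (Fin N) ℝ) : TP q = lapP (lapP (rhoP * rhoP * q)) := by
  simp [TP, mul_assoc]

lemma deg_TP {m : ℕ} {q : MvPolynomial (Fin N) ℝ} (hq : q.totalDegree ≤ m) :
    (TP q).totalDegree ≤ m := by
  rw [TP_apply]
  refine deg_lapP (deg_lapP ((MvPolynomial.totalDegree_mul _ _).trans ?_))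
  have h1 := MvPolynomial.totalDegree_mul (rhoP (N := N)) rhoP
  have h2 := deg_rhoP (N := N)
  omega

lemma isTest_of {g : EuclideanSpace ℝ (Fin N) → ℝ} (hg : ContDiff ℝ 4 g) :
    IsTest N (fun x => rho x * rho x * g x) := by
  have hr : ContDiff ℝ 4 (rho (N := N)) := rho_contDiff
  have hc : ContDiff ℝ 4 (fun x => rho x * rho x * g x) := (hr.mul hr).mul hg
  refine ⟨hc.contDiffOn, fun x hx => by simp [rho, hx], fun x hx => ?_⟩
  have hxK : x ∈ closedBall (0 : EuclideanSpace ℝ (Fin N)) 1 := by simp [hx]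
  rw [(hc.differentiable (by norm_num) x).fderivWithin (udK x hxK)]
  have hx0 : rho x = 0 := by simp [rho, hx]
  have dr := hr.differentiable (by norm_num) x
  have dg := hg.differentiable (by norm_num) x
  rw [fderiv_fun_mul (dr.fun_mul dr) dg, fderiv_fun_mul dr dr, hx0]
  simp

lemma isTest_ev (q : MvPolynomial (Fin N) ℝ) : IsTest N (ev (rhoP * rhoP * q)) := by
  have : ev (rhoP * rhoP * q) = fun x => rho x * rho x * ev q x := by
    ext x; rw [ev_mul, ev_mul, ev_rhoP]
  rw [this]; exact isTest_of (ev_contDiff q)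

lemma poly_zero {q : MvPolynomial (Fin N) ℝ}
    (h : ∀ x ∈ ball (0 : EuclideanSpace ℝ (Fin N)) 1, ev q x = 0) : q = 0 := by
  have hNp : (0 : ℝ) < N + 1 := by positivity
  refine MvPolynomial.funext_set (fun _ : Fin N => Ioo (0 : ℝ) (1 / (N + 1)))
    (fun _ => Ioo_infinite (by positivity)) fun y hy => ?_
  have hb : (WithLp.toLp 2 y : EuclideanSpace ℝ (Fin N)) ∈ ball (0 : EuclideanSpace ℝ (Fin N)) 1 := by
    rw [mem_ball_zero_iff]
    have h2 : ‖(WithLp.toLp 2 y : EuclideanSpace ℝ (Fin N))‖ ^ 2 < 1 := by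
      rw [EuclideanSpace.real_norm_sq_eq]
      have : ∀ i ∈ Finset.univ, y i ^ 2 ≤ 1 / (N + 1 : ℝ) := by
        intro i _
        have hi : y i ∈ Ioo (0 : ℝ) (1 / (N + 1)) := hy i (mem_univ i)
        have h1 : 1 / (N + 1 : ℝ) ≤ 1 := by
          rw [div_le_one hNp]; linarith [(Nat.cast_nonneg N : (0 : ℝ) ≤ N)]
        nlinarith [hi.1, hi.2]
      have := Finset.sum_le_card_nsmul _ _ _ this
      refine lt_of_le_of_lt this ?_
      simp
      rw [← div_eq_mul_inv, div_lt_one hNp]; linarith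
    nlinarith [norm_nonneg (WithLp.toLp 2 y : EuclideanSpace ℝ (Fin N))]
  have := h _ hb
  simpa [ev] using this

lemma TP_inj (hN : 0 < N) : Function.Injective (TP (N := N)) := by
  rw [← LinearMap.ker_eq_bot, LinearMap.ker_eq_bot']
  intro q hq
  have hb : ∀ q : MvPolynomial (Fin N) ℝ, TP q = 0 →
      ∀ x ∈ closedBall (0 : EuclideanSpace ℝ (Fin N)) 1, 0 ≤ ev (rhoP * rhoP * q) x := by
    intro q hq
    refine boggio hN (isTest_ev q) fun x _ => ?_
    rw [biharm_ev, ← TP_apply, hq]; simp [ev]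
  refine poly_zero fun x hx => ?_
  have h1 := hb q hq x (ball_subset_closedBall hx)
  have h2 := hb (-q) (by rw [map_neg, hq, neg_zero]) x (ball_subset_closedBall hx)
  have hr := rho_pos hx
  rw [ev_mul, ev_mul, ev_rhoP] at h1 h2
  rw [ev_neg] at h2
  have hrr := mul_pos hr hr
  have h3 : 0 ≤ ev q x := nonneg_of_mul_nonneg_right h1 hrr
  have h4 : 0 ≤ -ev q x := nonneg_of_mul_nonneg_right h2 hrr
  linarith

lemma TP_surj (hN : 0 < N) : Function.Surjective (TP (N := N)) := by
  intro p
  set W := MvPolynomial.restrictTotalDegree (Fin N) ℝ p.totalDegree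
  have hW : ∀ q ∈ W, TP q ∈ W := by
    intro q hq
    rw [MvPolynomial.mem_restrictTotalDegree] at hq ⊢
    exact deg_TP hq
  have hinj : Function.Injective (TP.restrict hW) := by
    intro a b hab
    have := congrArg Subtype.val hab
    exact Subtype.ext (TP_inj hN this)
  have hsurj := LinearMap.injective_iff_surjective.1 hinj
  obtain ⟨q, hq⟩ := hsurj ⟨p, by rw [MvPolynomial.mem_restrictTotalDegree]⟩
  exact ⟨q, congrArg Subtype.val hq⟩

/-- The polynomial solution operator of the clamped problem. -/
noncomputable def solP (hN : 0 < N) : MvPolynomial (Fin N) ℝ →ₗ[ℝ] MvPolynomial (Fin N) ℝ :=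
  LinearMap.mulLeft ℝ (rhoP * rhoP) ∘ₗ
    (LinearEquiv.ofBijective TP ⟨TP_inj hN, TP_surj hN⟩).symm.toLinearMap

lemma solP_test (hN : 0 < N) (p : MvPolynomial (Fin N) ℝ) : IsTest N (ev (solP hN p)) := by
  simp only [solP, LinearMap.comp_apply, LinearMap.mulLeft_apply]
  exact isTest_ev _

lemma solP_biharm (hN : 0 < N) (p : MvPolynomial (Fin N) ℝ) (x) :
    biharm (ev (solP hN p)) x = ev p x := by
  rw [biharm_ev]
  simp only [solP, LinearMap.comp_apply, LinearMap.mulLeft_apply]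
  rw [← TP_apply]
  have := (LinearEquiv.ofBijective TP ⟨TP_inj hN, TP_surj hN⟩).apply_symm_apply p
  exact congrArg (fun r => ev r x) this

lemma poly_dense {g : EuclideanSpace ℝ (Fin N) → ℝ} (hg : ContinuousOn g (closedBall 0 1)) {ε : ℝ}
    (hε : 0 < ε) : ∃ p : MvPolynomial (Fin N) ℝ,
      ∀ x ∈ closedBall (0 : EuclideanSpace ℝ (Fin N)) 1, |ev p x - g x| < ε := by
  set K := closedBall (0 : EuclideanSpace ℝ (Fin N)) 1
  have : CompactSpace K := isCompact_iff_compactSpace.1 (isCompact_closedBall _ _)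
  let c : Fin N → C(K, ℝ) := fun i => ⟨fun x => x.1 i, by fun_prop⟩
  let A : Subalgebra ℝ C(K, ℝ) := (MvPolynomial.aeval c).range
  have hA : ∀ (p : MvPolynomial (Fin N) ℝ) (x : K), (MvPolynomial.aeval c p) x = ev p x := by
    intro p x
    induction p using MvPolynomial.induction_on with
    | C a => simp [ev]
    | add p q hp hq => simp [hp, hq, ev]
    | mul_X p j hp => simp [hp, ev, c]
  have hsep : A.SeparatesPoints := by
    intro x y hxy
    have : ∃ i, x.1 i ≠ y.1 i := by
      by_contra hcon
      push Not at hcon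
      exact hxy (Subtype.ext (by ext i; exact hcon i))
    obtain ⟨i, hi⟩ := this
    refine ⟨c i, ⟨c i, ⟨MvPolynomial.X i, by simp⟩, rfl⟩, hi⟩
  have htop := ContinuousMap.subalgebra_topologicalClosure_eq_top_of_separatesPoints A hsep
  let G : C(K, ℝ) := ⟨K.restrict g, continuousOn_iff_continuous_domRestrict.1 hg⟩
  have hG : G ∈ A.topologicalClosure := by rw [htop]; trivial
  obtain ⟨h, ⟨p, hp⟩, hd⟩ := Metric.mem_closure_iff.1 (hG : G ∈ closure (A : Set C(K, ℝ))) ε hε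
  refine ⟨p, fun x hx => ?_⟩
  have h1 := (ContinuousMap.dist_apply_le_dist (f := G) (g := h) ⟨x, hx⟩).trans_lt hd
  rw [← hp] at h1
  have h2 := hA p ⟨x, hx⟩
  rw [Real.dist_eq, abs_sub_comm] at h1
  rw [← h2]
  exact h1

end Poly

section Linear
variable {N : ℕ}

/-- Lebesgue measure restricted to the unit ball. -/
noncomputable abbrev muB (N : ℕ) : Measure (EuclideanSpace ℝ (Fin N)) :=
  volume.restrict (ball (0 : EuclideanSpace ℝ (Fin N)) 1)

instance muB_finite : IsFiniteMeasure (muB N) :=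
  ⟨by rw [Measure.restrict_apply_univ]; exact measure_ball_lt_top⟩

lemma bdd_of_contOn {g : EuclideanSpace ℝ (Fin N) → ℝ} (hg : ContinuousOn g (closedBall 0 1)) :
    ∃ C, 0 ≤ C ∧ ∀ x ∈ closedBall (0 : EuclideanSpace ℝ (Fin N)) 1, |g x| ≤ C := by
  obtain ⟨C, hC⟩ := (isCompact_closedBall (0 : EuclideanSpace ℝ (Fin N)) 1).exists_bound_of_continuousOn hg
  exact ⟨C, (abs_nonneg _).trans (hC 0 (by simp)), hC⟩

lemma aesm_of_contOn {g : EuclideanSpace ℝ (Fin N) → ℝ} (hg : ContinuousOn g (closedBall 0 1)) :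
    AEStronglyMeasurable g (muB N) :=
  (hg.mono ball_subset_closedBall).aestronglyMeasurable measurableSet_ball

lemma int_mul_cont {f g : EuclideanSpace ℝ (Fin N) → ℝ} (hf : Integrable f (muB N))
    (hg : ContinuousOn g (closedBall 0 1)) : Integrable (fun x => f x * g x) (muB N) := by
  obtain ⟨C, hC0, hC⟩ := bdd_of_contOn hg
  refine hf.mul_bdd (c := C) (aesm_of_contOn hg) ?_
  filter_upwards [ae_restrict_mem measurableSet_ball] with x hx
  exact hC x (ball_subset_closedBall hx)

lemma ev_contOn (p : MvPolynomial (Fin N) ℝ) : ContinuousOn (ev p) (closedBall 0 1) :=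
  (ev_contDiff p (n := 0)).continuous.continuousOn

lemma pos_cont {g : EuclideanSpace ℝ (Fin N) → ℝ} (hg : Integrable g (muB N))
    (h : ∀ p : MvPolynomial (Fin N) ℝ, (∀ x ∈ closedBall (0 : EuclideanSpace ℝ (Fin N)) 1, 0 ≤ ev p x) →
      0 ≤ ∫ x, g x * ev p x ∂(muB N)) {η : EuclideanSpace ℝ (Fin N) → ℝ}
    (hη : ContinuousOn η (closedBall 0 1))
    (hη0 : ∀ x ∈ closedBall (0 : EuclideanSpace ℝ (Fin N)) 1, 0 ≤ η x) :
    0 ≤ ∫ x, g x * η x ∂(muB N) := by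
  have key : ∀ ε > 0, 0 ≤ (∫ x, g x * η x ∂(muB N)) + (2 * ∫ x, |g x| ∂(muB N)) * ε := by
    intro ε hε
    obtain ⟨p, hp⟩ := poly_dense (g := fun x => η x + ε) (hη.add continuousOn_const) hε
    have h1 := h p (fun x hx => by
      have := (abs_lt.1 (hp x hx)).1; have := hη0 x hx; linarith)
    have h2 : ∫ x, g x * ev p x ∂(muB N) ≤ ∫ x, (g x * η x + 2 * ε * |g x|) ∂(muB N) := by
      refine integral_mono_ae (int_mul_cont hg (ev_contOn p))
        ((int_mul_cont hg hη).add (hg.abs.const_mul _)) ?_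
      filter_upwards [ae_restrict_mem measurableSet_ball] with x hx
      have h3 := abs_lt.1 (hp x (ball_subset_closedBall hx))
      have h4 : |ev p x - η x| ≤ 2 * ε := abs_le.2 ⟨by linarith, by linarith⟩
      have h5 : g x * (ev p x - η x) ≤ |g x| * (2 * ε) :=
        (le_abs_self _).trans (by rw [abs_mul]; gcongr)
      nlinarith
    rw [integral_add (int_mul_cont hg hη) (hg.abs.const_mul _), integral_const_mul] at h2
    linarith
  have hlim : Tendsto (fun ε => (∫ x, g x * η x ∂(muB N)) + (2 * ∫ x, |g x| ∂(muB N)) * ε)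
      (nhdsWithin 0 (Ioi 0)) (nhds ((∫ x, g x * η x ∂(muB N)) + (2 * ∫ x, |g x| ∂(muB N)) * 0)) := by
    refine Tendsto.mono_left ?_ nhdsWithin_le_nhds
    exact Continuous.tendsto (by fun_prop) _
  rw [mul_zero, add_zero] at hlim
  exact ge_of_tendsto hlim (eventually_nhdsWithin_of_forall fun ε hε => key ε hε)

lemma pos_ball {g : EuclideanSpace ℝ (Fin N) → ℝ} (hg : Integrable g (muB N))
    (h : ∀ η : EuclideanSpace ℝ (Fin N) → ℝ, Continuous η → (∀ x, 0 ≤ η x) →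
      0 ≤ ∫ x, g x * η x ∂(muB N)) : ∀ᵐ x ∂(muB N), 0 ≤ g x := by
  set B := ball (0 : EuclideanSpace ℝ (Fin N)) 1
  have hgi : Integrable (B.indicator g) volume := (integrable_indicator_iff measurableSet_ball).2 hg
  have hball : ∀ x : EuclideanSpace ℝ (Fin N), ∀ r : ℝ, 0 ≤ ∫ y in closedBall x r, B.indicator g y := by
    intro x r
    let η : ℕ → EuclideanSpace ℝ (Fin N) → ℝ := fun n y => max 0 (1 - n * max 0 (dist y x - r))
    have hη : ∀ n, Continuous (η n) := fun n => by fun_prop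
    have h1 : Tendsto (fun n => ∫ y, g y * η n y ∂(muB N)) atTop
        (nhds (∫ y, g y * (closedBall x r).indicator 1 y ∂(muB N))) := by
      refine tendsto_integral_of_dominated_convergence (fun y => |g y|) ?_ hg.abs ?_ ?_
      · exact fun n => hg.1.mul (hη n).aestronglyMeasurable
      · intro n
        refine Eventually.of_forall fun y => ?_
        rw [norm_mul]
        refine mul_le_of_le_one_right (norm_nonneg _) ?_
        have : (0:ℝ) ≤ n * max 0 (dist y x - r) := by positivity
        rw [Real.norm_of_nonneg (le_max_left _ _)]
        exact max_le zero_le_one (by linarith)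
      · refine Eventually.of_forall fun y => ?_
        refine Tendsto.const_mul _ ?_
        by_cases hy : y ∈ closedBall x r
        · rw [indicator_of_mem hy]
          refine tendsto_const_nhds.congr fun n => ?_
          have : max 0 (dist y x - r) = 0 := max_eq_left (by have := mem_closedBall.1 hy; linarith)
          simp [η, this]
        · rw [indicator_of_notMem hy]
          have hd : 0 < dist y x - r := by
            rw [mem_closedBall, not_le] at hy; linarith
          obtain ⟨n0, hn0⟩ := exists_nat_gt (1 / (dist y x - r))
          refine tendsto_const_nhds.congr' ?_
          filter_upwards [eventually_ge_atTop n0] with n hn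
          have h2 : (n0:ℝ) ≤ n := by exact_mod_cast hn
          rw [div_lt_iff₀ hd] at hn0
          have : max 0 (dist y x - r) = dist y x - r := max_eq_right hd.le
          simp only [η, this]
          rw [max_eq_left]
          nlinarith
    have h2 : 0 ≤ ∫ y, g y * (closedBall x r).indicator 1 y ∂(muB N) :=
      ge_of_tendsto' h1 fun n => h (η n) (hη n) fun y => le_max_left _ _
    have h3 : ∫ y, g y * (closedBall x r).indicator 1 y ∂(muB N)
        = ∫ y in closedBall x r, B.indicator g y := by
      rw [← integral_indicator measurableSet_closedBall, ← integral_indicator measurableSet_ball]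
      congr 1
      ext y
      by_cases hy : y ∈ closedBall x r <;> by_cases hy' : y ∈ B <;> simp [hy, hy', B] at *
    rwa [h3] at h2
  have h1 : ∀ᵐ x, 0 ≤ B.indicator g x := by
    filter_upwards [IsUnifLocDoublingMeasure.ae_tendsto_average (μ := volume) hgi.locallyIntegrable 1]
      with x hx
    have := hx (l := nhdsWithin (0:ℝ) (Ioi 0)) (fun _ => x) id tendsto_id
      (by
        refine eventually_nhdsWithin_of_forall fun r hr => ?_
        exact mem_closedBall_self (by simpa using (le_of_lt hr)))
    refine ge_of_tendsto' this fun r => ?_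
    rw [setAverage_eq]
    exact smul_nonneg (by positivity) (hball x r)
  rw [ae_restrict_iff' measurableSet_ball]
  filter_upwards [h1] with x hx hxB
  rwa [indicator_of_mem hxB] at hx

lemma pos_of_poly {g : EuclideanSpace ℝ (Fin N) → ℝ} (hg : Integrable g (muB N))
    (h : ∀ p : MvPolynomial (Fin N) ℝ, (∀ x ∈ closedBall (0 : EuclideanSpace ℝ (Fin N)) 1, 0 ≤ ev p x) →
      0 ≤ ∫ x, g x * ev p x ∂(muB N)) : ∀ᵐ x ∂(muB N), 0 ≤ g x :=
  pos_ball hg fun _ hη hη0 => pos_cont hg h hη.continuousOn fun x _ => hη0 x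

lemma ev_memLp (p : MvPolynomial (Fin N) ℝ) : MemLp (ev p) 2 (muB N) := by
  obtain ⟨C, hC0, hC⟩ := bdd_of_contOn (ev_contOn p)
  refine MemLp.of_bound (aesm_of_contOn (ev_contOn p)) C ?_
  filter_upwards [ae_restrict_mem measurableSet_ball] with x hx
  exact hC x (ball_subset_closedBall hx)

/-- Polynomials as elements of `L²`. -/
noncomputable def toL2 : MvPolynomial (Fin N) ℝ →ₗ[ℝ] Lp ℝ 2 (muB N) where
  toFun p := (ev_memLp p).toLp (ev p)
  map_add' p q := by
    rw [← MemLp.toLp_add]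
    congr 1
    ext x; exact ev_add p q x
  map_smul' c p := by
    simp only [RingHom.id_apply]
    rw [← MemLp.toLp_const_smul]
    congr 1
    ext x; simpa using ev_smul c p x

lemma riesz_poly (ℓ : MvPolynomial (Fin N) ℝ →ₗ[ℝ] ℝ) (C : ℝ) (h : ∀ p, |ℓ p| ≤ C * ‖toL2 p‖) :
    ∃ v : EuclideanSpace ℝ (Fin N) → ℝ, MemLp v 2 (muB N) ∧
      ∀ p, ∫ x, v x * ev p x ∂(muB N) = ℓ p := by
  have hn : ∃ C : ℝ, ∀ p, ‖ℓ p‖ ≤ C * ‖toL2 p‖ := ⟨C, h⟩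
  obtain ⟨T, hT, -⟩ := exists_extension_norm_eq (LinearMap.range (toL2 (N := N)))
    (ℓ.compLeftInverse toL2)
  set w := (InnerProductSpace.toDual ℝ (Lp ℝ 2 (muB N))).symm T
  refine ⟨w, Lp.memLp w, fun p => ?_⟩
  have h1 : T (toL2 p) = ℓ p := by
    rw [hT ⟨toL2 p, ⟨p, rfl⟩⟩]
    exact LinearMap.compLeftInverse_apply_of_bdd _ _ hn p _ rfl
  rw [← h1, ← InnerProductSpace.toDual_symm_apply, L2.inner_def]
  refine integral_congr_ae ?_
  filter_upwards [(ev_memLp p).coeFn_toLp] with x hx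
  have : (toL2 p : EuclideanSpace ℝ (Fin N) → ℝ) x = ev p x := hx
  rw [this]
  simp [w, mul_comm]

end Linear

section LinearTwo
variable {N : ℕ}

lemma IsTest.add {φ ψ : EuclideanSpace ℝ (Fin N) → ℝ} (hφ : IsTest N φ) (hψ : IsTest N ψ) :
    IsTest N (fun x => φ x + ψ x) := by
  refine ⟨hφ.1.add hψ.1, fun x hx => by simp [hφ.2.1 x hx, hψ.2.1 x hx], fun x hx => ?_⟩
  have hxK : x ∈ closedBall (0 : EuclideanSpace ℝ (Fin N)) 1 := by simp [hx]
  rw [fderivWithin_fun_add (udK x hxK) (hφ.1.differentiableOn (by norm_num) x hxK)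
    (hψ.1.differentiableOn (by norm_num) x hxK), hφ.2.2 x hx, hψ.2.2 x hx, add_zero]

lemma IsTest.const_mul {φ : EuclideanSpace ℝ (Fin N) → ℝ} (hφ : IsTest N φ) (c : ℝ) :
    IsTest N (fun x => c * φ x) := by
  refine ⟨contDiffOn_const.mul hφ.1, fun x hx => by simp [hφ.2.1 x hx], fun x hx => ?_⟩
  have hxK : x ∈ closedBall (0 : EuclideanSpace ℝ (Fin N)) 1 := by simp [hx]
  rw [fderivWithin_const_mul (udK x hxK) (hφ.1.differentiableOn (by norm_num) x hxK), hφ.2.2 x hx, smul_zero]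

lemma biharm_add {φ ψ : EuclideanSpace ℝ (Fin N) → ℝ} (hφ : IsTest N φ) (hψ : IsTest N ψ) :
    EqOn (biharm (fun x => φ x + ψ x)) (fun x => biharm φ x + biharm ψ x) (ball 0 1) := by
  intro x hx
  have h1 := hφ.1.mono ball_subset_closedBall
  have h2 := hψ.1.mono ball_subset_closedBall
  have e1 := lap_add isOpen_ball (h1.of_le (by norm_num)) (h2.of_le (by norm_num))
  have e2 := lap_congr isOpen_ball e1 hx
  have e3 := lap_add isOpen_ball (lap_contDiffOn isOpen_ball (n := 2) h1 (by norm_num))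
    (lap_contDiffOn isOpen_ball (n := 2) h2 (by norm_num)) hx
  exact e2.trans e3

lemma biharm_const_mul {φ : EuclideanSpace ℝ (Fin N) → ℝ} (hφ : IsTest N φ) (c : ℝ) :
    EqOn (biharm (fun x => c * φ x)) (fun x => c * biharm φ x) (ball 0 1) := by
  intro x hx
  have h1 := hφ.1.mono ball_subset_closedBall
  have e1 := lap_const_mul isOpen_ball c (h1.of_le (by norm_num))
  have e2 := lap_congr isOpen_ball e1 hx
  have e3 := lap_const_mul isOpen_ball c (lap_contDiffOn isOpen_ball (n := 2) h1 (by norm_num)) hx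
  exact e2.trans e3

lemma biharmW_cont {φ : EuclideanSpace ℝ (Fin N) → ℝ} (hφ : IsTest N φ) :
    ContinuousOn (lapW (lapW φ)) (closedBall 0 1) := by
  have h1 : ContDiffOn ℝ 2 (lapW φ) (closedBall 0 1) := lapW_contDiffOn hφ.1 (by norm_num)
  exact (lapW_contDiffOn (n := 0) h1 (by norm_num)).continuousOn

lemma int_mul_biharm {v φ : EuclideanSpace ℝ (Fin N) → ℝ} (hv : Integrable v (muB N))
    (hφ : IsTest N φ) : Integrable (fun x => v x * biharm φ x) (muB N) := by
  refine (int_mul_cont hv (biharmW_cont hφ)).congr ?_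
  filter_upwards [ae_restrict_mem measurableSet_ball] with x hx
  rw [biharmW_eq φ hx]

lemma compare (hN : 0 < N) {v V : EuclideanSpace ℝ (Fin N) → ℝ} (hv : Integrable v (muB N))
    (hV : Integrable V (muB N))
    (h : ∀ φ, IsTest N φ → (∀ x ∈ closedBall (0 : EuclideanSpace ℝ (Fin N)) 1, 0 ≤ φ x) →
      ∫ x, v x * biharm φ x ∂(muB N) ≤ ∫ x, V x * biharm φ x ∂(muB N)) :
    ∀ᵐ x ∂(muB N), v x ≤ V x := by
  have := pos_of_poly (g := fun x => V x - v x) (hV.sub hv) (fun p hp => by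
    have hb := boggio hN (solP_test hN p) (fun x hx => by
      rw [solP_biharm]; exact hp x (ball_subset_closedBall hx))
    have := h _ (solP_test hN p) hb
    simp only [solP_biharm] at this
    simp only [sub_mul]
    rw [integral_sub (int_mul_cont hV (ev_contOn p)) (int_mul_cont hv (ev_contOn p))]
    linarith)
  filter_upwards [this] with x hx
  linarith

/-- The functional `p ↦ ∫ f · (Δ²)⁻¹ p`. -/
noncomputable def ellP (hN : 0 < N) {f : EuclideanSpace ℝ (Fin N) → ℝ} (hf : Integrable f (muB N)) :
    MvPolynomial (Fin N) ℝ →ₗ[ℝ] ℝ where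
  toFun p := ∫ x, f x * ev (solP hN p) x ∂(muB N)
  map_add' p q := by
    rw [← integral_add (int_mul_cont hf (ev_contOn _)) (int_mul_cont hf (ev_contOn _))]
    simp only [map_add, ev_add, mul_add]
  map_smul' c p := by
    simp only [map_smul, ev_smul, RingHom.id_apply, smul_eq_mul]
    rw [← integral_const_mul]
    congr 1; ext x; ring

theorem lin_solve (hN : 0 < N) {f V : EuclideanSpace ℝ (Fin N) → ℝ} (hf : Integrable f (muB N))
    (hf0 : ∀ᵐ x ∂(muB N), 0 ≤ f x) (hVm : AEStronglyMeasurable V (muB N)) {M : ℝ}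
    (hVM : ∀ᵐ x ∂(muB N), |V x| ≤ M)
    (hV : ∀ φ, IsTest N φ → (∀ x ∈ closedBall (0 : EuclideanSpace ℝ (Fin N)) 1, 0 ≤ φ x) →
      ∫ x, f x * φ x ∂(muB N) ≤ ∫ x, V x * biharm φ x ∂(muB N)) :
    ∃ v : EuclideanSpace ℝ (Fin N) → ℝ, Integrable v (muB N) ∧ (∀ᵐ x ∂(muB N), 0 ≤ v x ∧ v x ≤ V x) ∧
      ∀ φ, IsTest N φ → ∫ x, v x * biharm φ x ∂(muB N) = ∫ x, f x * φ x ∂(muB N) := by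
  have hVi : Integrable V (muB N) := Integrable.of_bound hVm M hVM
  have hVL : MemLp (fun x => |V x|) 2 (muB N) :=
    MemLp.of_bound hVm.norm M (by filter_upwards [hVM] with x hx; simpa using hx)
  have hbog : ∀ p : MvPolynomial (Fin N) ℝ,
      (∀ x ∈ closedBall (0 : EuclideanSpace ℝ (Fin N)) 1, 0 ≤ ev p x) →
      ∀ x ∈ closedBall (0 : EuclideanSpace ℝ (Fin N)) 1, 0 ≤ ev (solP hN p) x := fun p hp =>
    boggio hN (solP_test hN p) (fun x hx => by
      rw [solP_biharm]; exact hp x (ball_subset_closedBall hx))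
  have hpos : ∀ p : MvPolynomial (Fin N) ℝ,
      (∀ x ∈ closedBall (0 : EuclideanSpace ℝ (Fin N)) 1, 0 ≤ ev p x) → 0 ≤ ellP hN hf p := by
    intro p hp
    refine integral_nonneg_of_ae ?_
    filter_upwards [hf0, ae_restrict_mem measurableSet_ball] with x hx hxB
    exact mul_nonneg hx (hbog p hp x (ball_subset_closedBall hxB))
  have hle : ∀ p : MvPolynomial (Fin N) ℝ,
      (∀ x ∈ closedBall (0 : EuclideanSpace ℝ (Fin N)) 1, 0 ≤ ev p x) →
      ellP hN hf p ≤ ∫ x, V x * ev p x ∂(muB N) := by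
    intro p hp
    have := hV _ (solP_test hN p) (hbog p hp)
    simp only [solP_biharm] at this
    exact this
  have habs : ∀ p : MvPolynomial (Fin N) ℝ, |ellP hN hf p| ≤ ∫ x, |V x| * |ev p x| ∂(muB N) := by
    intro p
    have i1 : Integrable (fun x => |V x| * |ev p x|) (muB N) := int_mul_cont hVi.abs (ev_contOn p).abs
    have key : ∀ ε > 0, |ellP hN hf p| ≤
        (∫ x, |V x| * |ev p x| ∂(muB N)) + (2 * ∫ x, |V x| ∂(muB N)) * ε := by
      intro ε hε
      obtain ⟨P, hP⟩ := poly_dense (g := fun x => |ev p x| + ε)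
        ((ev_contOn p).abs.add continuousOn_const) hε
      have hP1 : ∀ x ∈ closedBall (0 : EuclideanSpace ℝ (Fin N)) 1, |ev p x| ≤ ev P x := fun x hx => by
        have := (abs_lt.1 (hP x hx)).1; linarith
      have hP2 : ∀ x ∈ closedBall (0 : EuclideanSpace ℝ (Fin N)) 1, ev P x ≤ |ev p x| + 2 * ε :=
        fun x hx => by have := (abs_lt.1 (hP x hx)).2; linarith
      have a1 := hpos (P + p) fun x hx => by
        rw [ev_add]; have := hP1 x hx; have := neg_abs_le (ev p x); linarith
      have a2 := hpos (P - p) fun x hx => by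
        rw [ev_sub]; have := hP1 x hx; have := le_abs_self (ev p x); linarith
      rw [map_add] at a1
      rw [map_sub] at a2
      have a3 : |ellP hN hf p| ≤ ellP hN hf P := abs_le.2 ⟨by linarith, by linarith⟩
      have a4 := hle P fun x hx => (abs_nonneg _).trans (hP1 x hx)
      have a5 : ∫ x, V x * ev P x ∂(muB N) ≤ ∫ x, (|V x| * |ev p x| + 2 * ε * |V x|) ∂(muB N) := by
        refine integral_mono_ae (int_mul_cont hVi (ev_contOn P)) (i1.add (hVi.abs.const_mul _)) ?_
        filter_upwards [ae_restrict_mem measurableSet_ball] with x hx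
        have b1 := hP1 x (ball_subset_closedBall hx)
        have b2 := hP2 x (ball_subset_closedBall hx)
        calc V x * ev P x ≤ |V x| * ev P x :=
              mul_le_mul_of_nonneg_right (le_abs_self _) ((abs_nonneg _).trans b1)
          _ ≤ |V x| * (|ev p x| + 2 * ε) := by gcongr
          _ = _ := by ring
      rw [integral_add i1 (hVi.abs.const_mul _), integral_const_mul] at a5
      linarith
    have hlim : Tendsto (fun ε => (∫ x, |V x| * |ev p x| ∂(muB N)) + (2 * ∫ x, |V x| ∂(muB N)) * ε)
        (nhdsWithin 0 (Ioi 0)) (nhds ((∫ x, |V x| * |ev p x| ∂(muB N))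
          + (2 * ∫ x, |V x| ∂(muB N)) * 0)) := by
      refine Tendsto.mono_left ?_ nhdsWithin_le_nhds
      exact Continuous.tendsto (by fun_prop) _
    rw [mul_zero, add_zero] at hlim
    exact ge_of_tendsto hlim (eventually_nhdsWithin_of_forall fun ε hε => key ε hε)
  have hnorm : ∀ p : MvPolynomial (Fin N) ℝ, |ellP hN hf p| ≤ ‖hVL.toLp‖ * ‖toL2 p‖ := by
    intro p
    refine (habs p).trans ?_
    have h1 : ∫ x, |V x| * |ev p x| ∂(muB N) = inner ℝ hVL.toLp |toL2 p| := by
      rw [L2.inner_def]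
      refine integral_congr_ae ?_
      filter_upwards [(ev_memLp p).coeFn_toLp, hVL.coeFn_toLp, Lp.coeFn_abs (toL2 p)] with x h1 h2 h3
      have h4 : (toL2 p : EuclideanSpace ℝ (Fin N) → ℝ) x = ev p x := h1
      rw [h3, h2, h4]
      simp [mul_comm]
    rw [h1, ← norm_abs_eq_norm (toL2 p)]
    exact real_inner_le_norm _ _
  obtain ⟨v, hvL, hv⟩ := riesz_poly (ellP hN hf) _ hnorm
  have hvi : Integrable v (muB N) := hvL.integrable (by norm_num)
  have hv0 : ∀ᵐ x ∂(muB N), 0 ≤ v x := pos_of_poly hvi fun p hp => by rw [hv]; exact hpos p hp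
  have hvV : ∀ᵐ x ∂(muB N), 0 ≤ V x - v x := pos_of_poly (hVi.sub hvi) fun p hp => by
    have h1 := hle p hp
    have h2 : ∫ x, (V x - v x) * ev p x ∂(muB N)
        = (∫ x, V x * ev p x ∂(muB N)) - ∫ x, v x * ev p x ∂(muB N) := by
      rw [← integral_sub (int_mul_cont hVi (ev_contOn p)) (int_mul_cont hvi (ev_contOn p))]
      congr 1; ext x; ring
    rw [h2, hv]; linarith
  refine ⟨v, hvi, ?_, ?_⟩
  · filter_upwards [hv0, hvV] with x h1 h2 using ⟨h1, by linarith⟩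
  intro φ hφ
  set one : EuclideanSpace ℝ (Fin N) → ℝ := ev (solP hN 1)
  have hone : IsTest N one := solP_test hN 1
  have hone0 : ∀ x ∈ closedBall (0 : EuclideanSpace ℝ (Fin N)) 1, 0 ≤ one x := hbog 1 fun x _ => by
    simp [ev]
  set A := ∫ x, v x * biharm φ x ∂(muB N)
  set D := ∫ x, f x * φ x ∂(muB N)
  set C := (∫ x, |v x| ∂(muB N)) + ∫ x, f x * one x ∂(muB N)
  have hφc : ContinuousOn φ (closedBall 0 1) := hφ.1.continuousOn
  have key : ∀ ε > 0, |A - D| ≤ C * ε := by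
    intro ε hε
    obtain ⟨p, hp⟩ := poly_dense (biharmW_cont hφ) hε
    have hp' : ∀ x ∈ ball (0 : EuclideanSpace ℝ (Fin N)) 1, |ev p x - biharm φ x| < ε := fun x hx => by
      rw [← biharmW_eq φ hx]; exact hp x (ball_subset_closedBall hx)
    set ψ := ev (solP hN p)
    have hψ : IsTest N ψ := solP_test hN p
    have b1 : ∀ s : ℝ, |s| = 1 → ∀ x ∈ closedBall (0 : EuclideanSpace ℝ (Fin N)) 1,
        0 ≤ (s * φ x + (-s) * ψ x) + ε * one x := by
      intro s hs
      have t1 := (hφ.const_mul s).add (hψ.const_mul (-s))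
      refine boggio hN (t1.add (hone.const_mul ε)) fun x hx => ?_
      rw [biharm_add t1 (hone.const_mul ε) hx]
      simp only
      rw [biharm_add (hφ.const_mul s) (hψ.const_mul (-s)) hx]
      simp only
      rw [biharm_const_mul hφ _ hx, biharm_const_mul hψ _ hx, biharm_const_mul hone _ hx]
      simp only
      rw [solP_biharm, solP_biharm]
      have : ev (1 : MvPolynomial (Fin N) ℝ) x = 1 := by simp [ev]
      rw [this]
      have h3 : |s * (biharm φ x - ev p x)| ≤ ε := by
        rw [abs_mul, hs, one_mul, abs_sub_comm]; exact (hp' x hx).le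
      have := (abs_le.1 h3).1
      linarith
    have b2 : ∀ x ∈ closedBall (0 : EuclideanSpace ℝ (Fin N)) 1, |φ x - ψ x| ≤ ε * one x := fun x hx => by
      have c1 := b1 1 (by simp) x hx
      have c2 := b1 (-1) (by simp) x hx
      exact abs_le.2 ⟨by linarith, by linarith⟩
    have d1 : |A - ∫ x, v x * ev p x ∂(muB N)| ≤ (∫ x, |v x| ∂(muB N)) * ε := by
      rw [← integral_sub (int_mul_biharm hvi hφ) (int_mul_cont hvi (ev_contOn p)), ← integral_mul_const]
      refine (abs_integral_le_integral_abs).trans (integral_mono_ae ?_ (hvi.abs.mul_const _) ?_)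
      · exact ((int_mul_biharm hvi hφ).sub (int_mul_cont hvi (ev_contOn p))).abs
      · filter_upwards [ae_restrict_mem measurableSet_ball] with x hx
        rw [← mul_sub, abs_mul, abs_sub_comm]
        exact mul_le_mul_of_nonneg_left (hp' x hx).le (abs_nonneg _)
    have d2 : |D - ∫ x, f x * ψ x ∂(muB N)| ≤ (∫ x, f x * one x ∂(muB N)) * ε := by
      rw [← integral_sub (int_mul_cont hf hφc) (int_mul_cont hf (ev_contOn _)), ← integral_mul_const]
      refine (abs_integral_le_integral_abs).trans (integral_mono_ae ?_
        ((int_mul_cont hf (ev_contOn _)).mul_const _) ?_)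
      · exact ((int_mul_cont hf hφc).sub (int_mul_cont hf (ev_contOn _))).abs
      · filter_upwards [ae_restrict_mem measurableSet_ball, hf0] with x hx hfx
        rw [← mul_sub, abs_mul, abs_of_nonneg hfx, mul_assoc]
        refine mul_le_mul_of_nonneg_left ?_ hfx
        rw [mul_comm]
        exact b2 x (ball_subset_closedBall hx)
    have d3 : ∫ x, v x * ev p x ∂(muB N) = ∫ x, f x * ψ x ∂(muB N) := hv p
    rw [d3] at d1
    have e1 := abs_le.1 d1
    have e2 := abs_le.1 d2
    refine abs_le.2 ⟨?_, ?_⟩ <;> simp only [C, add_mul] <;> linarith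
  have hlim : Tendsto (fun ε => C * ε) (nhdsWithin 0 (Ioi 0)) (nhds (C * 0)) := by
    refine Tendsto.mono_left ?_ nhdsWithin_le_nhds
    exact Continuous.tendsto (by fun_prop) _
  rw [mul_zero] at hlim
  have := ge_of_tendsto hlim (eventually_nhdsWithin_of_forall fun ε hε => key ε hε)
  have := abs_nonpos_iff.1 this
  linarith

end LinearTwo

section Iteration
variable {N : ℕ}

lemma Phi_cont (α β : ℝ) : Continuous (Phi (N := N) α β) := by unfold Phi; fun_prop

lemma Phi_le {α β : ℝ} (h : Admissible α β) (x : EuclideanSpace ℝ (Fin N)) :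
    Phi α β x ≤ α - β / 2 := by
  unfold Phi
  have := mul_nonneg (neg_nonneg.2 h.1) (sq_nonneg ‖x‖)
  linarith

lemma le_Phi {α β : ℝ} (h : Admissible α β) {x : EuclideanSpace ℝ (Fin N)}
    (hx : x ∈ ball (0 : EuclideanSpace ℝ (Fin N)) 1) : α ≤ Phi α β x := by
  unfold Phi
  have h1 : ‖x‖ < 1 := by simpa using hx
  have h2 : ‖x‖ ^ 2 ≤ 1 := by nlinarith [norm_nonneg x]
  have := mul_nonneg (neg_nonneg.2 h.1) (sub_nonneg.2 h2)
  linarith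

lemma aesm_U {lam α β : ℝ} {U : EuclideanSpace ℝ (Fin N) → ℝ}
    (hU : IsWeakSuperSolutionAB N lam α β U) : AEStronglyMeasurable U (muB N) := by
  have h1 : AEMeasurable (fun x => ((1 - U x) ^ 2)⁻¹) (muB N) := hU.2.1.1.aemeasurable
  have h2 : AEMeasurable (fun x => 1 - Real.sqrt ((((1 - U x) ^ 2)⁻¹)⁻¹)) (muB N) :=
    (Real.continuous_sqrt.measurable.comp_aemeasurable h1.inv).const_sub 1
  refine (h2.congr ?_).aestronglyMeasurable
  filter_upwards [hU.1] with x hx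
  rw [inv_inv, Real.sqrt_sq (by linarith [hx.2])]
  ring

/-- Functions between the biharmonic lift and the super-solution. -/
def Good (N : ℕ) (α β : ℝ) (U u : EuclideanSpace ℝ (Fin N) → ℝ) : Prop :=
  AEStronglyMeasurable u (muB N) ∧ ∀ᵐ x ∂(muB N), Phi α β x ≤ u x ∧ u x ≤ U x

lemma phi_div (φ u : EuclideanSpace ℝ (Fin N) → ℝ) (lam : ℝ) :
    lam * ∫ x in ball (0 : EuclideanSpace ℝ (Fin N)) 1, φ x / (1 - u x) ^ 2
      = ∫ x, (lam * ((1 - u x) ^ 2)⁻¹) * φ x ∂(muB N) := by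
  rw [← integral_const_mul]
  congr 1; ext x; rw [div_eq_mul_inv]; ring

lemma U_ge_Phi (hN : 0 < N) {lam α β : ℝ} (hadm : Admissible α β) (hlam : 0 < lam)
    {U : EuclideanSpace ℝ (Fin N) → ℝ}
    (hU : IsWeakSuperSolutionAB N lam α β U) : ∀ᵐ x ∂(muB N), |U x - Phi α β x| ≤ 1 - α ∧
      Phi α β x ≤ U x := by
  have hb : ∀ᵐ x ∂(muB N), |U x - Phi α β x| ≤ 1 - α := by
    filter_upwards [hU.1, ae_restrict_mem measurableSet_ball] with x h1 hx
    have h2 := Phi_le (N := N) hadm x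
    have h3 := le_Phi hadm hx
    have h4 := hadm.2
    exact abs_le.2 ⟨by linarith, by linarith⟩
  have hi : Integrable (fun x => U x - Phi α β x) (muB N) :=
    Integrable.of_bound ((aesm_U hU).sub (Phi_cont α β).aestronglyMeasurable) (1 - α) hb
  have := compare hN (v := fun _ => 0) (integrable_zero _ _ _) hi (fun φ hφ hφ0 => by
    have := hU.2.2 φ hφ hφ0
    rw [phi_div] at this
    simp only [zero_mul, integral_zero]
    refine le_trans ?_ this
    refine integral_nonneg_of_ae ?_
    filter_upwards [ae_restrict_mem measurableSet_ball] with x hx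
    have := hφ0 x (ball_subset_closedBall hx)
    positivity)
  filter_upwards [hb, this] with x h1 h2 using ⟨h1, by linarith⟩

lemma inv_mono {a b : ℝ} (h : a ≤ b) (hb : b < 1) : ((1 - a) ^ 2)⁻¹ ≤ ((1 - b) ^ 2)⁻¹ := by
  have : 0 < 1 - b := by linarith
  gcongr

lemma good_int {lam α β : ℝ} {U u : EuclideanSpace ℝ (Fin N) → ℝ}
    (hU : IsWeakSuperSolutionAB N lam α β U) (hlt : ∀ᵐ x ∂(muB N), U x < 1)
    (hu : Good N α β U u) : Integrable (fun x => ((1 - u x) ^ 2)⁻¹) (muB N) := by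
  refine Integrable.mono' hU.2.1 ?_ ?_
  · exact (((hu.1.aemeasurable.const_sub 1).pow_const 2).inv).aestronglyMeasurable
  · filter_upwards [hlt, hu.2] with x h1 h2
    rw [Real.norm_of_nonneg (by positivity)]
    exact inv_mono h2.2 h1

lemma step (hN : 0 < N) {lam α β : ℝ} (hadm : Admissible α β) (hlam : 0 < lam)
    {U : EuclideanSpace ℝ (Fin N) → ℝ}
    (hU : IsWeakSuperSolutionAB N lam α β U) (hlt : ∀ᵐ x ∂(muB N), U x < 1)
    (u : EuclideanSpace ℝ (Fin N) → ℝ) (hu : Good N α β U u) :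
    ∃ u', Good N α β U u' ∧ ∀ φ, IsTest N φ → ∫ x, (u' x - Phi α β x) * biharm φ x ∂(muB N)
      = ∫ x, (lam * ((1 - u x) ^ 2)⁻¹) * φ x ∂(muB N) := by
  have hui := good_int hU hlt hu
  have hP := (Phi_cont (N := N) α β).aestronglyMeasurable (μ := muB N)
  obtain ⟨v, hvi, hv, hvs⟩ := lin_solve hN (f := fun x => lam * ((1 - u x) ^ 2)⁻¹)
    (V := fun x => U x - Phi α β x) (hui.const_mul lam)
    (Eventually.of_forall fun x => by positivity) ((aesm_U hU).sub hP) (M := 1 - α)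
    (by filter_upwards [U_ge_Phi hN hadm hlam hU] with x hx using hx.1)
    (fun φ hφ hφ0 => by
      have h1 := hU.2.2 φ hφ hφ0
      rw [phi_div] at h1
      refine le_trans ?_ h1
      refine integral_mono_ae (int_mul_cont (hui.const_mul lam) hφ.1.continuousOn)
        (int_mul_cont (hU.2.1.const_mul lam) hφ.1.continuousOn) ?_
      filter_upwards [ae_restrict_mem measurableSet_ball, hlt, hu.2] with x hx h2 h3
      have h4 := hφ0 x (ball_subset_closedBall hx)
      have h5 := inv_mono h3.2 h2
      gcongr)
  refine ⟨fun x => Phi α β x + v x, ⟨hP.add hvi.1, ?_⟩, fun φ hφ => ?_⟩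
  · filter_upwards [hv] with x hx
    constructor <;> linarith [hx.1, hx.2]
  · rw [← hvs φ hφ]; simp

theorem iterate (hN : 0 < N) {lam α β : ℝ} (hadm : Admissible α β) (hlam : 0 < lam)
    {U : EuclideanSpace ℝ (Fin N) → ℝ}
    (hU : IsWeakSuperSolutionAB N lam α β U) (hlt : ∀ᵐ x ∂(muB N), U x < 1) :
    ∃ u : EuclideanSpace ℝ (Fin N) → ℝ, IsWeakSolutionAB N lam α β u ∧
      ∀ᵐ x ∂(muB N), α ≤ u x ∧ u x ≤ U x := by
  choose! T hTg hTs using step hN hadm hlam hU hlt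
  have hP := (Phi_cont (N := N) α β).aestronglyMeasurable (μ := muB N)
  have hUP := U_ge_Phi hN hadm hlam hU
  let s : ℕ → EuclideanSpace ℝ (Fin N) → ℝ := fun n => T^[n] (Phi α β)
  have hs1 : ∀ n, s (n + 1) = T (s n) := fun n => Function.iterate_succ_apply' _ _ _
  have hgood : ∀ n, Good N α β U (s n) := by
    intro n
    induction n with
    | zero => exact ⟨hP, by filter_upwards [hUP] with x hx using ⟨le_rfl, hx.2⟩⟩
    | succ n ih => rw [hs1]; exact hTg _ ih
  have hbd : ∀ u, Good N α β U u → ∀ᵐ x ∂(muB N), |u x - Phi α β x| ≤ 1 - α := by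
    intro u hu
    filter_upwards [hu.2, hUP] with x h1 h2
    have := (abs_le.1 h2.1).2
    exact abs_le.2 ⟨by linarith, by linarith⟩
  have huInt : ∀ u, Good N α β U u → Integrable (fun x => u x - Phi α β x) (muB N) := fun u hu =>
    Integrable.of_bound (hu.1.sub hP) (1 - α) (hbd u hu)
  have hmono : ∀ n, ∀ᵐ x ∂(muB N), s n x ≤ s (n + 1) x := by
    intro n
    induction n with
    | zero =>
      filter_upwards [(hgood 1).2] with x hx using hx.1
    | succ n ih =>
      have := compare hN (huInt _ (hgood (n + 1))) (huInt _ (hgood (n + 1 + 1))) (fun φ hφ hφ0 => by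
        rw [hs1 n, hs1 (n + 1), hTs _ (hgood n) φ hφ, hTs _ (hgood (n + 1)) φ hφ]
        refine integral_mono_ae
          (int_mul_cont ((good_int hU hlt (hgood n)).const_mul lam) hφ.1.continuousOn)
          (int_mul_cont ((good_int hU hlt (hgood (n + 1))).const_mul lam) hφ.1.continuousOn) ?_
        filter_upwards [ae_restrict_mem measurableSet_ball, hlt, (hgood (n + 1)).2, ih] with x hx h2 h3 h6
        have h4 := hφ0 x (ball_subset_closedBall hx)
        have h5 := inv_mono h6 (h3.2.trans_lt h2)
        gcongr)
      filter_upwards [this] with x hx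
      linarith
  let u : EuclideanSpace ℝ (Fin N) → ℝ := fun x => ⨆ n, s n x
  have hall : ∀ᵐ x ∂(muB N), ∀ n, Phi α β x ≤ s n x ∧ s n x ≤ U x := ae_all_iff.2 fun n => (hgood n).2
  have hlim : ∀ᵐ x ∂(muB N), Tendsto (fun n => s n x) atTop (nhds (u x)) := by
    filter_upwards [ae_all_iff.2 hmono, hall] with x h1 h2
    exact tendsto_atTop_ciSup (monotone_nat_of_le_succ h1) ⟨U x, by rintro _ ⟨n, rfl⟩; exact (h2 n).2⟩
  have hu : Good N α β U u := by
    refine ⟨aestronglyMeasurable_of_tendsto_ae atTop (fun n => (hgood n).1) hlim, ?_⟩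
    filter_upwards [hlim, hall] with x h1 h2
    exact ⟨ge_of_tendsto' h1 fun n => (h2 n).1, le_of_tendsto' h1 fun n => (h2 n).2⟩
  have hu' : ∀ᵐ x ∂(muB N), α ≤ u x ∧ u x ≤ U x := by
    filter_upwards [hu.2, ae_restrict_mem measurableSet_ball] with x h1 h2
    exact ⟨(le_Phi hadm h2).trans h1.1, h1.2⟩
  refine ⟨u, ⟨?_, good_int hU hlt hu, fun φ hφ => ?_⟩, hu'⟩
  · filter_upwards [hu', hU.1] with x h1 h2 using ⟨h1.1, h1.2.trans h2.2⟩
  rw [phi_div]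
  have t1 : Tendsto (fun n => ∫ x, (s (n + 1) x - Phi α β x) * biharm φ x ∂(muB N)) atTop
      (nhds (∫ x, (u x - Phi α β x) * biharm φ x ∂(muB N))) := by
    refine tendsto_integral_of_dominated_convergence (fun x => |(1 - α) * biharm φ x|) ?_
      (int_mul_biharm (integrable_const _) hφ).abs ?_ ?_
    · exact fun n => (int_mul_biharm (huInt _ (hgood _)) hφ).1
    · intro n
      filter_upwards [hbd _ (hgood (n + 1))] with x hx
      rw [norm_mul, abs_mul]
      exact mul_le_mul_of_nonneg_right (hx.trans (le_abs_self _)) (norm_nonneg _)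
    · filter_upwards [hlim] with x hx
      exact ((hx.comp (tendsto_add_atTop_nat 1)).sub_const _).mul_const _
  have t2 : Tendsto (fun n => ∫ x, (lam * ((1 - s n x) ^ 2)⁻¹) * φ x ∂(muB N)) atTop
      (nhds (∫ x, (lam * ((1 - u x) ^ 2)⁻¹) * φ x ∂(muB N))) := by
    refine tendsto_integral_of_dominated_convergence
      (fun x => |(lam * ((1 - U x) ^ 2)⁻¹) * φ x|) ?_
      (int_mul_cont (hU.2.1.const_mul lam) hφ.1.continuousOn).abs ?_ ?_
    · exact fun n => (int_mul_cont ((good_int hU hlt (hgood n)).const_mul lam) hφ.1.continuousOn).1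
    · intro n
      filter_upwards [(hgood n).2, hlt] with x h1 h2
      have h3 := inv_mono h1.2 h2
      rw [norm_mul, abs_mul]
      refine mul_le_mul_of_nonneg_right ?_ (norm_nonneg _)
      rw [Real.norm_of_nonneg (by positivity), abs_of_nonneg (by positivity)]
      gcongr
    · filter_upwards [hlim, hlt, hu.2] with x h1 h2 h3
      refine Tendsto.mul_const _ (Tendsto.const_mul _ (Tendsto.inv₀ ((h1.const_sub 1).pow 2) ?_))
      have : 0 < 1 - u x := by linarith [h3.2]
      positivity
  refine tendsto_nhds_unique t1 (t2.congr fun n => ?_)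
  rw [hs1, hTs _ (hgood n) φ hφ]

end Iteration

section Kernel
variable {N : ℕ}

/-- Truncated powers. -/
noncomputable def tp (m : ℕ) (t : ℝ) : ℝ := (max t 0) ^ m

lemma tp_nonneg (m : ℕ) (t : ℝ) : 0 ≤ tp m t := pow_nonneg (le_max_right _ _) _

lemma tp_of_nonneg {m : ℕ} {t : ℝ} (h : 0 ≤ t) : tp m t = t ^ m := by rw [tp, max_eq_left h]

lemma tp_of_nonpos {m : ℕ} {t : ℝ} (h : t ≤ 0) : tp (m + 1) t = 0 := by
  rw [tp, max_eq_right h]; simp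

lemma tp_mul (m : ℕ) (t : ℝ) : t * tp (m + 1) t = tp (m + 2) t := by
  rcases le_total 0 t with h | h
  · rw [tp_of_nonneg h, tp_of_nonneg h]; ring
  · rw [tp_of_nonpos h, tp_of_nonpos h, mul_zero]

lemma tp_cont (m : ℕ) : Continuous (tp m) := by unfold tp; fun_prop

lemma tp_mono (m : ℕ) : Monotone (tp m) := fun a b h => by
  unfold tp
  exact pow_le_pow_left₀ (le_max_right _ _) (max_le_max_right _ h) m

lemma tp_hasDeriv (m : ℕ) (t : ℝ) : HasDerivAt (tp (m + 2)) ((m + 2) * tp (m + 1) t) t := by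
  have hp : HasDerivAt (fun s : ℝ => s ^ (m + 2)) ((m + 2) * t ^ (m + 1)) t := by
    have := hasDerivAt_pow (m + 2) t
    simpa using this
  rcases lt_trichotomy t 0 with h | h | h
  · rw [tp_of_nonpos h.le, mul_zero]
    refine (hasDerivAt_const t (0:ℝ)).congr_of_eventuallyEq ?_
    filter_upwards [Iio_mem_nhds h] with s hs
    exact tp_of_nonpos (le_of_lt hs)
  · subst h
    rw [tp_of_nonpos le_rfl, mul_zero]
    have h1 : HasDerivWithinAt (tp (m + 2)) 0 (Iic 0) 0 := by
      refine (hasDerivWithinAt_const (0:ℝ) (Iic 0) (0:ℝ)).congr (fun s hs => tp_of_nonpos hs) ?_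
      exact tp_of_nonpos le_rfl
    have h2 : HasDerivWithinAt (tp (m + 2)) 0 (Ici 0) 0 := by
      have h3 := hp.hasDerivWithinAt (s := Ici 0)
      simp only [ne_eq, Nat.succ_ne_zero, not_false_eq_true, zero_pow, mul_zero] at h3
      exact h3.congr (fun s hs => tp_of_nonneg hs) (tp_of_nonneg le_rfl)
    have := h1.union h2
    rwa [Iic_union_Ici, hasDerivWithinAt_univ] at this
  · rw [tp_of_nonneg h.le]
    refine hp.congr_of_eventuallyEq ?_
    filter_upwards [Ioi_mem_nhds h] with s hs
    exact tp_of_nonneg (le_of_lt hs)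

lemma tp_contDiff (n : ℕ) : ContDiff ℝ n (tp (n + 1)) := by
  induction n with
  | zero => exact contDiff_zero.2 (tp_cont _)
  | succ n ih =>
    have hd : deriv (tp (n + 1 + 1)) = fun t => ((n:ℝ) + 2) * tp (n + 1) t := by
      ext t; exact (tp_hasDeriv n t).deriv
    have : ((n + 1 : ℕ) : WithTop ℕ∞) = (n : WithTop ℕ∞) + 1 := by push_cast; rfl
    rw [this, contDiff_succ_iff_deriv]
    refine ⟨fun t => (tp_hasDeriv n t).differentiableAt, by simp, ?_⟩
    rw [hd]
    exact contDiff_const.mul ih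

/-- The kernel `(q - |x-y|²)₊^m`. -/
noncomputable def hk (m : ℕ) (q : ℝ) (x y : EuclideanSpace ℝ (Fin N)) : ℝ := tp m (q - ‖x - y‖ ^ 2)

lemma inner_contDiff (q : ℝ) (x : EuclideanSpace ℝ (Fin N)) (n : WithTop ℕ∞) :
    ContDiff ℝ n (fun y : EuclideanSpace ℝ (Fin N) => q - ‖x - y‖ ^ 2) :=
  contDiff_const.sub ((contDiff_const.sub contDiff_id).norm_sq ℝ)

lemma hk_contDiff (n : ℕ) (q : ℝ) (x : EuclideanSpace ℝ (Fin N)) : ContDiff ℝ n (hk (n + 1) q x) :=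
  (tp_contDiff n).comp (inner_contDiff q x n)

lemma pd_inner (q : ℝ) (x y : EuclideanSpace ℝ (Fin N)) (i : Fin N) :
    HasFDerivAt (fun y : EuclideanSpace ℝ (Fin N) => q - ‖x - y‖ ^ 2)
      (fderiv ℝ (fun y : EuclideanSpace ℝ (Fin N) => q - ‖x - y‖ ^ 2) y) y ∧
    pd i (fun y : EuclideanSpace ℝ (Fin N) => q - ‖x - y‖ ^ 2) y = 2 * (x i - y i) := by
  refine ⟨((inner_contDiff q x 1).differentiable (by norm_num) y).hasFDerivAt, ?_⟩
  have h0 : HasFDerivAt (fun y : EuclideanSpace ℝ (Fin N) => x - y)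
      (-(ContinuousLinearMap.id ℝ (EuclideanSpace ℝ (Fin N)))) y := (hasFDerivAt_id y).const_sub x
  have h1 := (h0.norm_sq).const_sub q
  unfold pd
  rw [h1.fderiv]
  simp [EuclideanSpace.inner_single_right]
  ring

lemma pd_hk (m : ℕ) (q : ℝ) (x y : EuclideanSpace ℝ (Fin N)) (i : Fin N) :
    pd i (hk (m + 2) q x) y = (2 * (m + 2)) * ((x i - y i) * hk (m + 1) q x y) := by
  obtain ⟨h1, h2⟩ := pd_inner q x y i
  have h3 : HasFDerivAt (hk (m + 2) q x) _ y := (tp_hasDeriv m _).comp_hasFDerivAt y h1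
  unfold pd at h2 ⊢
  rw [h3.fderiv, smul_apply, h2, smul_eq_mul]
  unfold hk
  ring

lemma lap_hk (m : ℕ) (q : ℝ) (x y : EuclideanSpace ℝ (Fin N)) :
    lap (hk (m + 3) q x) y = (4 * (m + 3) * (m + 2) * q) * hk (m + 1) q x y
      + (-(4 * (m + 3) * (m + 2) + 2 * N * (m + 3))) * hk (m + 2) q x y := by
  have hd : DifferentiableAt ℝ (hk (m + 2) q x) y :=
    (hk_contDiff (m + 1) q x).differentiable (by simp) y
  have hc : ∀ i : Fin N, DifferentiableAt ℝ (fun y : EuclideanSpace ℝ (Fin N) => x i - y i) y :=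
    fun i => by fun_prop
  have hpc : ∀ i : Fin N, pd i (fun y : EuclideanSpace ℝ (Fin N) => x i - y i) y = -1 := by
    intro i
    have := pd_coord i i y
    unfold pd at this ⊢
    rw [fderiv_const_sub, neg_apply, this]; simp
  have h1 : ∀ i : Fin N, pd i (pd i (hk (m + 3) q x)) y
      = (2 * (m + 3)) * ((x i - y i) * ((2 * (m + 2)) * ((x i - y i) * hk (m + 1) q x y))
        - hk (m + 2) q x y) := by
    intro i
    have : pd i (hk (m + 3) q x) = fun y => (2 * ((m:ℝ) + 3)) * ((x i - y i) * hk (m + 2) q x y) := by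
      ext y; rw [pd_hk (m + 1)]; push_cast; ring
    rw [this, pd_const_mul _ ((hc i).fun_mul hd), pd_mul (hc i) hd, pd_hk, hpc]
    ring
  rw [lap_eq]
  simp only [h1]
  rw [← Finset.mul_sum, Finset.sum_sub_distrib]
  have h2 : ∑ i, (x i - y i) * ((2 * ((m:ℝ) + 2)) * ((x i - y i) * hk (m + 1) q x y))
      = (2 * ((m:ℝ) + 2)) * hk (m + 1) q x y * ‖x - y‖ ^ 2 := by
    rw [EuclideanSpace.real_norm_sq_eq, Finset.mul_sum]
    refine Finset.sum_congr rfl fun i _ => ?_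
    simp only [PiLp.sub_apply]; ring
  have h3 : hk (m + 2) q x y = (q - ‖x - y‖ ^ 2) * hk (m + 1) q x y := (tp_mul m _).symm
  rw [h2]
  simp only [Finset.sum_const, Finset.card_univ, Fintype.card_fin, nsmul_eq_mul]
  rw [h3]; ring

lemma biharm_hk (q : ℝ) (x y : EuclideanSpace ℝ (Fin N)) :
    biharm (hk 5 q x) y = 1920 * q ^ 2 * hk 1 q x y - 960 * (N + 6) * q * hk 2 q x y
      + 80 * (N + 8) * (N + 6) * hk 3 q x y := by
  have h5 : lap (hk 5 q x) = fun y : EuclideanSpace ℝ (Fin N) => (80 * q) * hk 3 q x y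
      + (-(80 + 10 * N)) * hk 4 q x y := by
    ext y; rw [lap_hk 2]; push_cast; ring
  have c3 : ContDiff ℝ 2 (hk 3 q x) := by exact_mod_cast hk_contDiff 2 q x
  have c4 : ContDiff ℝ 2 (hk 4 q x) :=
    ContDiff.of_le (n := (3:ℕ)) (by exact_mod_cast hk_contDiff 3 q x) (by norm_num)
  unfold biharm
  rw [h5, lap_add isOpen_univ (contDiffOn_const.mul c3.contDiffOn)
    (contDiffOn_const.mul c4.contDiffOn) (mem_univ y)]
  simp only
  rw [lap_const_mul isOpen_univ _ c3.contDiffOn (mem_univ y),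
    lap_const_mul isOpen_univ _ c4.contDiffOn (mem_univ y)]
  simp only
  rw [lap_hk 0, lap_hk 1]
  push_cast; ring

end Kernel

section Concave
variable {N : ℕ}

lemma hk_nonneg (m : ℕ) (q : ℝ) (x y : EuclideanSpace ℝ (Fin N)) : 0 ≤ hk m q x y := tp_nonneg _ _

lemma hk_le (m : ℕ) (q : ℝ) (x y : EuclideanSpace ℝ (Fin N)) : hk m q x y ≤ tp m q :=
  tp_mono m (by have := sq_nonneg ‖x - y‖; linarith)

lemma hk_cont (m : ℕ) (q : ℝ) (x : EuclideanSpace ℝ (Fin N)) : Continuous (hk m q x) :=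
  (tp_cont m).comp (by fun_prop)

lemma hk_symm (m : ℕ) (q : ℝ) (x y : EuclideanSpace ℝ (Fin N)) : hk m q x y = hk m q y x := by
  unfold hk; rw [norm_sub_rev]

lemma z_hk_int {z : EuclideanSpace ℝ (Fin N) → ℝ} (hz : Integrable z) (m : ℕ) (q : ℝ)
    (x : EuclideanSpace ℝ (Fin N)) : Integrable (fun y => z y * hk m q x y) := by
  refine hz.mul_bdd (c := tp m q) (hk_cont m q x).aestronglyMeasurable
    (Eventually.of_forall fun y => ?_)
  rw [Real.norm_of_nonneg (hk_nonneg _ _ _ _)]; exact hk_le _ _ _ _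

/-- The kernel averages. -/
noncomputable def JJ (z : EuclideanSpace ℝ (Fin N) → ℝ) (m : ℕ) (x : EuclideanSpace ℝ (Fin N)) (q : ℝ) :
    ℝ := ∫ y, z y * hk m q x y

lemma JJ_hasDeriv {z : EuclideanSpace ℝ (Fin N) → ℝ} (hz : Integrable z) (m : ℕ)
    (x : EuclideanSpace ℝ (Fin N)) (q : ℝ) :
    HasDerivAt (JJ z (m + 2) x) ((m + 2) * JJ z (m + 1) x q) q := by
  have h := hasDerivAt_integral_of_dominated_loc_of_deriv_le (μ := volume)
    (F := fun q y => z y * hk (m + 2) q x y)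
    (F' := fun q y => z y * ((m + 2) * hk (m + 1) q x y)) (x₀ := q) (s := Iio (q + 1))
    (bound := fun y => |z y| * ((m + 2) * tp (m + 1) (q + 1)))
    (Iio_mem_nhds (by linarith)) (Eventually.of_forall fun q => (z_hk_int hz _ _ _).1)
    (z_hk_int hz _ _ _)
    (hz.1.mul ((hk_cont _ _ _).const_smul ((m:ℝ) + 2)).aestronglyMeasurable)
    (Eventually.of_forall fun y q' hq' => by
      rw [norm_mul, Real.norm_of_nonneg (mul_nonneg (by positivity) (hk_nonneg _ _ _ _))]
      refine mul_le_mul_of_nonneg_left (mul_le_mul_of_nonneg_left ?_ (by positivity)) (norm_nonneg _)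
      exact (hk_le _ _ _ _).trans (tp_mono _ (le_of_lt hq')))
    (hz.abs.mul_const _)
    (Eventually.of_forall fun y q' _ => by
      refine HasDerivAt.const_mul _ ?_
      have := (tp_hasDeriv m (q' - ‖x - y‖ ^ 2)).comp q' ((hasDerivAt_id q').sub_const _)
      rw [mul_one] at this
      exact this)
  have h2 := h.2
  have e : ∫ y, z y * ((m + 2) * hk (m + 1) q x y) = (m + 2) * JJ z (m + 1) x q := by
    unfold JJ; rw [← integral_const_mul]; congr 1; ext y; ring
  rw [e] at h2
  exact h2

/-- The normalized averages. -/
noncomputable def AA (z : EuclideanSpace ℝ (Fin N) → ℝ) (x : EuclideanSpace ℝ (Fin N)) (q : ℝ) : ℝ :=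
  q ^ (-((N:ℝ) / 2 + 3)) * JJ z 3 x q

lemma AA_deriv {z : EuclideanSpace ℝ (Fin N) → ℝ} (hz : Integrable z)
    (x : EuclideanSpace ℝ (Fin N)) : ∃ f' : ℝ → ℝ, (∀ q : ℝ, 0 < q → HasDerivAt (AA z x) (f' q) q) ∧
    ∀ q : ℝ, 0 < q → HasDerivAt f'
      (q ^ (-((N:ℝ) / 2 + 3) - 2) / 320 * ∫ y, z y * biharm (hk 5 q x) y) q := by
  set a : ℝ := (N:ℝ) / 2 + 3 with ha
  have d1 : ∀ q : ℝ, 0 < q → HasDerivAt (AA z x)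
      ((-a) * q ^ (-a - 1) * JJ z 3 x q + q ^ (-a) * (3 * JJ z 2 x q)) q := by
    intro q hq
    have h1 := (Real.hasDerivAt_rpow_const (x := q) (p := -a) (Or.inl hq.ne')).mul (JJ_hasDeriv hz 1 x q)
    exact h1.congr_deriv (by norm_num)
  have d2 : ∀ q : ℝ, 0 < q → HasDerivAt
      (fun q => (-a) * q ^ (-a - 1) * JJ z 3 x q + q ^ (-a) * (3 * JJ z 2 x q))
      (q ^ (-a - 2) / 320 * (1920 * q ^ 2 * JJ z 1 x q - 960 * (N + 6) * q * JJ z 2 x q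
        + 80 * (N + 8) * (N + 6) * JJ z 3 x q)) q := by
    intro q hq
    have h1 := ((Real.hasDerivAt_rpow_const (x := q) (p := -a - 1) (Or.inl hq.ne')).const_mul (-a)).mul
      (JJ_hasDeriv hz 1 x q)
    have h2 := (Real.hasDerivAt_rpow_const (x := q) (p := -a) (Or.inl hq.ne')).mul
      ((JJ_hasDeriv hz 0 x q).const_mul 3)
    refine (h1.add h2).congr_deriv ?_
    have e1 : q ^ (-a - 1) = q ^ (-a - 2) * q := by
      rw [show -a - 1 = (-a - 2) + 1 by ring, Real.rpow_add hq, Real.rpow_one]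
    have e2 : q ^ (-a) = q ^ (-a - 2) * q ^ 2 := by
      rw [show -a = (-a - 2) + (2:ℕ) by push_cast; ring, Real.rpow_add hq, Real.rpow_natCast]
      push_cast; ring_nf
    have e3 : q ^ (-a - 1 - 1) = q ^ (-a - 2) := by ring_nf
    rw [e3, e1, e2, ha]
    push_cast
    ring
  refine ⟨_, d1, fun q hq => ?_⟩
  have e : ∫ y, z y * biharm (hk 5 q x) y = 1920 * q ^ 2 * JJ z 1 x q
        - 960 * (N + 6) * q * JJ z 2 x q + 80 * (N + 8) * (N + 6) * JJ z 3 x q := by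
    simp only [biharm_hk]
    unfold JJ
    rw [← integral_const_mul, ← integral_const_mul, ← integral_const_mul, ← integral_sub, ← integral_add]
    · congr 1; ext y; ring
    · exact ((z_hk_int hz _ _ _).const_mul _).sub ((z_hk_int hz _ _ _).const_mul _)
    · exact ((z_hk_int hz _ _ _).const_mul _)
    · exact ((z_hk_int hz _ _ _).const_mul _)
    · exact ((z_hk_int hz _ _ _).const_mul _)
  rw [e]
  exact d2 q hq

lemma AA_concave {z : EuclideanSpace ℝ (Fin N) → ℝ} (hz : Integrable z)
    (x : EuclideanSpace ℝ (Fin N)) {Q : ℝ}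
    (H : ∀ q ∈ Ioo 0 Q, ∫ y, z y * biharm (hk 5 q x) y ≤ 0) : ConcaveOn ℝ (Ioo 0 Q) (AA z x) := by
  obtain ⟨f', d1, d2⟩ := AA_deriv hz x
  have e1 : ∀ q : ℝ, 0 < q → deriv (AA z x) =ᶠ[nhds q] f' := by
    intro q hq
    filter_upwards [Ioi_mem_nhds hq] with s hs using (d1 s hs).deriv
  refine concaveOn_of_deriv2_nonpos' (convex_Ioo 0 Q)
    (fun q hq => (d1 q hq.1).differentiableAt.differentiableWithinAt)
    (fun q hq => ((d2 q hq.1).congr_of_eventuallyEq (e1 q hq.1)).differentiableAt.differentiableWithinAt) ?_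
  intro q hq
  change deriv (deriv (AA z x)) q ≤ 0
  rw [((d2 q hq.1).congr_of_eventuallyEq (e1 q hq.1)).deriv]
  refine mul_nonpos_of_nonneg_of_nonpos ?_ (H q hq)
  have := Real.rpow_nonneg hq.1.le (-((N:ℝ) / 2 + 3) - 2)
  positivity

/-- If the averages are affine in `q`, the pairing vanishes. -/
lemma biharm_zero_of_affine {z : EuclideanSpace ℝ (Fin N) → ℝ} (hz : Integrable z)
    (x : EuclideanSpace ℝ (Fin N)) {Q c0 c1 : ℝ} (H : ∀ q ∈ Ioo 0 Q, AA z x q = c0 + c1 * q)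
    {q : ℝ} (hq : q ∈ Ioo 0 Q) : ∫ y, z y * biharm (hk 5 q x) y = 0 := by
  obtain ⟨f', d1, d2⟩ := AA_deriv hz x
  have e1 : ∀ q ∈ Ioo 0 Q, f' q = c1 := by
    intro q hq
    have h1 : HasDerivAt (fun q => c0 + c1 * q) c1 q := by
      have := ((hasDerivAt_id q).const_mul c1).const_add c0
      rw [mul_one] at this
      exact this
    refine (d1 q hq.1).unique (h1.congr_of_eventuallyEq ?_)
    filter_upwards [Ioo_mem_nhds hq.1 hq.2] with s hs using H s hs
  have h2 := (d2 q hq.1).unique ((hasDerivAt_const q c1).congr_of_eventuallyEq (by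
    filter_upwards [Ioo_mem_nhds hq.1 hq.2] with s hs using e1 s hs))
  have := Real.rpow_pos_of_pos hq.1 (-((N:ℝ) / 2 + 3) - 2)
  rcases mul_eq_zero.1 h2 with h | h
  · exfalso; exact absurd h (by positivity)
  · exact h

lemma concave_slope {f : ℝ → ℝ} {Q L : ℝ} (hf : ConcaveOn ℝ (Ioo 0 Q) f)
    (hL : Tendsto f (nhdsWithin 0 (Ioi 0)) (nhds L)) {q q' : ℝ} (hq : 0 < q) (hqq : q ≤ q')
    (hq' : q' < Q) : q * (f q' - L) ≤ q' * (f q - L) := by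
  have key : ∀ ε ∈ Ioo 0 q, (q' - q) * f ε + (q - ε) * f q' ≤ (q' - ε) * f q := by
    intro ε hε
    have hd : 0 < q' - ε := by linarith [hε.2]
    have m1 : ε ∈ Ioo 0 Q := ⟨hε.1, by linarith [hε.2]⟩
    have m2 : q' ∈ Ioo 0 Q := ⟨by linarith, hq'⟩
    have n1 : 0 ≤ (q' - q) / (q' - ε) := div_nonneg (by linarith) hd.le
    have n2 : 0 ≤ (q - ε) / (q' - ε) := div_nonneg (by linarith [hε.2]) hd.le
    have n3 : (q' - q) / (q' - ε) + (q - ε) / (q' - ε) = 1 := by field_simp; ring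
    have h := hf.2 m1 m2 n1 n2 n3
    simp only [smul_eq_mul] at h
    have e : (q' - q) / (q' - ε) * ε + (q - ε) / (q' - ε) * q' = q := by field_simp; ring
    rw [e] at h
    have := mul_le_mul_of_nonneg_left h hd.le
    calc _ = (q' - ε) * ((q' - q) / (q' - ε) * f ε + (q - ε) / (q' - ε) * f q') := by field_simp
      _ ≤ _ := this
  have hid : Tendsto (fun ε : ℝ => ε) (nhdsWithin 0 (Ioi 0)) (nhds 0) :=
    tendsto_id.mono_left nhdsWithin_le_nhds
  have t1 : Tendsto (fun ε => (q' - q) * f ε + (q - ε) * f q') (nhdsWithin 0 (Ioi 0))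
      (nhds ((q' - q) * L + (q - 0) * f q')) :=
    (hL.const_mul _).add ((hid.const_sub q).mul_const _)
  have t2 : Tendsto (fun ε => (q' - ε) * f q) (nhdsWithin 0 (Ioi 0)) (nhds ((q' - 0) * f q)) :=
    (hid.const_sub q').mul_const _
  have := le_of_tendsto_of_tendsto t1 t2 (by
    filter_upwards [Ioo_mem_nhdsGT hq] with ε hε using key ε hε)
  linarith

end Concave

section Scaling
variable {N : ℕ}

/-- The normalized kernel. -/
noncomputable def kk (w : EuclideanSpace ℝ (Fin N)) : ℝ := tp 3 (1 - ‖w‖ ^ 2)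

lemma kk_cont : Continuous (kk : EuclideanSpace ℝ (Fin N) → ℝ) := (tp_cont 3).comp (by fun_prop)

lemma kk_nonneg (w : EuclideanSpace ℝ (Fin N)) : 0 ≤ kk w := tp_nonneg _ _

lemma kk_zero {w : EuclideanSpace ℝ (Fin N)} (h : 1 ≤ ‖w‖) : kk w = 0 :=
  tp_of_nonpos (m := 2) (by nlinarith)

lemma kk_neg (w : EuclideanSpace ℝ (Fin N)) : kk (-w) = kk w := by unfold kk; rw [norm_neg]

lemma kk_int {f : EuclideanSpace ℝ (Fin N) → ℝ} (hf : Continuous f) :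
    Integrable (fun w => kk w * f w) := by
  refine (kk_cont.mul hf).integrable_of_hasCompactSupport ?_
  refine HasCompactSupport.intro (isCompact_closedBall 0 1) fun w hw => ?_
  rw [Pi.mul_apply, kk_zero, zero_mul]
  simp only [mem_closedBall, dist_zero_right, not_le] at hw
  exact hw.le

lemma AA_eq (z : EuclideanSpace ℝ (Fin N) → ℝ) (x : EuclideanSpace ℝ (Fin N)) {q : ℝ} (hq : 0 < q) :
    AA z x q = ∫ w, kk w * z (x + √q • w) := by
  have hs : 0 < √q := Real.sqrt_pos.2 hq
  unfold AA JJ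
  rw [← integral_add_left_eq_self _ x]
  have h := Measure.integral_comp_smul_of_nonneg (volume : Measure (EuclideanSpace ℝ (Fin N)))
    (fun y => z (x + y) * hk 3 q x (x + y)) (√q) (hR := hs.le)
  rw [finrank_euclideanSpace_fin, smul_eq_mul] at h
  have e : ∀ w : EuclideanSpace ℝ (Fin N), hk 3 q x (x + √q • w) = q ^ 3 * kk w := by
    intro w
    unfold hk kk tp
    have : q - ‖x - (x + √q • w)‖ ^ 2 = q * (1 - ‖w‖ ^ 2) := by
      rw [sub_add_cancel_left, norm_neg, norm_smul, Real.norm_of_nonneg hs.le, mul_pow,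
        Real.sq_sqrt hq.le]; ring
    rw [this, ← mul_pow, mul_max_of_nonneg _ _ hq.le, mul_zero]
  simp only [e] at h
  have h' : ∫ y, z (x + y) * hk 3 q x (x + y) = (√q) ^ N * (q ^ 3 * ∫ w, kk w * z (x + √q • w)) := by
    rw [← integral_const_mul]
    have : (fun w => q ^ 3 * (kk w * z (x + √q • w))) = fun w => z (x + √q • w) * (q ^ 3 * kk w) := by
      ext w; ring
    rw [this, h]
    field_simp
  rw [h']
  have e2 : q ^ (-((N:ℝ) / 2 + 3)) * (√q ^ N * q ^ 3) = 1 := by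
    rw [Real.sqrt_eq_rpow, ← Real.rpow_natCast, ← Real.rpow_mul hq.le, ← Real.rpow_natCast q 3,
      ← Real.rpow_add hq, ← Real.rpow_add hq]
    rw [show -((N:ℝ) / 2 + 3) + (1 / 2 * (N:ℝ) + ((3:ℕ):ℝ)) = 0 by push_cast; ring, Real.rpow_zero]
  calc _ = q ^ (-((N:ℝ) / 2 + 3)) * (√q ^ N * q ^ 3) * ∫ w, kk w * z (x + √q • w) := by ring
    _ = _ := by rw [e2, one_mul]

/-- Total mass of the kernel. -/
noncomputable def kap (N : ℕ) : ℝ := ∫ w : EuclideanSpace ℝ (Fin N), kk w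

lemma kk_int1 : Integrable (kk : EuclideanSpace ℝ (Fin N) → ℝ) := by
  simpa using kk_int (N := N) (f := fun _ => 1) continuous_const

lemma kap_pos : 0 < kap N := by
  unfold kap
  refine (Continuous.integral_pos_of_hasCompactSupport_nonneg_nonzero kk_cont ?_ kk_nonneg (x := 0) ?_)
  · refine HasCompactSupport.intro (isCompact_closedBall 0 1) fun w hw => ?_
    rw [kk_zero]
    simp only [mem_closedBall, dist_zero_right, not_le] at hw
    exact hw.le
  · simp [kk, tp]

lemma odd_int {f : EuclideanSpace ℝ (Fin N) → ℝ} (h : ∀ w, f (-w) = - f w) : ∫ w, f w = 0 := by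
  have := integral_neg_eq_self f volume
  simp only [h, integral_neg] at this
  linarith

/-- Affine behaviour of averages for quadratics. -/
lemma AA_quad (A b : ℝ) (x : EuclideanSpace ℝ (Fin N)) (hx : ‖x‖ < 1) {q : ℝ}
    (hq : q ∈ Ioo 0 ((1 - ‖x‖) ^ 2)) :
    AA ((ball (0 : EuclideanSpace ℝ (Fin N)) 1).indicator (fun y => A + b * ‖y‖ ^ 2)) x q =
      (A + b * ‖x‖ ^ 2) * kap N + (b * ∫ w : EuclideanSpace ℝ (Fin N), kk w * ‖w‖ ^ 2) * q := by
  have hs : √q < 1 - ‖x‖ := by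
    rw [Real.sqrt_lt' (by linarith)]; exact hq.2
  rw [AA_eq _ _ hq.1]
  have e : ∀ w : EuclideanSpace ℝ (Fin N), kk w * (ball (0 : EuclideanSpace ℝ (Fin N)) 1).indicator
      (fun y => A + b * ‖y‖ ^ 2) (x + √q • w) = (A + b * ‖x‖ ^ 2) * kk w +
        (2 * b * √q) * (kk w * inner ℝ x w) + (b * q) * (kk w * ‖w‖ ^ 2) := by
    intro w
    by_cases hw : 1 ≤ ‖w‖
    · rw [kk_zero hw]; ring
    · rw [indicator_of_mem]
      · rw [norm_add_sq_real, norm_smul, inner_smul_right, Real.norm_of_nonneg (Real.sqrt_nonneg _),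
          mul_pow, Real.sq_sqrt hq.1.le]
        ring
      · rw [mem_ball_zero_iff]
        calc ‖x + √q • w‖ ≤ ‖x‖ + √q * ‖w‖ := by
              refine (norm_add_le _ _).trans ?_
              rw [norm_smul, Real.norm_of_nonneg (Real.sqrt_nonneg _)]
          _ ≤ ‖x‖ + √q * 1 := by
              have := mul_le_mul_of_nonneg_left (not_le.1 hw).le (Real.sqrt_nonneg q); linarith
          _ < 1 := by linarith
  simp only [e]
  have i1 : Integrable (fun w : EuclideanSpace ℝ (Fin N) => (A + b * ‖x‖ ^ 2) * kk w) :=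
    kk_int1.const_mul _
  have i2 : Integrable (fun w : EuclideanSpace ℝ (Fin N) => (2 * b * √q) * (kk w * inner ℝ x w)) :=
    (kk_int (by fun_prop)).const_mul _
  have i3 : Integrable (fun w : EuclideanSpace ℝ (Fin N) => (b * q) * (kk w * ‖w‖ ^ 2)) :=
    (kk_int (by fun_prop)).const_mul _
  have i12 : Integrable (fun w : EuclideanSpace ℝ (Fin N) => (A + b * ‖x‖ ^ 2) * kk w +
      (2 * b * √q) * (kk w * inner ℝ x w)) := i1.add i2
  rw [integral_add i12 i3, integral_add i1 i2, integral_const_mul, integral_const_mul,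
    integral_const_mul, odd_int (f := fun w => kk w * inner ℝ x w)
      (fun w => by rw [kk_neg, inner_neg_right]; ring)]
  unfold kap; ring

end Scaling

section SetupZ
variable {N : ℕ}

/-- Abstract properties of `1 - U`. -/
structure ZZ (z : EuclideanSpace ℝ (Fin N) → ℝ) (M : ℝ) : Prop where
  meas : Measurable z
  nonneg : ∀ x, 0 ≤ z x
  le : ∀ x, z x ≤ M
  off : ∀ x, 1 ≤ ‖x‖ → z x = 0
  conc : ∀ x, ‖x‖ < 1 → ConcaveOn ℝ (Ioo 0 ((1 - ‖x‖) ^ 2)) (AA z x)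

lemma hk_test {x : EuclideanSpace ℝ (Fin N)} (hx : ‖x‖ < 1) {q : ℝ}
    (hq : q ∈ Ioo 0 ((1 - ‖x‖) ^ 2)) : IsTest N (hk 5 q x) := by
  have hc : ContDiff ℝ 4 (hk 5 q x) := hk_contDiff 4 q x
  have hneg : ∀ y : EuclideanSpace ℝ (Fin N), ‖y‖ = 1 → q - ‖x - y‖ ^ 2 < 0 := by
    intro y hy
    have h1 : 1 - ‖x‖ ≤ ‖x - y‖ := by
      have := norm_sub_norm_le y x
      rw [norm_sub_rev] at this; linarith
    have h2 : (1 - ‖x‖) ^ 2 ≤ ‖x - y‖ ^ 2 := pow_le_pow_left₀ (by linarith) h1 2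
    linarith [hq.2]
  refine ⟨hc.contDiffOn, fun y hy => tp_of_nonpos (m := 4) (hneg y hy).le, fun y hy => ?_⟩
  have hyK : y ∈ closedBall (0 : EuclideanSpace ℝ (Fin N)) 1 := by simp [hy]
  rw [(hc.differentiable (by norm_num) y).fderivWithin (udK y hyK)]
  have hcont : Continuous (fun y : EuclideanSpace ℝ (Fin N) => q - ‖x - y‖ ^ 2) := by fun_prop
  have : hk 5 q x =ᶠ[nhds y] fun _ => (0:ℝ) := by
    filter_upwards [hcont.continuousAt.preimage_mem_nhds (Iio_mem_nhds (hneg y hy))] with s hs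
    exact tp_of_nonpos (m := 4) (le_of_lt hs)
  rw [this.fderiv_eq]; simp

lemma exists_z {lam α β : ℝ} (hadm : Admissible α β) (hlam : 0 < lam)
    {U : EuclideanSpace ℝ (Fin N) → ℝ} (hU : IsWeakSuperSolutionAB N lam α β U) :
    ∃ z M, ZZ z M ∧ ∀ᵐ x ∂(muB N), z x = 1 - U x := by
  have hα : α < 1 := by have := hadm.1; have := hadm.2; linarith
  have hsm := (aesm_U hU).aemeasurable
  set f := hsm.mk U with hf
  set z := (ball (0 : EuclideanSpace ℝ (Fin N)) 1).indicator (fun x => max 0 (min (1 - α) (1 - f x))) with hzdef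
  have hmeas : Measurable z :=
    (measurable_const.max (measurable_const.min (hsm.measurable_mk.const_sub 1))).indicator measurableSet_ball
  have hae : ∀ᵐ x ∂(muB N), z x = 1 - U x := by
    filter_upwards [hU.1, ae_restrict_mem measurableSet_ball, hsm.ae_eq_mk] with x h1 hx h2
    rw [hzdef, indicator_of_mem hx, hf, ← h2, min_eq_right (by linarith), max_eq_right (by linarith)]
  have hnn : ∀ x, 0 ≤ z x := fun x => indicator_nonneg (fun y _ => le_max_left _ _) x
  have hle : ∀ x, z x ≤ 1 - α := fun x => by
    refine indicator_le_self' (fun y _ => le_max_left _ _) x |>.trans ?_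
    exact max_le (by linarith) (min_le_left _ _)
  have hoff : ∀ x, 1 ≤ ‖x‖ → z x = 0 := fun x hx =>
    indicator_of_notMem (by rw [mem_ball_zero_iff]; exact not_lt.2 hx) _
  have hzind : (ball (0 : EuclideanSpace ℝ (Fin N)) 1).indicator z = z := by
    rw [hzdef, indicator_indicator, inter_self]
  have hzint' : Integrable z (muB N) := by
    refine Integrable.of_bound hmeas.aestronglyMeasurable (1 - α) (Eventually.of_forall fun x => ?_)
    rw [Real.norm_of_nonneg (hnn x)]; exact hle x
  have hzint : Integrable z := by
    rw [← hzind]; exact (integrable_indicator_iff measurableSet_ball).2 hzint'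
  have hUint : Integrable U (muB N) := by
    have : Integrable (fun x => 1 - z x) (muB N) := (integrable_const 1).sub hzint'
    refine this.congr ?_
    filter_upwards [hae] with x hx
    rw [hx]; ring
  have hPint : Integrable (Phi (N := N) α β) (muB N) := by
    have := int_mul_cont (N := N) (f := fun _ => (1:ℝ)) (integrable_const 1) (Phi_cont α β).continuousOn
    simpa using this
  refine ⟨z, 1 - α, ⟨hmeas, hnn, hle, hoff, fun x hx => ?_⟩, hae⟩
  refine AA_concave hzint x fun q hq => ?_
  have ht := hk_test hx hq
  have h1 := hU.2.2 _ ht (fun y _ => hk_nonneg _ _ _ _)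
  have h2 : 0 ≤ lam * ∫ y in ball (0 : EuclideanSpace ℝ (Fin N)) 1, hk 5 q x y / (1 - U y) ^ 2 :=
    mul_nonneg hlam.le (integral_nonneg fun y => div_nonneg (hk_nonneg _ _ _ _) (sq_nonneg _))
  have h3 : ∫ y, z y * biharm (hk 5 q x) y = ∫ y, z y * biharm (hk 5 q x) y ∂(muB N) := by
    rw [← integral_indicator measurableSet_ball]
    congr 1; ext y
    rw [← hzind, indicator_indicator, inter_self]
    by_cases hy : y ∈ ball (0 : EuclideanSpace ℝ (Fin N)) 1
    · simp [indicator_of_mem hy]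
    · simp [indicator_of_notMem hy]
  set P := (ball (0 : EuclideanSpace ℝ (Fin N)) 1).indicator
    (fun y => (1 - (α - β / 2)) + (-(β / 2)) * ‖y‖ ^ 2) with hPdef
  have hPi : Integrable P := by
    refine (integrable_indicator_iff measurableSet_ball).2 ?_
    have : Integrable (fun y => 1 - Phi (N := N) α β y) (muB N) := (integrable_const 1).sub hPint
    refine this.congr (Eventually.of_forall fun y => ?_)
    simp only [Phi]; ring
  have h4 : ∫ y, P y * biharm (hk 5 q x) y = 0 :=
    biharm_zero_of_affine hPi x (fun s hs => AA_quad _ _ x hx hs) hq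
  have h5 : ∫ y, P y * biharm (hk 5 q x) y = ∫ y, (1 - Phi α β y) * biharm (hk 5 q x) y ∂(muB N) := by
    rw [← integral_indicator measurableSet_ball]
    congr 1; ext y
    by_cases hy : y ∈ ball (0 : EuclideanSpace ℝ (Fin N)) 1
    · simp only [hPdef, indicator_of_mem hy, Phi]; ring
    · simp [hPdef, indicator_of_notMem hy]
  have h6 : ∫ y, z y * biharm (hk 5 q x) y ∂(muB N) =
      ∫ y, (1 - Phi α β y) * biharm (hk 5 q x) y ∂(muB N)
        - ∫ y, (U y - Phi α β y) * biharm (hk 5 q x) y ∂(muB N) := by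
    rw [← integral_sub]
    · refine integral_congr_ae ?_
      filter_upwards [hae] with y hy
      rw [hy]; ring
    · exact int_mul_biharm ((integrable_const 1).sub hPint) ht
    · exact int_mul_biharm (hUint.sub hPint) ht
  rw [h3, h6, ← h5, h4]
  have h7 : ∫ y, (U y - Phi α β y) * biharm (hk 5 q x) y ∂(muB N) ≥ 0 := h2.trans h1
  linarith

end SetupZ

section LebesguePts
variable {N : ℕ}

lemma hk_supp {q : ℝ} (hq : 0 < q) {x y : EuclideanSpace ℝ (Fin N)} (h : y ∉ closedBall x (√q)) :
    hk 3 q x y = 0 := by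
  refine tp_of_nonpos (m := 2) ?_
  rw [mem_closedBall, dist_comm, dist_eq_norm, not_le] at h
  have := Real.sq_sqrt hq.le
  have := pow_lt_pow_left₀ h (Real.sqrt_nonneg q) two_ne_zero
  linarith

lemma hk_int {q : ℝ} (hq : 0 < q) (x : EuclideanSpace ℝ (Fin N)) : Integrable (hk 3 q x) := by
  refine (hk_cont 3 q x).integrable_of_hasCompactSupport ?_
  exact HasCompactSupport.intro (isCompact_closedBall x (√q)) fun w hw => hk_supp hq hw

lemma AA_one (x : EuclideanSpace ℝ (Fin N)) {q : ℝ} (hq : 0 < q) : AA (fun _ => 1) x q = kap N := by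
  rw [AA_eq _ _ hq]; simp [kap]

lemma AA_sub_const {z : EuclideanSpace ℝ (Fin N) → ℝ} (hz : Integrable z) (c : ℝ)
    (x : EuclideanSpace ℝ (Fin N)) {q : ℝ} (hq : 0 < q) :
    AA (fun y => z y - c) x q = AA z x q - c * kap N := by
  rw [← AA_one x hq]
  unfold AA JJ
  have : ∀ y, (z y - c) * hk 3 q x y = z y * hk 3 q x y - c * (1 * hk 3 q x y) := fun y => by ring
  simp only [this]
  rw [integral_sub (z_hk_int hz 3 q x) (by simpa using (hk_int hq x).const_mul c), integral_const_mul]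
  ring

lemma rpow_sqrt {q : ℝ} (hq : 0 < q) : q ^ (-((N:ℝ) / 2 + 3)) * q ^ 3 = ((√q) ^ N)⁻¹ := by
  rw [Real.sqrt_eq_rpow, ← Real.rpow_natCast (q ^ (1 / 2 : ℝ)) N, ← Real.rpow_mul hq.le,
    ← Real.rpow_natCast q 3, ← Real.rpow_add hq, ← Real.rpow_neg hq.le]
  congr 1; push_cast; ring

lemma AA_abs_le {f : EuclideanSpace ℝ (Fin N) → ℝ} (hf : LocallyIntegrable f)
    (x : EuclideanSpace ℝ (Fin N)) {q : ℝ} (hq : 0 < q) :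
    |AA f x q| ≤ ((√q) ^ N)⁻¹ * ∫ y in closedBall x (√q), |f y| := by
  have hi : IntegrableOn (fun y => |f y|) (closedBall x (√q)) :=
    (hf.integrableOn_isCompact (isCompact_closedBall x (√q))).abs
  have h1 : |JJ f 3 x q| ≤ q ^ 3 * ∫ y in closedBall x (√q), |f y| := by
    rw [← integral_const_mul, ← integral_indicator measurableSet_closedBall]
    refine norm_integral_le_of_norm_le (f := fun y => f y * hk 3 q x y)
      ((integrable_indicator_iff measurableSet_closedBall).2 (hi.const_mul _)) ?_
    refine Eventually.of_forall fun y => ?_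
    by_cases hy : y ∈ closedBall x (√q)
    · rw [indicator_of_mem hy, norm_mul, Real.norm_of_nonneg (hk_nonneg _ _ _ _), mul_comm]
      refine mul_le_mul_of_nonneg_right ?_ (norm_nonneg _)
      exact (hk_le _ _ _ _).trans (tp_of_nonneg hq.le).le
    · rw [indicator_of_notMem hy, hk_supp hq hy]; simp
  unfold AA
  rw [abs_mul, abs_of_nonneg (Real.rpow_nonneg hq.le _), ← rpow_sqrt hq, mul_assoc]
  exact mul_le_mul_of_nonneg_left h1 (Real.rpow_nonneg hq.le _)

lemma AA_nonneg {z : EuclideanSpace ℝ (Fin N) → ℝ} (hz : ∀ x, 0 ≤ z x)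
    (x : EuclideanSpace ℝ (Fin N)) {q : ℝ} (hq : 0 < q) : 0 ≤ AA z x q :=
  mul_nonneg (Real.rpow_nonneg hq.le _)
    (integral_nonneg fun y => mul_nonneg (hz y) (hk_nonneg _ _ _ _))

/-- Volume of the unit ball. -/
noncomputable def volB (N : ℕ) : ℝ := volume.real (ball (0 : EuclideanSpace ℝ (Fin N)) 1)

lemma volB_pos : 0 < volB N := by
  unfold volB
  exact ENNReal.toReal_pos (measure_ball_pos _ _ one_pos).ne' measure_ball_lt_top.ne

lemma vol_cb (x : EuclideanSpace ℝ (Fin N)) {t : ℝ} (ht : 0 ≤ t) :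
    volume.real (closedBall x t) = t ^ N * volB N := by
  rw [Measure.addHaar_real_closedBall _ _ ht, finrank_euclideanSpace_fin]; rfl

lemma leb_pt {f : EuclideanSpace ℝ (Fin N) → ℝ} (hf : LocallyIntegrable f) :
    ∀ᵐ x, Tendsto (fun t : ℝ => (t ^ N)⁻¹ * ∫ y in closedBall x t, |f y - f x|)
      (nhdsWithin 0 (Ioi 0)) (nhds 0) ∧
     Tendsto (fun t : ℝ => (t ^ N)⁻¹ * ∫ y in closedBall x t, f y)
      (nhdsWithin 0 (Ioi 0)) (nhds (volB N * f x)) := by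
  filter_upwards [IsUnifLocDoublingMeasure.ae_tendsto_average_norm_sub volume hf 1,
    IsUnifLocDoublingMeasure.ae_tendsto_average volume hf 1] with x h1 h2
  have hm : ∀ᶠ t : ℝ in nhdsWithin 0 (Ioi 0), x ∈ closedBall x (1 * t) := by
    filter_upwards [self_mem_nhdsWithin] with t ht
    simp [le_of_lt (mem_Ioi.1 ht)]
  have key : ∀ g : EuclideanSpace ℝ (Fin N) → ℝ, ∀ t : ℝ, 0 < t →
      volB N * (⨍ y in closedBall x t, g y) = (t ^ N)⁻¹ * ∫ y in closedBall x t, g y := by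
    intro g t ht
    rw [setAverage_eq, vol_cb x ht.le, smul_eq_mul, mul_inv]
    have := volB_pos (N := N)
    field_simp
  constructor
  · have := (h1 (fun _ => x) (fun t => t) tendsto_id hm).const_mul (volB N)
    rw [mul_zero] at this
    refine this.congr' ?_
    filter_upwards [self_mem_nhdsWithin] with t ht
    exact key _ t ht
  · have := (h2 (fun _ => x) (fun t => t) tendsto_id hm).const_mul (volB N)
    refine this.congr' ?_
    filter_upwards [self_mem_nhdsWithin] with t ht
    exact key _ t ht

lemma sqrt_tendsto : Tendsto Real.sqrt (nhdsWithin 0 (Ioi 0)) (nhdsWithin 0 (Ioi 0)) := by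
  refine tendsto_nhdsWithin_iff.2 ⟨?_, ?_⟩
  · have := Real.continuous_sqrt.tendsto 0
    rw [Real.sqrt_zero] at this
    exact this.mono_left nhdsWithin_le_nhds
  · filter_upwards [self_mem_nhdsWithin] with t ht
    exact Real.sqrt_pos.2 ht

lemma AA_tendsto {z : EuclideanSpace ℝ (Fin N) → ℝ} (hz : Integrable z) :
    ∀ᵐ x, Tendsto (AA z x) (nhdsWithin 0 (Ioi 0)) (nhds (kap N * z x)) := by
  filter_upwards [leb_pt hz.locallyIntegrable] with x hx
  rw [tendsto_iff_norm_sub_tendsto_zero]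
  refine squeeze_zero' (Eventually.of_forall fun _ => norm_nonneg _) ?_ (hx.1.comp sqrt_tendsto)
  filter_upwards [self_mem_nhdsWithin] with q hq
  have h := AA_abs_le (f := fun y => z y - z x)
    (hz.locallyIntegrable.sub (locallyIntegrable_const _)) x hq
  rw [AA_sub_const hz _ _ hq, mul_comm (z x)] at h
  exact h

lemma hk_cont2 (m : ℕ) (q : ℝ) :
    Continuous (fun p : EuclideanSpace ℝ (Fin N) × EuclideanSpace ℝ (Fin N) => hk m q p.1 p.2) :=
  (tp_cont m).comp (by fun_prop)

lemma prod_int {f z : EuclideanSpace ℝ (Fin N) → ℝ} (hf : Integrable f) (hz : Integrable z) (q : ℝ) :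
    Integrable (fun p : EuclideanSpace ℝ (Fin N) × EuclideanSpace ℝ (Fin N) =>
      f p.1 * z p.2 * hk 3 q p.1 p.2) (volume.prod volume) := by
  refine (hf.mul_prod hz).mul_bdd (c := tp 3 q) (hk_cont2 3 q).aestronglyMeasurable
    (Eventually.of_forall fun y => ?_)
  rw [Real.norm_of_nonneg (hk_nonneg _ _ _ _)]; exact hk_le _ _ _ _

lemma f_AA_int {f z : EuclideanSpace ℝ (Fin N) → ℝ} (hf : Integrable f) (hz : Integrable z) (q : ℝ) :
    Integrable (fun x => f x * AA z x q) := by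
  have := (prod_int hf hz q).integral_prod_left.const_mul (q ^ (-((N:ℝ) / 2 + 3)))
  refine this.congr (Eventually.of_forall fun x => ?_)
  simp only [AA, JJ, mul_assoc]
  rw [integral_const_mul]; ring

lemma AA_symm {f z : EuclideanSpace ℝ (Fin N) → ℝ} (hf : Integrable f) (hz : Integrable z) (q : ℝ) :
    ∫ x, f x * AA z x q = ∫ y, z y * AA f y q := by
  have h := integral_integral_swap (f := fun x y => f x * z y * hk 3 q x y) (prod_int hf hz q)
  have e1 : ∀ x, f x * AA z x q = q ^ (-((N:ℝ) / 2 + 3)) * ∫ y, f x * z y * hk 3 q x y := by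
    intro x
    simp only [AA, JJ, mul_assoc]
    rw [integral_const_mul]; ring
  have e2 : ∀ y, z y * AA f y q = q ^ (-((N:ℝ) / 2 + 3)) * ∫ x, f x * z y * hk 3 q x y := by
    intro y
    have : ∀ x, f x * z y * hk 3 q x y = z y * (f x * hk 3 q y x) := fun x => by
      rw [hk_symm 3 q x y]; ring
    simp only [AA, JJ, this]
    rw [integral_const_mul]; ring
  simp only [e1, e2]
  rw [integral_const_mul, integral_const_mul, h]

end LebesguePts

section StepThree
variable {N : ℕ}

/-- Cutoff. -/
noncomputable def chi (r : ℝ) (y : EuclideanSpace ℝ (Fin N)) : ℝ := tp 2 (r ^ 2 - ‖y‖ ^ 2)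

lemma chi_cont (r : ℝ) : Continuous (chi (N := N) r) := (tp_cont 2).comp (by fun_prop)

lemma chi_nonneg (r : ℝ) (y : EuclideanSpace ℝ (Fin N)) : 0 ≤ chi r y := tp_nonneg _ _

lemma chi_zero {r : ℝ} (hr : 0 < r) {y : EuclideanSpace ℝ (Fin N)} (h : r ≤ ‖y‖) : chi r y = 0 :=
  tp_of_nonpos (m := 1) (by nlinarith)

lemma chi_int {r : ℝ} (hr : 0 < r) : Integrable (chi (N := N) r) := by
  refine (chi_cont r).integrable_of_hasCompactSupport ?_
  refine HasCompactSupport.intro (isCompact_closedBall 0 r) fun w hw => chi_zero hr ?_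
  simp only [mem_closedBall, dist_zero_right, not_le] at hw
  exact hw.le

lemma tp2_diff (u d e : ℝ) (he : 0 ≤ e) :
    tp 2 (u - e - d) + tp 2 (u - e + d) ≤ 2 * tp 2 u + 2 * d ^ 2 := by
  have h1 : tp 2 (u - e - d) ≤ tp 2 (u - d) := tp_mono 2 (by linarith)
  have h2 : tp 2 (u - e + d) ≤ tp 2 (u + d) := tp_mono 2 (by linarith)
  have h3 : ∀ t : ℝ, tp 2 t ≤ t ^ 2 := fun t => by
    rcases le_total 0 t with h | h
    · rw [tp_of_nonneg h]
    · rw [tp_of_nonpos h]; positivity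
  rcases le_total 0 u with h | h
  · rw [tp_of_nonneg h]
    nlinarith [h3 (u - d), h3 (u + d)]
  · have h4 : tp 2 (u - d) ≤ tp 2 (-d) := tp_mono 2 (by linarith)
    have h5 : tp 2 (u + d) ≤ tp 2 d := tp_mono 2 (by linarith)
    nlinarith [h3 (-d), h3 d, tp_nonneg 2 u]

lemma chi_diff (r : ℝ) (y h : EuclideanSpace ℝ (Fin N)) :
    chi r (y + h) + chi r (y - h) ≤ 2 * chi r y + 8 * (‖y‖ * ‖h‖) ^ 2 := by
  have h1 := tp2_diff (r ^ 2 - ‖y‖ ^ 2) (2 * inner ℝ y h) (‖h‖ ^ 2) (sq_nonneg _)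
  have h2 : (inner ℝ y h : ℝ) ^ 2 ≤ (‖y‖ * ‖h‖) ^ 2 := sq_le_sq' (by
      have := abs_real_inner_le_norm y h; rw [abs_le] at this; linarith [this.1])
      (real_inner_le_norm y h)
  unfold chi
  rw [norm_add_sq_real, norm_sub_sq_real]
  have e1 : r ^ 2 - (‖y‖ ^ 2 + 2 * inner ℝ y h + ‖h‖ ^ 2)
      = r ^ 2 - ‖y‖ ^ 2 - ‖h‖ ^ 2 - 2 * inner ℝ y h := by ring
  have e2 : r ^ 2 - (‖y‖ ^ 2 - 2 * inner ℝ y h + ‖h‖ ^ 2)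
      = r ^ 2 - ‖y‖ ^ 2 - ‖h‖ ^ 2 + 2 * inner ℝ y h := by ring
  rw [e1, e2]
  nlinarith

lemma AA_chi (r : ℝ) {y : EuclideanSpace ℝ (Fin N)} (hy : ‖y‖ ≤ 1) {q : ℝ} (hq : 0 < q) :
    AA (chi r) y q ≤ kap N * chi r y + 4 * q * kap N := by
  have hs := Real.sqrt_nonneg q
  have e1 : AA (chi r) y q = ∫ w, kk w * chi r (y + √q • w) := AA_eq _ _ hq
  have e2 : AA (chi r) y q = ∫ w, kk w * chi r (y - √q • w) := by
    rw [e1, ← integral_neg_eq_self]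
    simp only [kk_neg, smul_neg, sub_eq_add_neg]
  have hcc := chi_cont (N := N) r
  have i1 : Integrable (fun w : EuclideanSpace ℝ (Fin N) => kk w * chi r (y + √q • w)) :=
    kk_int (hcc.comp (by fun_prop))
  have i2 : Integrable (fun w : EuclideanSpace ℝ (Fin N) => kk w * chi r (y - √q • w)) :=
    kk_int (hcc.comp (by fun_prop))
  have h : AA (chi r) y q + AA (chi r) y q ≤ (2 * chi r y + 8 * q) * kap N := by
    nth_rewrite 1 [e1]
    rw [e2, ← integral_add i1 i2]
    unfold kap
    rw [← integral_const_mul]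
    refine integral_mono (i1.add i2) (kk_int1.const_mul _) fun w => ?_
    change kk w * chi r (y + √q • w) + kk w * chi r (y - √q • w) ≤ (2 * chi r y + 8 * q) * kk w
    rcases le_total 1 ‖w‖ with hw | hw
    · rw [kk_zero hw]; simp
    · rw [← mul_add, mul_comm]
      refine mul_le_mul_of_nonneg_right ((chi_diff r y _).trans ?_) (kk_nonneg w)
      have : (‖y‖ * ‖√q • w‖) ^ 2 ≤ q := by
        rw [norm_smul, Real.norm_of_nonneg hs]
        calc (‖y‖ * (√q * ‖w‖)) ^ 2 ≤ (1 * (√q * 1)) ^ 2 := by gcongr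
          _ = q := by rw [mul_one, one_mul, Real.sq_sqrt hq.le]
      linarith
  linarith

lemma ZZ.int {z : EuclideanSpace ℝ (Fin N) → ℝ} {M : ℝ} (hZ : ZZ z M) : Integrable z := by
  have hind : (ball (0 : EuclideanSpace ℝ (Fin N)) 1).indicator z = z := by
    ext x
    by_cases hx : x ∈ ball (0 : EuclideanSpace ℝ (Fin N)) 1
    · rw [indicator_of_mem hx]
    · rw [indicator_of_notMem hx, hZ.off x (by simpa using hx)]
  rw [← hind]
  refine (integrable_indicator_iff measurableSet_ball).2 ?_
  refine Integrable.of_bound (μ := muB N) hZ.meas.aestronglyMeasurable M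
    (Eventually.of_forall fun x => ?_)
  rw [Real.norm_of_nonneg (hZ.nonneg x)]; exact hZ.le x

/-- Slope inequality at Lebesgue points. -/
lemma ZZ.slope {z : EuclideanSpace ℝ (Fin N) → ℝ} {M : ℝ} (hZ : ZZ z M) :
    ∀ᵐ x, ‖x‖ < 1 → ∀ q q', 0 < q → q ≤ q' → q' < (1 - ‖x‖) ^ 2 →
      q * (AA z x q' - kap N * z x) ≤ q' * (AA z x q - kap N * z x) := by
  filter_upwards [AA_tendsto hZ.int] with x hx h1 q q' hq hqq hq'
  exact concave_slope (hZ.conc x h1) hx hq hqq hq'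

lemma ZZ.step3 {z : EuclideanSpace ℝ (Fin N) → ℝ} {M : ℝ} (hZ : ZZ z M) {r : ℝ} (hr : 0 < r)
    (hr1 : r < 1) : ∃ C, ∀ q, 0 < q → q ≤ (1 - r) ^ 2 →
      ∫ x, {x | z x = 0}.indicator (chi r) x * AA z x q ≤ C * q := by
  have hzi := hZ.int
  have hci := chi_int (N := N) hr
  have hcz : Integrable (fun x => chi r x * z x) := by
    refine hci.mul_bdd (c := M) hZ.meas.aestronglyMeasurable (Eventually.of_forall fun x => ?_)
    rw [Real.norm_of_nonneg (hZ.nonneg x)]; exact hZ.le x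
  have hE : MeasurableSet {x | z x = 0} := hZ.meas (measurableSet_singleton 0)
  refine ⟨4 * kap N * (∫ x, z x) + kap N * M / (1 - r) ^ 2 * ∫ x, chi (N := N) r x, fun q hq hq0 => ?_⟩
  have hQ : 0 < (1 - r) ^ 2 := by have : 0 < 1 - r := by linarith
                                  positivity
  have hκ := kap_pos (N := N)
  have h1 : ∫ x, chi r x * AA z x q ≤ kap N * (∫ x, chi r x * z x) + 4 * q * kap N * ∫ x, z x := by
    rw [AA_symm hci hzi, ← integral_const_mul, ← integral_const_mul, ← integral_add]
    · refine integral_mono (f_AA_int hzi hci q) ((hcz.const_mul _).add (hzi.const_mul _)) fun y => ?_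
      change z y * AA (chi r) y q ≤ kap N * (chi r y * z y) + 4 * q * kap N * z y
      rcases le_total 1 ‖y‖ with hy | hy
      · rw [hZ.off y hy]; simp
      · have := mul_le_mul_of_nonneg_left (AA_chi r hy hq) (hZ.nonneg y)
        linarith
    · exact hcz.const_mul _
    · exact hzi.const_mul _
  have i1 : Integrable (fun x => {x | z x = 0}.indicator (chi r) x * AA z x q) :=
    f_AA_int (hci.indicator hE) hzi q
  have h2 : ∫ x, {x | z x = 0}.indicator (chi r) x * AA z x q ≤
      ∫ x, (chi r x * AA z x q - kap N * (chi r x * z x)) + q * (kap N * M / (1 - r) ^ 2) * chi r x := by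
    refine integral_mono_ae i1 (((f_AA_int hci hzi q).sub (hcz.const_mul _)).add (hci.const_mul _)) ?_
    filter_upwards [hZ.slope] with x hx
    change {x | z x = 0}.indicator (chi r) x * AA z x q ≤
      (chi r x * AA z x q - kap N * (chi r x * z x)) + q * (kap N * M / (1 - r) ^ 2) * chi r x
    rcases le_or_gt r ‖x‖ with hxr | hxr
    · have : {x | z x = 0}.indicator (chi r) x = 0 := by
        rw [indicator_apply, chi_zero hr hxr, ite_self]
      rw [this, chi_zero hr hxr]; simp
    · have hs := hx (by linarith) q ((1 - r) ^ 2) hq hq0 (by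
        refine pow_lt_pow_left₀ (by linarith) (by linarith) two_ne_zero)
      have hA := AA_nonneg hZ.nonneg x hQ
      have hzM : kap N * z x ≤ kap N * M := mul_le_mul_of_nonneg_left (hZ.le x) hκ.le
      have hM0 : 0 ≤ M := (hZ.nonneg x).trans (hZ.le x)
      have hs2 : - (q * (kap N * M / (1 - r) ^ 2)) ≤ AA z x q - kap N * z x := by
        have h3 : q * (- (kap N * M)) ≤ (1 - r) ^ 2 * (AA z x q - kap N * z x) :=
          le_trans (mul_le_mul_of_nonneg_left (by linarith) hq.le) hs
        have e : - (q * (kap N * M / (1 - r) ^ 2)) = q * (- (kap N * M)) / (1 - r) ^ 2 := by ring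
        rw [e, div_le_iff₀ hQ]; linarith
      have hc0 := chi_nonneg r x
      by_cases hz0 : z x = 0
      · rw [indicator_of_mem (show x ∈ {x | z x = 0} from hz0), hz0]
        have : 0 ≤ q * (kap N * M / (1 - r) ^ 2) * chi r x := by positivity
        linarith
      · rw [indicator_of_notMem (show x ∉ {x | z x = 0} from hz0)]
        have := mul_le_mul_of_nonneg_left hs2 hc0
        linarith
  have h3 : ∫ x, (chi r x * AA z x q - kap N * (chi r x * z x)) + q * (kap N * M / (1 - r) ^ 2) * chi r x
      = (∫ x, chi r x * AA z x q) - kap N * (∫ x, chi r x * z x)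
        + q * (kap N * M / (1 - r) ^ 2) * ∫ x, chi (N := N) r x := by
    have j1 : Integrable (fun x => chi r x * AA z x q - kap N * (chi r x * z x)) :=
      (f_AA_int hci hzi q).sub (hcz.const_mul _)
    rw [integral_add j1 (hci.const_mul _), integral_sub (f_AA_int hci hzi q) (hcz.const_mul _),
      integral_const_mul, integral_const_mul]
  rw [h3] at h2
  linarith

end StepThree

section StepThreeB
variable {N : ℕ}

lemma ZZ.step3b {z : EuclideanSpace ℝ (Fin N) → ℝ} {M : ℝ} (hZ : ZZ z M) {r' : ℝ} (hr' : 0 < r')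
    (hr1' : r' < 1) : ∃ (q0 : ℝ) (g : EuclideanSpace ℝ (Fin N) → ℝ), 0 < q0 ∧ Integrable g ∧
      (∀ x, 0 ≤ g x) ∧ (∀ᵐ x, z x = 0 → ‖x‖ < r' →
        (∀ q, 0 < q → q ≤ q0 → AA z x q ≤ q * g x) ∧
        Tendsto (fun n : ℕ => AA z x (q0 / (n + 1)) / (q0 / (n + 1))) atTop (nhds (g x))) := by
  set r := (1 + r') / 2 with hr
  have hr0 : 0 < r := by rw [hr]; linarith
  have hr1 : r < 1 := by rw [hr]; linarith
  have hrr : r' < r := by rw [hr]; linarith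
  set q0 := (1 - r) ^ 2 with hq0
  have hq0p : 0 < q0 := by have : 0 < 1 - r := by linarith
                           positivity
  obtain ⟨C, hC⟩ := hZ.step3 hr0 hr1
  have hzi := hZ.int
  have hE : MeasurableSet {x | z x = 0} := hZ.meas (measurableSet_singleton 0)
  have hci : Integrable ({x | z x = 0}.indicator (chi (N := N) r)) := (chi_int hr0).indicator hE
  set qn : ℕ → ℝ := fun n => q0 / (n + 1) with hqn
  have qnp : ∀ n, 0 < qn n := fun n => by simp only [hqn]; positivity
  have qnle : ∀ n, qn n ≤ q0 := fun n => div_le_self hq0p.le (by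
    have : (0:ℝ) ≤ n := Nat.cast_nonneg n
    linarith)
  have qnanti : ∀ m n, m ≤ n → qn n ≤ qn m := fun m n h => by
    simp only [hqn]
    have : (m:ℝ) ≤ n := Nat.cast_le.2 h
    gcongr
  set u : ℕ → EuclideanSpace ℝ (Fin N) → ℝ := fun n x =>
    {x | z x = 0}.indicator (chi r) x * AA z x (qn n) * (qn n)⁻¹ with hu
  have hui : ∀ n, Integrable (u n) := fun n => (f_AA_int hci hzi (qn n)).mul_const _
  have hun : ∀ n x, 0 ≤ u n x := fun n x => by
    refine mul_nonneg (mul_nonneg (indicator_nonneg (fun y _ => chi_nonneg r y) x)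
      (AA_nonneg hZ.nonneg x (qnp n))) (inv_nonneg.2 (qnp n).le)
  have huC : ∀ n, ∫ x, u n x ≤ C := fun n => by
    simp only [hu]
    rw [integral_mul_const]
    have := hC (qn n) (qnp n) (qnle n)
    calc _ ≤ C * qn n * (qn n)⁻¹ := mul_le_mul_of_nonneg_right this (inv_nonneg.2 (qnp n).le)
      _ = C := by rw [mul_assoc, mul_inv_cancel₀ (qnp n).ne', mul_one]
  -- monotonicity
  have hmono0 : ∀ᵐ x, z x = 0 → ‖x‖ < r → ∀ q q', 0 < q → q ≤ q' → q' ≤ q0 →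
      AA z x q' / q' ≤ AA z x q / q := by
    filter_upwards [hZ.slope] with x hx hz0 hxr q q' hq hqq hq'
    have h := hx (by linarith) q q' hq hqq (hq'.trans_lt
      (pow_lt_pow_left₀ (by linarith) (by linarith) two_ne_zero))
    rw [hz0, mul_zero, sub_zero, sub_zero] at h
    rw [div_le_div_iff₀ (by linarith) hq]; linarith
  have hmono : ∀ᵐ x, Monotone (fun n => ENNReal.ofReal (u n x)) := by
    filter_upwards [hmono0] with x hx m n hmn
    refine ENNReal.ofReal_le_ofReal ?_
    simp only [hu, indicator_apply, mem_setOf_eq]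
    split_ifs with hz0
    · rcases le_or_gt r ‖x‖ with h | h
      · rw [chi_zero hr0 h]; simp
      · rw [mul_assoc, mul_assoc, ← div_eq_mul_inv, ← div_eq_mul_inv]
        exact mul_le_mul_of_nonneg_left (hx hz0 h _ _ (qnp n) (qnanti m n hmn) (qnle m)) (chi_nonneg r x)
    · simp
  have hlint : ∫⁻ x, ⨆ n, ENNReal.ofReal (u n x) ≤ ENNReal.ofReal C := by
    rw [lintegral_iSup' (fun n => (hui n).1.aemeasurable.ennreal_ofReal) hmono]
    refine iSup_le fun n => ?_
    rw [← ofReal_integral_eq_lintegral_ofReal (hui n) (Eventually.of_forall (hun n))]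
    exact ENNReal.ofReal_le_ofReal (huC n)
  have hFm : AEMeasurable (fun x => ⨆ n, ENNReal.ofReal (u n x)) :=
    AEMeasurable.iSup fun n => (hui n).1.aemeasurable.ennreal_ofReal
  have hne : ∫⁻ x, ⨆ n, ENNReal.ofReal (u n x) ≠ ⊤ := (hlint.trans_lt ENNReal.ofReal_lt_top).ne
  have hGi : Integrable (fun x => (⨆ n, ENNReal.ofReal (u n x)).toReal) :=
    integrable_toReal_of_lintegral_ne_top hFm hne
  have hfin := ae_lt_top' hFm hne
  set G := fun x => (⨆ n, ENNReal.ofReal (u n x)).toReal with hG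
  have hc : 0 < r ^ 2 - r' ^ 2 := by nlinarith
  have hchi : ∀ x : EuclideanSpace ℝ (Fin N), ‖x‖ < r' → (r ^ 2 - r' ^ 2) ^ 2 ≤ chi r x := by
    intro x hx
    have h2 : ‖x‖ ^ 2 ≤ r' ^ 2 := pow_le_pow_left₀ (norm_nonneg x) hx.le 2
    unfold chi
    rw [tp_of_nonneg (by linarith)]
    exact pow_le_pow_left₀ hc.le (by linarith) 2
  have hgi : Integrable ((ball (0 : EuclideanSpace ℝ (Fin N)) r').indicator (fun x => G x * (chi r x)⁻¹)) := by
    rw [integrable_indicator_iff measurableSet_ball]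
    refine Integrable.mul_bdd (c := ((r ^ 2 - r' ^ 2) ^ 2)⁻¹) hGi.integrableOn
      (chi_cont r).measurable.inv.aestronglyMeasurable ?_
    filter_upwards [ae_restrict_mem measurableSet_ball] with x hx
    rw [mem_ball_zero_iff] at hx
    have := hchi x hx
    rw [Real.norm_of_nonneg (inv_nonneg.2 (chi_nonneg r x))]
    exact inv_anti₀ (by positivity) this
  refine ⟨q0, _, hq0p, hgi, fun x => indicator_nonneg (fun y _ =>
    mul_nonneg ENNReal.toReal_nonneg (inv_nonneg.2 (chi_nonneg r y))) x, ?_⟩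
  filter_upwards [hmono0, hmono, hfin] with x h1 h2 h3 hz0 hxr'
  have hcx : 0 < chi r x := lt_of_lt_of_le (by positivity) (hchi x hxr')
  rw [indicator_of_mem (by rwa [mem_ball_zero_iff])]
  have hux : ∀ n, u n x * (chi r x)⁻¹ = AA z x (qn n) / qn n := fun n => by
    simp only [hu]
    rw [indicator_of_mem (show x ∈ {x | z x = 0} from hz0)]
    field_simp
  have htend : Tendsto (fun n => AA z x (qn n) / qn n) atTop (nhds (G x * (chi r x)⁻¹)) := by
    have t1 := tendsto_atTop_iSup h2
    have t2 := (ENNReal.tendsto_toReal h3.ne).comp t1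
    have t3 := t2.mul_const (chi r x)⁻¹
    refine t3.congr fun n => ?_
    rw [← hux n]
    simp only [Function.comp]
    rw [ENNReal.toReal_ofReal (hun n x)]
  refine ⟨fun q hq hqq => ?_, htend⟩
  have hev : ∀ᶠ n : ℕ in atTop, AA z x q / q ≤ AA z x (qn n) / qn n := by
    have ht : Tendsto qn atTop (nhds 0) := by
      have := tendsto_one_div_add_atTop_nhds_zero_nat (𝕜 := ℝ) |>.const_mul q0
      rw [mul_zero] at this
      refine this.congr fun n => ?_
      simp only [hqn]; ring
    filter_upwards [ht.eventually (Iio_mem_nhds hq)] with n hn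
    exact h1 hz0 (by linarith) _ _ (qnp n) (le_of_lt hn) hqq
  have := ge_of_tendsto htend hev
  rw [div_le_iff₀ hq] at this
  linarith

end StepThreeB

section StepFour
variable {N : ℕ}

lemma ZZ.step4a {z : EuclideanSpace ℝ (Fin N) → ℝ} {M : ℝ} (hZ : ZZ z M)
    {g : EuclideanSpace ℝ (Fin N) → ℝ} (hgi : Integrable g) (hg0 : ∀ x, 0 ≤ g x) {q0 r' : ℝ}
    (hg : ∀ᵐ x, z x = 0 → ‖x‖ < r' → ∀ q, 0 < q → q ≤ q0 → AA z x q ≤ q * g x)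
    {x0 : EuclideanSpace ℝ (Fin N)} {ε t : ℝ} (hε : 0 < ε) (hε1 : ε ≤ 1) (ht : 0 < t)
    (ha : 2 * t < r' - ‖x0‖) (hb : t ^ 2 ≤ q0)
    (hc : ((2 * t) ^ N)⁻¹ * ∫ y in closedBall x0 (2 * t), {x | z x = 0}ᶜ.indicator (fun _ => (1:ℝ)) y ≤
      kap N / 2 * (ε / 2) ^ N) :
    AA z x0 (t ^ 2) / t ^ 2 ≤ (2 / kap N * ε ^ 2 * 2 ^ N) *
      (((2 * t) ^ N)⁻¹ * ∫ y in closedBall x0 (2 * t), g y) := by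
  have hzi := hZ.int
  have hE : MeasurableSet {x | z x = 0} := hZ.meas (measurableSet_singleton 0)
  have hκ := kap_pos (N := N)
  set D := closedBall x0 (2 * t) with hD
  have hDm : MeasurableSet D := measurableSet_closedBall
  set s := (ε * t) ^ 2 with hs
  have hs0 : 0 < s := by positivity
  have hsq : √s = ε * t := Real.sqrt_sq (by positivity)
  have hsq0 : s ≤ q0 := by
    refine le_trans ?_ hb
    exact pow_le_pow_left₀ (by positivity) (by nlinarith) 2
  set f := ({x | z x = 0} ∩ D).indicator (fun _ : EuclideanSpace ℝ (Fin N) => (1:ℝ)) with hf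
  have hDfin : volume D ≠ ⊤ := measure_closedBall_lt_top.ne
  have hfi : Integrable f := by
    refine (integrable_indicator_iff (hE.inter hDm)).2 ?_
    exact integrableOn_const (ne_top_of_le_ne_top hDfin (measure_mono inter_subset_right))
  have h1 : ∫ x, f x * AA z x s ≤ s * ∫ y in D, g y := by
    rw [← integral_const_mul, ← integral_indicator hDm]
    refine integral_mono_ae (f_AA_int hfi hzi s)
      ((integrable_indicator_iff hDm).2 (hgi.integrableOn.const_mul _)) ?_
    filter_upwards [hg] with x hx
    by_cases hxm : x ∈ {x | z x = 0} ∩ D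
    · rw [hf, indicator_of_mem hxm, indicator_of_mem hxm.2, one_mul]
      refine hx hxm.1 ?_ s hs0 hsq0
      have h2 : ‖x - x0‖ ≤ 2 * t := by rw [← dist_eq_norm]; exact hxm.2
      have := norm_add_le (x - x0) x0
      rw [sub_add_cancel] at this
      linarith
    · rw [hf, indicator_of_notMem hxm, zero_mul]
      exact indicator_nonneg (fun y _ => mul_nonneg hs0.le (hg0 y)) x
  have h2 : ∀ y ∈ closedBall x0 t, kap N / 2 ≤ AA f y s := by
    intro y hy
    have h3 := AA_abs_le (f := fun y => f y - 1)
      (hfi.locallyIntegrable.sub (locallyIntegrable_const _)) y hs0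
    rw [AA_sub_const hfi _ _ hs0, one_mul, hsq] at h3
    have hsub : closedBall y (ε * t) ⊆ D := by
      refine closedBall_subset_closedBall' ?_
      rw [mem_closedBall] at hy
      nlinarith
    have hei : IntegrableOn ({x | z x = 0}ᶜ.indicator (fun _ => (1:ℝ))) D :=
      (integrableOn_const hDfin).indicator hE.compl
    have h4 : ∫ y in closedBall y (ε * t), |f y - 1| ≤
        ∫ y in D, {x | z x = 0}ᶜ.indicator (fun _ => (1:ℝ)) y := by
      calc ∫ y in closedBall y (ε * t), |f y - 1| =
          ∫ y in closedBall y (ε * t), {x | z x = 0}ᶜ.indicator (fun _ => (1:ℝ)) y := by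
            refine setIntegral_congr_fun measurableSet_closedBall fun w hw => ?_
            have hwD := hsub hw
            by_cases hwE : w ∈ {x | z x = 0}
            · rw [indicator_of_notMem (by simpa using hwE)]
              simp only [hf]
              rw [indicator_of_mem (show w ∈ {x | z x = 0} ∩ D from ⟨hwE, hwD⟩)]; simp
            · rw [indicator_of_mem (by simpa using hwE)]
              simp only [hf]
              rw [indicator_of_notMem (fun h => hwE h.1)]; simp
        _ ≤ _ := setIntegral_mono_set hei
            (Eventually.of_forall fun w => indicator_nonneg (fun _ _ => zero_le_one) w)
            (Eventually.of_forall hsub)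
    have h5 : ((ε * t) ^ N)⁻¹ * ∫ y in closedBall y (ε * t), |f y - 1| ≤ kap N / 2 := by
      calc _ ≤ ((ε * t) ^ N)⁻¹ * ∫ y in D, {x | z x = 0}ᶜ.indicator (fun _ => (1:ℝ)) y :=
            mul_le_mul_of_nonneg_left h4 (by positivity)
        _ = ((ε / 2) ^ N)⁻¹ * (((2 * t) ^ N)⁻¹ *
              ∫ y in D, {x | z x = 0}ᶜ.indicator (fun _ => (1:ℝ)) y) := by
            rw [← mul_assoc, ← mul_inv, ← mul_pow]
            rw [show ε / 2 * (2 * t) = ε * t by ring]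
        _ ≤ ((ε / 2) ^ N)⁻¹ * (kap N / 2 * (ε / 2) ^ N) := mul_le_mul_of_nonneg_left hc (by positivity)
        _ = _ := by
            have : (ε / 2) ^ N ≠ 0 := by positivity
            field_simp
    have := (abs_le.1 (h3.trans h5)).1
    linarith
  have h6 : kap N / 2 * ∫ y in closedBall x0 t, z y ≤ ∫ y, z y * AA f y s := by
    rw [← integral_const_mul, ← integral_indicator measurableSet_closedBall]
    refine integral_mono ((integrable_indicator_iff measurableSet_closedBall).2
      (hzi.integrableOn.const_mul _)) (f_AA_int hzi hfi s) fun y => ?_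
    by_cases hy : y ∈ closedBall x0 t
    · rw [indicator_of_mem hy, mul_comm]
      exact mul_le_mul_of_nonneg_left (h2 y hy) (hZ.nonneg y)
    · rw [indicator_of_notMem hy]
      refine mul_nonneg (hZ.nonneg y) (AA_nonneg (fun w => ?_) y hs0)
      exact indicator_nonneg (fun _ _ => zero_le_one) w
  rw [← AA_symm hfi hzi] at h6
  have h7 := AA_abs_le hzi.locallyIntegrable x0 (q := t ^ 2) (by positivity)
  rw [Real.sqrt_sq ht.le, abs_of_nonneg (AA_nonneg hZ.nonneg x0 (by positivity))] at h7
  simp only [abs_of_nonneg (hZ.nonneg _)] at h7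
  have h8 : ∫ y in closedBall x0 t, z y ≤ 2 / kap N * (s * ∫ y in D, g y) := by
    rw [div_mul_eq_mul_div, le_div_iff₀ hκ]
    linarith
  rw [div_le_iff₀ (by positivity)]
  calc AA z x0 (t ^ 2) ≤ (t ^ N)⁻¹ * (2 / kap N * (s * ∫ y in D, g y)) :=
        h7.trans (mul_le_mul_of_nonneg_left h8 (by positivity))
    _ = _ := by
        rw [hs, mul_pow 2 t N]
        field_simp

lemma ZZ.step4b {z : EuclideanSpace ℝ (Fin N) → ℝ} {M : ℝ} (hZ : ZZ z M) {r' : ℝ} (hr' : 0 < r')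
    (hr1' : r' < 1) : ∀ᵐ x, z x = 0 → ‖x‖ < r' → ∃ q0 > 0, ∀ q, 0 < q → q ≤ q0 → AA z x q = 0 := by
  obtain ⟨q0, g, hq0, hgi, hg0, hae⟩ := hZ.step3b hr' hr1'
  have hE : MeasurableSet {x | z x = 0} := hZ.meas (measurableSet_singleton 0)
  have hκ := kap_pos (N := N)
  have hV := volB_pos (N := N)
  have hel : LocallyIntegrable ({x | z x = 0}ᶜ.indicator (fun _ => (1:ℝ))) :=
    (locallyIntegrable_const (1:ℝ)).indicator hE.compl
  filter_upwards [hae, leb_pt hgi.locallyIntegrable, leb_pt hel] with x0 h1 h2 h3 hz0 hxr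
  obtain ⟨h1a, h1b⟩ := h1 hz0 hxr
  refine ⟨q0, hq0, fun q hq hqq => le_antisymm ?_ (AA_nonneg hZ.nonneg x0 hq)⟩
  suffices hgx : g x0 ≤ 0 by
    refine (h1a q hq hqq).trans ?_
    exact mul_nonpos_of_nonneg_of_nonpos hq.le hgx
  set C := 2 / kap N * 2 ^ N * volB N with hC
  have hC0 : 0 < C := by positivity
  set ε := min 1 (1 / (2 * C)) with hεd
  have hε : 0 < ε := lt_min one_pos (by positivity)
  have hε1 : ε ≤ 1 := min_le_left _ _
  have hεC : ε ^ 2 * C ≤ 1 / 2 := by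
    have h5 : ε ≤ 1 / (2 * C) := min_le_right _ _
    calc ε ^ 2 * C ≤ ε * C := by nlinarith [mul_nonneg hε.le hC0.le]
      _ ≤ 1 / (2 * C) * C := mul_le_mul_of_nonneg_right h5 hC0.le
      _ = 1 / 2 := by field_simp
  -- the sequence of radii
  have ht0 : Tendsto (fun n : ℕ => q0 / ((n:ℝ) + 1)) atTop (nhdsWithin 0 (Ioi 0)) := by
    refine tendsto_nhdsWithin_iff.2 ⟨?_, Eventually.of_forall fun n => ?_⟩
    · have := tendsto_one_div_add_atTop_nhds_zero_nat (𝕜 := ℝ) |>.const_mul q0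
      rw [mul_zero] at this
      refine this.congr fun n => ?_
      ring
    · simp only [mem_Ioi]; positivity
  have ht1 := sqrt_tendsto.comp ht0
  have ht2 : Tendsto (fun t : ℝ => 2 * t) (nhdsWithin 0 (Ioi 0)) (nhdsWithin 0 (Ioi 0)) := by
    refine tendsto_nhdsWithin_iff.2 ⟨?_, ?_⟩
    · have : Tendsto (fun t : ℝ => 2 * t) (nhds 0) (nhds (2 * 0)) := tendsto_id.const_mul 2
      rw [mul_zero] at this
      exact this.mono_left nhdsWithin_le_nhds
    · filter_upwards [self_mem_nhdsWithin] with t ht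
      have : 0 < t := ht
      simp only [mem_Ioi]; positivity
  have h2' := h2.2.comp ht2
  have h3' := h3.2.comp ht2
  rw [indicator_of_notMem (by simpa using hz0), mul_zero] at h3'
  have hev : ∀ᶠ t : ℝ in nhdsWithin 0 (Ioi 0), AA z x0 (t ^ 2) / t ^ 2 ≤ (2 / kap N * ε ^ 2 * 2 ^ N) *
      (((2 * t) ^ N)⁻¹ * ∫ y in closedBall x0 (2 * t), g y) := by
    have e1 : ∀ᶠ t : ℝ in nhdsWithin 0 (Ioi 0), 2 * t < r' - ‖x0‖ :=
      (tendsto_nhds_of_tendsto_nhdsWithin ht2).eventually (Iio_mem_nhds (by linarith))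
    have e2 : ∀ᶠ t : ℝ in nhdsWithin 0 (Ioi 0), t ^ 2 ≤ q0 := by
      have : Tendsto (fun t : ℝ => t ^ 2) (nhdsWithin 0 (Ioi 0)) (nhds 0) := by
        have := (continuous_pow 2).tendsto (0:ℝ)
        rw [zero_pow two_ne_zero] at this
        exact this.mono_left nhdsWithin_le_nhds
      filter_upwards [this.eventually (Iio_mem_nhds hq0)] with t ht using le_of_lt ht
    have e3 := h3'.eventually (Iio_mem_nhds (show 0 < kap N / 2 * (ε / 2) ^ N by positivity))
    filter_upwards [e1, e2, e3, self_mem_nhdsWithin] with t a1 a2 a3 a4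
    exact hZ.step4a hgi hg0 (hae.mono fun x hx a b => (hx a b).1) hε hε1 a4 a1 a2 (le_of_lt a3)
  have hlim1 := (h2'.const_mul (2 / kap N * ε ^ 2 * 2 ^ N)).comp ht1
  have hfinal := le_of_tendsto_of_tendsto h1b hlim1 (by
    filter_upwards [ht1.eventually hev] with n hn
    simp only [Function.comp] at hn ⊢
    rw [Real.sq_sqrt (by positivity)] at hn
    exact hn)
  have e : 2 / kap N * ε ^ 2 * 2 ^ N * (volB N * g x0) = ε ^ 2 * C * g x0 := by rw [hC]; ring
  rw [e] at hfinal
  have := mul_le_mul_of_nonneg_right hεC (hg0 x0)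
  linarith

lemma ZZ.step4 {z : EuclideanSpace ℝ (Fin N) → ℝ} {M : ℝ} (hZ : ZZ z M) :
    ∀ᵐ x, z x = 0 → ‖x‖ < 1 → ∃ q0 > 0, ∀ q, 0 < q → q ≤ q0 → AA z x q = 0 := by
  have h : ∀ n : ℕ, ∀ᵐ x, z x = 0 → ‖x‖ < 1 - 1 / ((n:ℝ) + 2) →
      ∃ q0 > 0, ∀ q, 0 < q → q ≤ q0 → AA z x q = 0 := fun n => by
    have hn : (0:ℝ) ≤ n := Nat.cast_nonneg n
    refine hZ.step4b ?_ ?_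
    · have : 1 / ((n:ℝ) + 2) < 1 := by rw [div_lt_one (by positivity)]; linarith
      linarith
    · have : 0 < 1 / ((n:ℝ) + 2) := by positivity
      linarith
  filter_upwards [ae_all_iff.2 h] with x hx hz0 hx1
  obtain ⟨n, hn⟩ := exists_nat_one_div_lt (show 0 < 1 - ‖x‖ by linarith)
  refine hx n hz0 ?_
  have : 1 / ((n:ℝ) + 2) ≤ 1 / ((n:ℝ) + 1) := by gcongr; norm_num
  linarith

end StepFour

section StepFive
variable {N : ℕ}

lemma ZZ.prop {z : EuclideanSpace ℝ (Fin N) → ℝ} {M : ℝ} (hZ : ZZ z M)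
    {x : EuclideanSpace ℝ (Fin N)} (hx : ‖x‖ < 1)
    (h : ∃ q0 > 0, ∀ q, 0 < q → q ≤ q0 → AA z x q = 0) :
    ∀ᵐ y, y ∈ ball x (1 - ‖x‖) → z y = 0 := by
  obtain ⟨q0, hq0, h⟩ := h
  have hx' : 0 < 1 - ‖x‖ := by linarith
  have ht : Tendsto (AA z x) (nhdsWithin 0 (Ioi 0)) (nhds 0) := by
    refine tendsto_const_nhds.congr' ?_
    filter_upwards [Ioo_mem_nhdsGT hq0] with q hq
    exact (h q hq.1 hq.2.le).symm
  have hA : ∀ q, 0 < q → q < (1 - ‖x‖) ^ 2 → AA z x q = 0 := by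
    intro q hq hq1
    rcases le_total q q0 with hqq | hqq
    · exact h q hq hqq
    · have := concave_slope (hZ.conc x hx) ht hq0 hqq hq1
      rw [h q0 hq0 le_rfl, sub_zero, sub_zero, mul_zero] at this
      have h2 := AA_nonneg hZ.nonneg x hq
      nlinarith
  have hB : ∀ q, 0 < q → q < (1 - ‖x‖) ^ 2 → ∀ᵐ y, ‖x - y‖ ^ 2 < q → z y = 0 := by
    intro q hq hq1
    have h1 := hA q hq hq1
    unfold AA at h1
    rcases mul_eq_zero.1 h1 with h2 | h2
    · exact absurd h2 (Real.rpow_pos_of_pos hq _).ne'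
    · unfold JJ at h2
      rw [integral_eq_zero_iff_of_nonneg (fun y => mul_nonneg (hZ.nonneg y) (hk_nonneg _ _ _ _))
        (z_hk_int hZ.int 3 q x)] at h2
      filter_upwards [h2] with y hy hyq
      rcases mul_eq_zero.1 (show z y * hk 3 q x y = 0 from hy) with h3 | h3
      · exact h3
      · exfalso
        unfold hk at h3
        rw [tp_of_nonneg (by linarith)] at h3
        have : 0 < (q - ‖x - y‖ ^ 2) ^ 3 := pow_pos (by linarith) 3
        linarith
  have hC : ∀ n : ℕ, ∀ᵐ y, ‖x - y‖ ^ 2 < (1 - ‖x‖) ^ 2 * (1 - 1 / ((n:ℝ) + 2)) → z y = 0 := by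
    intro n
    have hn : (0:ℝ) ≤ n := Nat.cast_nonneg n
    have h1 : 1 / ((n:ℝ) + 2) < 1 := by rw [div_lt_one (by positivity)]; linarith
    have h2 : 0 < 1 / ((n:ℝ) + 2) := by positivity
    have h3 : 0 < (1 - ‖x‖) ^ 2 := by positivity
    exact hB _ (mul_pos h3 (by linarith)) (by nlinarith)
  filter_upwards [ae_all_iff.2 hC] with y hy hym
  rw [mem_ball, dist_comm, dist_eq_norm] at hym
  have h3 : 0 < (1 - ‖x‖) ^ 2 := by positivity
  have h4 : ‖x - y‖ ^ 2 < (1 - ‖x‖) ^ 2 := pow_lt_pow_left₀ hym (norm_nonneg _) two_ne_zero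
  obtain ⟨n, hn⟩ := exists_nat_one_div_lt (show 0 < 1 - ‖x - y‖ ^ 2 / (1 - ‖x‖) ^ 2 by
    rw [sub_pos, div_lt_one h3]; exact h4)
  refine hy n ?_
  have h5 : 1 / ((n:ℝ) + 2) ≤ 1 / ((n:ℝ) + 1) := by gcongr; norm_num
  have h6 : ‖x - y‖ ^ 2 / (1 - ‖x‖) ^ 2 < 1 - 1 / ((n:ℝ) + 2) := by linarith
  rw [div_lt_iff₀ h3] at h6
  linarith

lemma ZZ.of_near {z : EuclideanSpace ℝ (Fin N) → ℝ}
    {x : EuclideanSpace ℝ (Fin N)} {δ : ℝ} (hδ : 0 < δ) (h : ∀ᵐ y, y ∈ ball x δ → z y = 0) :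
    ∃ q0 > 0, ∀ q, 0 < q → q ≤ q0 → AA z x q = 0 := by
  refine ⟨(δ / 2) ^ 2, by positivity, fun q hq hqq => ?_⟩
  have hs : √q ≤ δ / 2 := by
    rw [Real.sqrt_le_left (by positivity)]; exact hqq
  unfold AA JJ
  rw [integral_eq_zero_of_ae, mul_zero]
  filter_upwards [h] with y hy
  by_cases hym : y ∈ closedBall x (√q)
  · rw [mem_closedBall] at hym
    rw [hy (by rw [mem_ball]; linarith), zero_mul]; rfl
  · rw [hk_supp hq hym, mul_zero]; rfl

lemma ZZ.step5 {z : EuclideanSpace ℝ (Fin N) → ℝ} {M : ℝ} (hZ : ZZ z M)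
    (hpos : ¬ ∀ᵐ x, ‖x‖ < 1 → z x ≠ 0) : ∀ᵐ x ∂(muB N), z x = 0 := by
  set S := {x : EuclideanSpace ℝ (Fin N) | ‖x‖ < 1 ∧ ∃ δ > 0, ∀ᵐ y, y ∈ ball x δ → z y = 0} with hS
  have hbig : ∀ x ∈ S, ∀ᵐ y, y ∈ ball x (1 - ‖x‖) → z y = 0 := by
    rintro x ⟨hx, δ, hδ, h⟩
    exact hZ.prop hx (ZZ.of_near hδ h)
  have hball : ∀ (x : EuclideanSpace ℝ (Fin N)) (δ : ℝ), (∀ᵐ y, y ∈ ball x δ → z y = 0) →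
      ∀ y, dist y x < δ → ‖y‖ < 1 → y ∈ S := by
    intro x δ h y hy hy1
    refine ⟨hy1, δ - dist y x, by linarith, ?_⟩
    filter_upwards [h] with w hw hwm
    refine hw (ball_subset_ball' (by linarith) hwm)
  have hopen : IsOpen S := by
    rw [Metric.isOpen_iff]
    rintro x ⟨hx, δ, hδ, h⟩
    refine ⟨min δ (1 - ‖x‖), lt_min hδ (by linarith), fun y hy => ?_⟩
    rw [mem_ball, lt_min_iff] at hy
    refine hball x δ h y hy.1 ?_
    have h1 := norm_add_le (y - x) x
    rw [sub_add_cancel, ← dist_eq_norm] at h1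
    linarith
  have hne : (ball (0 : EuclideanSpace ℝ (Fin N)) 1 ∩ S).Nonempty := by
    by_contra hcon
    rw [not_nonempty_iff_eq_empty] at hcon
    refine hpos ?_
    filter_upwards [hZ.step4] with x hx hx1 hz0
    have : x ∈ ball (0 : EuclideanSpace ℝ (Fin N)) 1 ∩ S :=
      ⟨by simpa using hx1, hx1, 1 - ‖x‖, by linarith, hZ.prop hx1 (hx hz0 hx1)⟩
    rw [hcon] at this
    exact this
  have hcl : closure S ∩ ball (0 : EuclideanSpace ℝ (Fin N)) 1 ⊆ S := by
    rintro y ⟨hyc, hyb⟩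
    rw [mem_ball_zero_iff] at hyb
    obtain ⟨x, hxS, hxy⟩ := Metric.mem_closure_iff.1 hyc ((1 - ‖y‖) / 2) (by linarith)
    refine hball x _ (hbig x hxS) y ?_ hyb
    have h1 := norm_add_le (x - y) y
    rw [sub_add_cancel, ← dist_eq_norm, dist_comm] at h1
    linarith
  have hsub := (convex_ball (0 : EuclideanSpace ℝ (Fin N)) 1).isPreconnected.subset_of_closure_inter_subset
    hopen hne hcl
  have h0 := hbig 0 (hsub (mem_ball_self one_pos))
  rw [norm_zero, sub_zero] at h0
  exact (ae_restrict_iff' measurableSet_ball).2 h0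

end StepFive

section StepSix
variable {N : ℕ}

lemma rho_cube_lap : EqOn (lap (fun x : EuclideanSpace ℝ (Fin N) => rho x * rho x * rho x))
    (fun x => 24 * rho x + (-(24 + 6 * N)) * (rho x * rho x)) univ := by
  intro x _
  have hr : ContDiffOn ℝ 2 (rho (N := N)) univ := rho_contDiff.contDiffOn
  have hsum : ∀ x : EuclideanSpace ℝ (Fin N), (∑ i, x i ^ 2) = 1 - rho x := fun x => by
    rw [rho_eq]; ring
  have h2 := lap_mul isOpen_univ hr hr (mem_univ x)
  have h3 := lap_mul isOpen_univ (hr.mul hr) hr (mem_univ x)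
  have hd : DifferentiableAt ℝ (rho (N := N)) x := (rho_contDiff (n := 2)).differentiable (by norm_num) x
  have hp : ∀ i, pd i (fun y : EuclideanSpace ℝ (Fin N) => rho y * rho y) x = -4 * (rho x * x i) := fun i => by
    rw [pd_mul hd hd, pd_rho]; ring
  simp only [pd_rho, lap_rho] at h2 h3
  have e2 : ∑ i, (-2 * x i) * (-2 * x i) = 4 * (1 - rho x) := by
    rw [← hsum, Finset.mul_sum]; exact Finset.sum_congr rfl fun i _ => by ring
  have e3 : ∑ i, (-4 * (rho x * x i)) * (-2 * x i) = 8 * rho x * (1 - rho x) := by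
    rw [← hsum, Finset.mul_sum]; exact Finset.sum_congr rfl fun i _ => by ring
  rw [e2] at h2
  change lap (fun y => (fun y => rho y * rho y) y * rho y) x = _
  have h3' := h3
  change lap (fun y => (fun y => rho y * rho y) y * rho y) x = _ at h3'
  rw [h3']
  have e3' : ∑ i, pd i (fun y : EuclideanSpace ℝ (Fin N) => rho y * rho y) x * (-2 * x i)
      = 8 * rho x * (1 - rho x) := by
    rw [← e3]; exact Finset.sum_congr rfl fun i _ => by rw [hp]
  have h2' : lap (fun y : EuclideanSpace ℝ (Fin N) => rho y * rho y) x =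
    rho x * (-2 * N) + 2 * (4 * (1 - rho x)) + rho x * (-2 * N) := h2
  change rho x * rho x * (-2 * N) + 2 * (∑ i, pd i (fun y : EuclideanSpace ℝ (Fin N) => rho y * rho y) x * (-2 * x i))
    + rho x * lap (fun y : EuclideanSpace ℝ (Fin N) => rho y * rho y) x = _
  rw [e3', h2']; ring

lemma rho_cube_biharm (x : EuclideanSpace ℝ (Fin N)) :
    biharm (fun x : EuclideanSpace ℝ (Fin N) => rho x * rho x * rho x) x
      = 24 * (N + 2) * ((N + 4) * rho x - 4) := by
  unfold biharm
  have hr : ContDiffOn ℝ 2 (rho (N := N)) univ := rho_contDiff.contDiffOn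
  rw [lap_congr isOpen_univ rho_cube_lap (mem_univ x),
    lap_add isOpen_univ (contDiffOn_const.mul hr) (contDiffOn_const.mul (hr.mul hr)) (mem_univ x)]
  have a1 := lap_const_mul isOpen_univ 24 hr (mem_univ x)
  have a2 := lap_const_mul isOpen_univ (-(24 + 6 * (N:ℝ))) (hr.mul hr) (mem_univ x)
  have h2 := lap_mul isOpen_univ hr hr (mem_univ x)
  simp only [pd_rho, lap_rho] at h2 a1
  have e2 : ∑ i, (-2 * x i) * (-2 * x i) = 4 * (1 - rho x) := by
    rw [rho_eq, sub_sub_cancel, Finset.mul_sum]; exact Finset.sum_congr rfl fun i _ => by ring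
  rw [e2] at h2
  have h2' : lap (fun y : EuclideanSpace ℝ (Fin N) => rho y * rho y) x =
    rho x * (-2 * N) + 2 * (4 * (1 - rho x)) + rho x * (-2 * N) := h2
  have a2' : lap (fun y : EuclideanSpace ℝ (Fin N) => (-(24 + 6 * (N:ℝ))) * (rho y * rho y)) x =
    (-(24 + 6 * (N:ℝ))) * lap (fun y : EuclideanSpace ℝ (Fin N) => rho y * rho y) x := a2
  change lap (fun y => 24 * rho y) x + lap (fun y : EuclideanSpace ℝ (Fin N) => (-(24 + 6 * (N:ℝ))) * (rho y * rho y)) x = _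
  rw [a1, a2', h2']; ring

lemma JJ_ball (m : ℕ) : JJ ((ball (0 : EuclideanSpace ℝ (Fin N)) 2).indicator (fun _ => (1:ℝ))) (m + 1) 0 1
    = ∫ x, rho x ^ (m + 1) ∂(muB N) := by
  unfold JJ
  rw [← integral_indicator measurableSet_ball]
  congr 1; ext y
  simp only [hk, zero_sub, norm_neg]
  by_cases hy : y ∈ ball (0 : EuclideanSpace ℝ (Fin N)) 1
  · rw [indicator_of_mem hy, indicator_of_mem (ball_subset_ball (by norm_num) hy), one_mul]
    exact tp_of_nonneg (rho_pos hy).le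
  · rw [indicator_of_notMem hy, tp_of_nonpos, mul_zero]
    simp only [mem_ball_zero_iff, not_lt] at hy
    nlinarith

lemma rho_moments : ((N:ℝ) + 4) * ∫ x, rho x ^ 2 ∂(muB N) = 4 * ∫ x, rho x ^ 1 ∂(muB N) := by
  set z : EuclideanSpace ℝ (Fin N) → ℝ := (ball (0 : EuclideanSpace ℝ (Fin N)) 2).indicator (fun _ => (1:ℝ)) with hz
  have hzi : Integrable z := by
    rw [hz, integrable_indicator_iff measurableSet_ball]
    exact integrableOn_const measure_ball_lt_top.ne
  set a : ℝ := (N:ℝ) / 2 + 3 with ha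
  have h0 : ∀ q ∈ Ioo (0:ℝ) 4, JJ z 3 0 q = q ^ a * kap N := by
    intro q hq
    have e1 : AA z 0 q = kap N := by
      rw [AA_eq z 0 hq.1]
      unfold kap
      congr 1; ext w
      rcases le_or_gt 1 ‖w‖ with hw | hw
      · rw [kk_zero hw, zero_mul]
      · rw [hz, indicator_of_mem, mul_one]
        rw [mem_ball_zero_iff, zero_add, norm_smul, Real.norm_of_nonneg (Real.sqrt_nonneg _)]
        have : √q < 2 := by rw [Real.sqrt_lt' (by norm_num)]; linarith [hq.2]
        nlinarith [Real.sqrt_nonneg q, norm_nonneg w]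
    rw [← e1]; unfold AA
    rw [← mul_assoc, ← Real.rpow_add hq.1, ← ha, add_neg_cancel, Real.rpow_zero, one_mul]
  have h1 : ∀ q ∈ Ioo (0:ℝ) 4, JJ z 2 0 q = a / 3 * q ^ (a - 1) * kap N := by
    intro q hq
    have d1 := JJ_hasDeriv hzi 1 0 q
    have d2 : HasDerivAt (JJ z (1 + 2) 0) (a * q ^ (a - 1) * kap N) q := by
      refine ((Real.hasDerivAt_rpow_const (x := q) (p := a) (Or.inl hq.1.ne')).mul_const (kap N)).congr_of_eventuallyEq ?_
      filter_upwards [Ioo_mem_nhds hq.1 hq.2] with s hs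
      exact h0 s hs
    have := d1.unique d2
    norm_num at this
    linarith
  have h2 : 2 * JJ z 1 0 1 = a / 3 * (a - 1) * kap N := by
    have d1 := JJ_hasDeriv hzi 0 0 1
    have d2 : HasDerivAt (JJ z (0 + 2) 0) (a / 3 * ((a - 1) * (1:ℝ) ^ (a - 1 - 1)) * kap N) 1 := by
      refine (((Real.hasDerivAt_rpow_const (x := (1:ℝ)) (p := a - 1) (Or.inl one_ne_zero)).const_mul
        (a / 3)).mul_const (kap N)).congr_of_eventuallyEq ?_
      filter_upwards [Ioo_mem_nhds (show (0:ℝ) < 1 by norm_num) (show (1:ℝ) < 4 by norm_num)] with s hs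
      exact h1 s hs
    have := d1.unique d2
    norm_num at this
    linarith
  have h3 := h1 1 (by norm_num)
  rw [Real.one_rpow] at h3
  have j1 : JJ z 1 0 1 = ∫ x, rho x ^ 1 ∂(muB N) := JJ_ball 0
  have j2 : JJ z 2 0 1 = ∫ x, rho x ^ 2 ∂(muB N) := JJ_ball 1
  rw [← j1, ← j2, h3]
  rw [show 4 * JJ z 1 0 1 = 2 * (2 * JJ z 1 0 1) by ring, h2, ha]
  ring

lemma rho_pow_int (m : ℕ) : Integrable (fun x => rho x ^ m) (muB N) := by
  have h1 : Integrable (fun _ => (1:ℝ)) (muB N) := integrable_const 1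
  have h := int_mul_cont h1 (g := fun x => rho x ^ m)
    ((rho_contDiff (n := 0)).continuous.pow m).continuousOn
  simpa using h

lemma rho_quad_int (a b c : ℝ) : ∫ x, (a * rho x ^ 2 + b * rho x ^ 1 + c * 1) ∂(muB N)
    = a * (∫ x, rho x ^ 2 ∂(muB N)) + b * (∫ x, rho x ^ 1 ∂(muB N)) + c * ∫ _x, (1:ℝ) ∂(muB N) := by
  have i1 := (rho_pow_int (N := N) 1).const_mul b
  have i2 := (rho_pow_int (N := N) 2).const_mul a
  have i0 : Integrable (fun _ => c * (1:ℝ)) (muB N) := integrable_const _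
  have h12 : Integrable (fun x => a * rho x ^ 2 + b * rho x ^ 1) (muB N) := i2.add i1
  rw [integral_add h12 i0, integral_add i2 i1, integral_const_mul, integral_const_mul,
    integral_const_mul]

lemma rho_moment_lt (hN : 0 < N) :
    ((N:ℝ) + 4) * ∫ x, rho x ^ 1 ∂(muB N) < 4 * ∫ _x, (1:ℝ) ∂(muB N) := by
  have hNr : (0:ℝ) < N := by exact_mod_cast hN
  set c : ℝ := 4 / (N + 4) with hc
  have hc0 : 0 < c := by positivity
  have hcm : c * (N + 4) = 4 := by rw [hc]; field_simp
  have hcont : Continuous (rho (N := N)) := (rho_contDiff (n := 0)).continuous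
  have i1 := rho_pow_int (N := N) 1
  have i2 := rho_pow_int (N := N) 2
  have i0 : Integrable (fun _ => (1:ℝ)) (muB N) := integrable_const 1
  have hi : Integrable (fun x => (rho x - c) ^ 2) (muB N) := by
    refine ((i2.sub (i1.const_mul (2 * c))).add (i0.const_mul (c ^ 2))).congr ?_
    filter_upwards with x
    simp only [Pi.add_apply, Pi.sub_apply]; ring
  have hpos : 0 < ∫ x, (rho x - c) ^ 2 ∂(muB N) := by
    refine lt_of_le_of_ne (integral_nonneg fun x => sq_nonneg _) fun h => ?_
    have h' := (integral_eq_zero_iff_of_nonneg (fun x => sq_nonneg (rho x - c)) hi).1 h.symm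
    have hae : (fun x => rho x) =ᵐ[volume.restrict (ball (0 : EuclideanSpace ℝ (Fin N)) 1)] fun _ => c := by
      filter_upwards [h'] with x hx
      have : (rho x - c) ^ 2 = 0 := hx
      have := pow_eq_zero_iff (two_ne_zero) |>.1 this
      linarith
    have := Measure.eqOn_open_of_ae_eq hae isOpen_ball hcont.continuousOn continuousOn_const
      (mem_ball_self one_pos)
    simp only [rho, norm_zero] at this
    nlinarith
  have hexp : ∫ x, (rho x - c) ^ 2 ∂(muB N) = (∫ x, rho x ^ 2 ∂(muB N))
      - 2 * c * (∫ x, rho x ^ 1 ∂(muB N)) + c ^ 2 * ∫ _x, (1:ℝ) ∂(muB N) := by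
    have hq := rho_quad_int (N := N) 1 (-(2 * c)) (c ^ 2)
    rw [show (∫ x, (rho x - c) ^ 2 ∂(muB N)) = ∫ x, (1 * rho x ^ 2 + (-(2 * c)) * rho x ^ 1 + c ^ 2 * 1) ∂(muB N) by
      congr 1; ext x; ring, hq]
    ring
  have hm := rho_moments (N := N)
  rw [hexp] at hpos
  generalize (∫ x, rho x ^ 2 ∂(muB N)) = I2 at *
  generalize (∫ x, rho x ^ 1 ∂(muB N)) = I1 at *
  generalize (∫ _x, (1:ℝ) ∂(muB N)) = I0 at *
  have hI2 : I2 = c * I1 := by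
    have : ((N:ℝ) + 4) * (I2 - c * I1) = 0 := by linear_combination hm - I1 * hcm
    rcases mul_eq_zero.1 this with h | h
    · linarith
    · linarith
  rw [hI2] at hpos
  have h5 : 0 < c * (c * I0 - I1) := by nlinarith
  have h6 : 0 < c * I0 - I1 := (mul_pos_iff_of_pos_left hc0).1 h5
  have h7 : 0 < ((N:ℝ) + 4) * (c * I0 - I1) := by positivity
  nlinarith

lemma not_ae_one (hN : 0 < N) {α β lam : ℝ} (hadm : Admissible α β) {U : EuclideanSpace ℝ (Fin N) → ℝ}
    (hU : IsWeakSuperSolutionAB N lam α β U) (h1 : ∀ᵐ x ∂(muB N), U x = 1) : False := by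
  have hr4 : ContDiff ℝ 4 (rho (N := N)) := rho_contDiff
  have h := hU.2.2 _ (isTest_of hr4) (fun x hx => by
    have : 0 ≤ rho x := by
      simp only [mem_closedBall_zero_iff] at hx
      unfold rho; nlinarith [norm_nonneg x]
    positivity)
  have hz : ∫ x in ball (0 : EuclideanSpace ℝ (Fin N)) 1, rho x * rho x * rho x / (1 - U x) ^ 2 = 0 := by
    rw [integral_congr_ae (g := fun _ => (0:ℝ)), integral_zero]
    filter_upwards [h1] with x hx
    rw [hx]; simp
  rw [hz, mul_zero] at h
  have i1 := rho_pow_int (N := N) 1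
  have i2 := rho_pow_int (N := N) 2
  have i0 : Integrable (fun _ => (1:ℝ)) (muB N) := integrable_const 1
  have hL : ∫ x in ball (0 : EuclideanSpace ℝ (Fin N)) 1,
      (U x - Phi α β x) * biharm (fun x => rho x * rho x * rho x) x
      = (24 * (N + 2) * (β / 2) * (N + 4)) * (∫ x, rho x ^ 2 ∂(muB N))
        + (24 * (N + 2) * ((1 - α) * (N + 4) - 4 * (β / 2))) * (∫ x, rho x ^ 1 ∂(muB N))
        + (-(96 * (N + 2) * (1 - α))) * ∫ _x, (1:ℝ) ∂(muB N) := by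
    rw [← rho_quad_int]
    refine integral_congr_ae ?_
    filter_upwards [h1] with x hx
    rw [rho_cube_biharm, hx]
    have : Phi α β x = α - β / 2 * rho x := by unfold Phi rho; ring
    rw [this]; ring
  rw [hL] at h
  have m1 := rho_moments (N := N)
  have m2 := rho_moment_lt hN
  generalize (∫ x, rho x ^ 2 ∂(muB N)) = I2 at *
  generalize (∫ x, rho x ^ 1 ∂(muB N)) = I1 at *
  generalize (∫ _x, (1:ℝ) ∂(muB N)) = I0 at *
  have ha : 0 < 1 - α := by linarith [hadm.1, hadm.2]
  have hp : 0 < 24 * ((N:ℝ) + 2) * (1 - α) := by positivity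
  have := mul_pos hp (sub_pos.2 m2)
  have e := congrArg (fun t => 24 * ((N:ℝ) + 2) * (β / 2) * t) m1
  nlinarith

lemma U_lt_one (hN : 0 < N) {α β lam : ℝ} (hadm : Admissible α β) (hlam : 0 < lam)
    {U : EuclideanSpace ℝ (Fin N) → ℝ} (hU : IsWeakSuperSolutionAB N lam α β U) :
    ∀ᵐ x ∂(muB N), U x < 1 := by
  obtain ⟨z, M, hZ, hz⟩ := exists_z hadm hlam hU
  by_cases hp : ∀ᵐ x : EuclideanSpace ℝ (Fin N), ‖x‖ < 1 → z x ≠ 0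
  · filter_upwards [hz, hU.1, ae_restrict_of_ae hp, ae_restrict_mem measurableSet_ball] with x h1 h2 h3 h4
    refine lt_of_le_of_ne h2.2 fun h => h3 (mem_ball_zero_iff.1 h4) ?_
    rw [h1, h]; ring
  · exfalso
    refine not_ae_one hN hadm hU ?_
    filter_upwards [hZ.step5 hp, hz] with x h1 h2
    linarith

lemma dim_zero {α β lam : ℝ} (hlam : 0 < lam) {U : EuclideanSpace ℝ (Fin 0) → ℝ}
    (hU : IsWeakSuperSolutionAB 0 lam α β U) : IsWeakSolutionAB 0 lam α β U := by
  have hb : ∀ φ : EuclideanSpace ℝ (Fin 0) → ℝ, ∀ x, biharm φ x = 0 := fun φ x => by simp [biharm, lap]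
  have hn : ∀ x : EuclideanSpace ℝ (Fin 0), ‖x‖ ≠ 1 := fun x => by
    rw [Subsingleton.elim x 0]; simp
  refine ⟨hU.1, hU.2.1, fun φ _ => ?_⟩
  have h := hU.2.2 (fun _ => 1) ⟨contDiffOn_const, fun x hx => absurd hx (hn x), fun x hx => absurd hx (hn x)⟩
    (fun _ _ => zero_le_one)
  simp only [hb, mul_zero, integral_zero] at h ⊢
  have h0 : ∫ x in ball (0 : EuclideanSpace ℝ (Fin 0)) 1, 1 / (1 - U x) ^ 2 = 0 := by
    refine le_antisymm ?_ (integral_nonneg fun x => by positivity)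
    by_contra hc
    have := mul_pos hlam (not_le.1 hc)
    linarith
  have h1 : ∀ᵐ x ∂(muB 0), 1 / (1 - U x) ^ 2 = 0 :=
    (integral_eq_zero_iff_of_nonneg (fun x => by positivity)
      (by simp only [one_div]; exact hU.2.1.integrable)).1 h0
  rw [integral_congr_ae (g := fun _ => (0:ℝ)), integral_zero, mul_zero]
  filter_upwards [h1] with x hx
  rw [div_eq_mul_one_div, hx, mul_zero]

end StepSix

/-- existence of a weak solution below any weak super-solution. -/
theorem weak_solution_below_supersolution (N : ℕ) (α β lam : ℝ)
    (hadm : Admissible α β) (hlam : 0 < lam)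
    (U : EuclideanSpace ℝ (Fin N) → ℝ) (hU : IsWeakSuperSolutionAB N lam α β U) :
    ∃ u : EuclideanSpace ℝ (Fin N) → ℝ, IsWeakSolutionAB N lam α β u ∧
      ∀ᵐ x ∂(volume.restrict (ball (0 : EuclideanSpace ℝ (Fin N)) 1)),
        α ≤ u x ∧ u x ≤ U x := by
  rcases Nat.eq_zero_or_pos N with hN | hN
  · subst hN
    refine ⟨U, dim_zero hlam hU, ?_⟩
    filter_upwards [hU.1] with x hx
    exact ⟨hx.1, le_rfl⟩
  · exact iterate hN hadm hlam hU (U_lt_one hN hadm hlam hU)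
end

section
/- If (α, β) is an admissible pair, then the pull-in voltage λ*(α,β) is finite: λ*(α,β) < +∞. -/
open MeasureTheory Metric Set Filter

lemma lap_contDiff {N : ℕ} {n m : WithTop ℕ∞} {u : EuclideanSpace ℝ (Fin N) → ℝ}
    (hu : ContDiff ℝ n u) (h : m + 1 + 1 ≤ n) : ContDiff ℝ m (lap u) := by
  unfold lap
  refine ContDiff.sum fun i _ => ?_
  exact ((((hu.fderiv_right h).clm_apply contDiff_const).fderiv_right le_rfl).clm_apply
    contDiff_const)

lemma lap_hasCompactSupport {N : ℕ} {u : EuclideanSpace ℝ (Fin N) → ℝ}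
    (hu : HasCompactSupport u) : HasCompactSupport (lap u) := by
  refine hu.of_isClosed_subset (isClosed_tsupport _) (closure_minimal ?_ (isClosed_tsupport _))
  intro x hx
  by_contra hx'
  apply hx
  unfold lap
  refine Finset.sum_eq_zero fun i _ => ?_
  by_contra h0
  exact hx' (tsupport_fderiv_apply_subset ℝ _
    (tsupport_fderiv_apply_subset ℝ _ (subset_tsupport _ h0)))

lemma lap_congr_s16 {N : ℕ} {u v : EuclideanSpace ℝ (Fin N) → ℝ} {x : EuclideanSpace ℝ (Fin N)}
    (h : u =ᶠ[nhds x] v) : lap u =ᶠ[nhds x] lap v := by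
  filter_upwards [h.eventually_nhds] with y hy
  unfold lap
  refine Finset.sum_congr rfl fun i _ => ?_
  have : (fun y => fderiv ℝ u y (EuclideanSpace.single i 1)) =ᶠ[nhds y]
      (fun y => fderiv ℝ v y (EuclideanSpace.single i 1)) := by
    filter_upwards [Filter.EventuallyEq.fderiv (𝕜 := ℝ) hy] with z hz
    rw [hz]
  rw [this.fderiv_eq]

lemma lap_symm {N : ℕ} {f g : EuclideanSpace ℝ (Fin N) → ℝ}
    (hf : ContDiff ℝ 2 f) (hg : ContDiff ℝ 2 g) (hc : HasCompactSupport g) :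
    ∫ x, f x * lap g x = ∫ x, lap f x * g x := by
  have h11 : (1 : WithTop ℕ∞) + 1 ≤ 2 := by norm_num
  have D1 : ∀ {w : EuclideanSpace ℝ (Fin N) → ℝ}, ContDiff ℝ 2 w → ∀ i : Fin N,
      ContDiff ℝ 1 (fun y => fderiv ℝ w y (EuclideanSpace.single i 1)) := fun hw i =>
    (hw.fderiv_right h11).clm_apply contDiff_const
  have D2 : ∀ {w : EuclideanSpace ℝ (Fin N) → ℝ}, ContDiff ℝ 1 w → ∀ i : Fin N,
      Continuous (fun y => fderiv ℝ w y (EuclideanSpace.single i 1)) := fun hw i =>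
    (hw.continuous_fderiv one_ne_zero).clm_apply continuous_const
  have I1 : ∀ {w z : EuclideanSpace ℝ (Fin N) → ℝ}, Continuous w → Continuous z →
      HasCompactSupport z → Integrable (fun x => w x * z x) := fun hw hz hcz =>
    (hw.mul hz).integrable_of_hasCompactSupport hcz.mul_left
  unfold lap
  simp_rw [Finset.mul_sum, Finset.sum_mul]
  have hc1 : ∀ i : Fin N, HasCompactSupport (fun y => fderiv ℝ g y (EuclideanSpace.single i 1)) :=
    fun i => hc.fderiv_apply ℝ _
  rw [integral_finsetSum, integral_finsetSum]
  · refine Finset.sum_congr rfl fun i _ => ?_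
    rw [integral_mul_fderiv_eq_neg_fderiv_mul_of_integrable,
      integral_mul_fderiv_eq_neg_fderiv_mul_of_integrable, neg_neg]
    · exact I1 (D2 (D1 hf i) i) hg.continuous hc
    · exact I1 (D1 hf i).continuous (D1 hg i).continuous (hc1 i)
    · exact I1 (D1 hf i).continuous hg.continuous hc
    · exact fun x _ => (D1 hf i).differentiable one_ne_zero x
    · exact fun x _ => hg.differentiable two_ne_zero x
    · exact I1 (D1 hf i).continuous (D1 hg i).continuous (hc1 i)
    · exact I1 hf.continuous (D2 (D1 hg i) i) ((hc1 i).fderiv_apply ℝ _)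
    · exact I1 hf.continuous (D1 hg i).continuous (hc1 i)
    · exact fun x _ => hf.differentiable two_ne_zero x
    · exact fun x _ => (D1 hg i).differentiable one_ne_zero x
  · exact fun i _ => I1 (D2 (D1 hf i) i) hg.continuous hc
  · exact fun i _ => I1 hf.continuous (D2 (D1 hg i) i) ((hc1 i).fderiv_apply ℝ _)

/-- for an admissible pair `(α, β)` the pull-in voltage `λ*(α,β)` is finite,
i.e. the set of voltages admitting a classical solution is bounded above. -/
theorem pullInAB_finite (N : ℕ) (α β : ℝ) (hadm : Admissible α β) :
    BddAbove (solSetAB N α β) := by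
  obtain ⟨hβ, hαβ⟩ := hadm
  have hα : α < 1 := by linarith
  let φ : ContDiffBump (0 : EuclideanSpace ℝ (Fin N)) := ⟨1 / 4, 1 / 2, by norm_num, by norm_num⟩
  let χ : ContDiffBump (0 : EuclideanSpace ℝ (Fin N)) := ⟨2 / 3, 3 / 4, by norm_num, by norm_num⟩
  have hφ : ContDiff ℝ 4 (φ : EuclideanSpace ℝ (Fin N) → ℝ) := φ.contDiff
  have hφc : HasCompactSupport (φ : EuclideanSpace ℝ (Fin N) → ℝ) := φ.hasCompactSupport
  have hI : 0 < ∫ x, φ x := φ.integral_pos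
  have h4 : (2 : WithTop ℕ∞) + 1 + 1 ≤ 4 := by norm_num
  have h2 : (0 : WithTop ℕ∞) + 1 + 1 ≤ 2 := by norm_num
  have h24 : (2 : WithTop ℕ∞) ≤ 4 := by norm_num
  have hL : ContDiff ℝ 2 (lap φ) := lap_contDiff hφ h4
  have hLc := lap_hasCompactSupport hφc
  have hLL : Continuous (lap (lap φ)) := (lap_contDiff hL h2).continuous
  have hLLc := lap_hasCompactSupport hLc
  have hLLi : Integrable (lap (lap φ)) := hLL.integrable_of_hasCompactSupport hLLc
  refine ⟨(∫ x, (|α| + 1) * |lap (lap φ) x|) * (1 - α) ^ 2 / ∫ x, φ x, ?_⟩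
  rintro lam ⟨hlam, u, hu⟩
  set v : EuclideanSpace ℝ (Fin N) → ℝ := fun x => χ x * u x with hv
  have hvC : ContDiff ℝ 4 v := by
    rw [contDiff_iff_contDiffAt]
    intro x
    by_cases hx : x ∈ ball (0 : EuclideanSpace ℝ (Fin N)) 1
    · exact χ.contDiffAt.mul (hu.contDiffOn.contDiffAt
        (mem_of_superset (isOpen_ball.mem_nhds hx) ball_subset_closedBall))
    · have hxs : x ∉ tsupport χ := by
        rw [χ.tsupport_eq]
        intro h
        apply hx
        rw [mem_closedBall] at h
        rw [mem_ball]
        exact lt_of_le_of_lt h (by norm_num [χ])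
      have : v =ᶠ[nhds x] fun _ => 0 := by
        filter_upwards [notMem_tsupport_iff_eventuallyEq.1 hxs] with y hy
        simp [hv, hy]
      exact contDiffAt_const.congr_of_eventuallyEq this
  have hvb : ∀ x, |v x| ≤ |α| + 1 := by
    intro x
    by_cases hx : x ∈ ball (0 : EuclideanSpace ℝ (Fin N)) 1
    · have h1 := hu.gt_alpha x hx
      have h2 := hu.lt_one x hx
      have h3 : |u x| ≤ |α| + 1 := by
        rw [abs_le]
        constructor
        · linarith [neg_abs_le α]
        · linarith [abs_nonneg α]
      rw [hv]
      simp only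
      rw [abs_mul, abs_of_nonneg χ.nonneg]
      calc χ x * |u x| ≤ 1 * |u x| := mul_le_mul_of_nonneg_right χ.le_one (abs_nonneg _)
        _ ≤ _ := by linarith
    · have : χ x = 0 := by
        apply χ.zero_of_le_dist
        have : 1 ≤ dist x 0 := by simpa [mem_ball] using hx
        exact le_trans (by norm_num [χ]) this
      simp only [hv, this, zero_mul, abs_zero]
      positivity
  have key : ∫ x, v x * lap (lap φ) x = ∫ x, lap (lap v) x * φ x := by
    rw [lap_symm (hvC.of_le h24) hL hLc, lap_symm (lap_contDiff hvC h4) (hφ.of_le h24) hφc]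
  have hvL : Continuous (lap (lap v)) := (lap_contDiff (lap_contDiff hvC h4) h2).continuous
  have up : ∫ x, v x * lap (lap φ) x ≤ ∫ x, (|α| + 1) * |lap (lap φ) x| := by
    apply integral_mono
    · exact (hvC.continuous.mul hLL).integrable_of_hasCompactSupport hLLc.mul_left
    · exact hLLi.abs.const_mul _
    · intro x
      calc v x * lap (lap φ) x ≤ |v x * lap (lap φ) x| := le_abs_self _
        _ = |v x| * |lap (lap φ) x| := abs_mul _ _
        _ ≤ _ := mul_le_mul_of_nonneg_right (hvb x) (abs_nonneg _)
  have lo : ∫ x, lam / (1 - α) ^ 2 * φ x ≤ ∫ x, lap (lap v) x * φ x := by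
    apply integral_mono
    · exact (φ.continuous.integrable_of_hasCompactSupport hφc).const_mul _
    · exact (hvL.mul φ.continuous).integrable_of_hasCompactSupport hφc.mul_left
    · intro x
      by_cases hx : x ∈ ball (0 : EuclideanSpace ℝ (Fin N)) (1 / 2)
      · have hx1 : x ∈ ball (0 : EuclideanSpace ℝ (Fin N)) 1 :=
          ball_subset_ball (by norm_num) hx
        have hx2 : x ∈ ball (0 : EuclideanSpace ℝ (Fin N)) χ.rIn :=
          ball_subset_ball (by norm_num [χ]) hx
        have e : v =ᶠ[nhds x] u := by
          filter_upwards [χ.eventuallyEq_one_of_mem_ball hx2] with y hy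
          simp [hv, hy]
        have e2 : lap (lap v) x = lam / (1 - u x) ^ 2 := by
          rw [← hu.eqn x hx1]
          exact (lap_congr_s16 (lap_congr_s16 e)).eq_of_nhds
        simp only
        rw [e2]
        have h1 := hu.gt_alpha x hx1
        have h2 := hu.lt_one x hx1
        refine mul_le_mul_of_nonneg_right ?_ φ.nonneg
        refine div_le_div_of_nonneg_left hlam.le (by have : 0 < 1 - u x := by linarith
                                                     positivity) ?_
        exact pow_le_pow_left₀ (by linarith) (by linarith) 2
      · have : φ x = 0 := by
          apply φ.zero_of_le_dist
          simpa [mem_ball, φ] using hx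
        simp [this]
  rw [integral_const_mul] at lo
  have hα2 : 0 < (1 - α) ^ 2 := by
    have : 0 < 1 - α := by linarith
    positivity
  rw [le_div_iff₀ hI]
  have fin := lo.trans (key.symm.le.trans up)
  rw [div_mul_eq_mul_div, div_le_iff₀ hα2] at fin
  exact fin
end
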